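/- arXiv:1208.1037 — 2 statements merged into one kernel-verified Lean document; each statement's English description precedes it below -/
import Mathlib

section
/- Let L and K be Hopf subalgebras of H and let C and D be two simple subcoalgebras of H. Then the following are equivalent: (1) C ⊆ LDK; (2) LCK = LDK; (3) Λ_L C Λ_K = Λ_L D Λ_K (equality of subspaces of H). -/
open TensorProduct

namespace MackeyPaper

noncomputable section

universe v

variable (k : Type) [Field k] [CharZero k] [IsAlgClosed k]
variable (H : Type) [Ring H] [HopfAlgebra k H]

/-- A subcoalgebra of `H`: a `k`-subspace `C` with `Δ(C) ⊆ C ⊗ C`. -/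
def IsSubcoalgebra (C : Submodule k H) : Prop :=
  ∀ c ∈ C, Coalgebra.comul (R := k) c ∈
    LinearMap.range (TensorProduct.map C.subtype C.subtype)

/-- A simple (nonzero, minimal) subcoalgebra of `H`. -/
def IsSimpleSubcoalgebra (C : Submodule k H) : Prop :=
  IsSubcoalgebra k H C ∧ C ≠ ⊥ ∧
    ∀ D : Submodule k H, D ≤ C → IsSubcoalgebra k H D → D ≠ ⊥ → D = C

/-- A Hopf subalgebra of `H`: a subalgebra which is a subcoalgebra and is
stable under the antipode. -/
def IsHopfSubalgebra (K : Subalgebra k H) : Prop :=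
  IsSubcoalgebra k H K.toSubmodule ∧ ∀ x ∈ K, HopfAlgebra.antipode (R := k) x ∈ K

/-- `Λ` is the (two-sided) idempotent integral of the Hopf subalgebra `K`,
i.e. the integral normalized by `ε(Λ) = 1`. -/
def IsIdempotentIntegral (K : Subalgebra k H) (Λ : H) : Prop :=
  Λ ∈ K ∧ Coalgebra.counit (R := k) Λ = 1 ∧
    ∀ x ∈ K, x * Λ = Coalgebra.counit (R := k) x • Λ ∧
      Λ * x = Coalgebra.counit (R := k) x • Λ

/-- A cocommutative element of `H`; the cocommutative elements of `H` form
the character ring `C(H^*)`. -/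
def IsCocomm (x : H) : Prop :=
  (TensorProduct.comm k H H) (Coalgebra.comul (R := k) x) = Coalgebra.comul (R := k) x

/-- The character ring `C(H^*)`, i.e. the space of cocommutative elements of `H`,
as a `k`-subspace of `H`. -/
def charRing : Submodule k H :=
  LinearMap.ker ((TensorProduct.comm k H H).toLinearMap ∘ₗ Coalgebra.comul (R := k)
      - Coalgebra.comul (R := k))

/-- `d` is the irreducible character (of `H^*`) associated to the simple
subcoalgebra `C`: the unique cocommutative element of `C` whose counit is the
positive square root of `dim_k C`. -/
def IsCharacterOf (d : H) (C : Submodule k H) : Prop :=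
  d ∈ C ∧ IsCocomm k H d ∧
    Coalgebra.counit (R := k) d = ((Nat.sqrt (Module.finrank k ↥C) : ℕ) : k)

/-- The right coset `CK` of a subcoalgebra `C`, i.e. the subspace `C·K`. -/
def CKsub (K : Subalgebra k H) (C : Submodule k H) : Submodule k H :=
  C * K.toSubmodule

/-- The conjugate Hopf subalgebra `ᶜK` of `K` by a simple subcoalgebra `C`
(with associated irreducible character `c`): the span of all simple
subcoalgebras of `H` whose irreducible character `d` satisfies
`d·c·Λ_K = ε(d)·c·Λ_K`.  (The condition is stated for all cocommutative
elements of `C` resp. `D`; this is equivalent, since the cocommutative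
elements of a simple subcoalgebra are exactly the scalar multiples of its
irreducible character.) -/
def conjK (K : Subalgebra k H) (Λ : H) (C : Submodule k H) : Submodule k H :=
  sSup {D : Submodule k H | IsSimpleSubcoalgebra k H D ∧
    ∀ d ∈ D, IsCocomm k H d → ∀ c ∈ C, IsCocomm k H c →
      d * (c * Λ) = Coalgebra.counit (R := k) d • (c * Λ)}

/-- A complete irredundant system of representatives (by simple subcoalgebras)
of the double cosets `L\H/K`.  (Taking `L = ⊥` gives a system of
representatives of the right cosets `H/K`.) -/
def IsDoubleCosetReps (L K : Subalgebra k H) {ι : Type} (rep : ι → Submodule k H) : Prop :=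
  (∀ i, IsSimpleSubcoalgebra k H (rep i)) ∧
  (∀ i j, L.toSubmodule * rep i * K.toSubmodule = L.toSubmodule * rep j * K.toSubmodule
      → i = j) ∧
  (∀ C : Submodule k H, IsSimpleSubcoalgebra k H C →
      ∃ i, C ≤ L.toSubmodule * rep i * K.toSubmodule)

section Ind

variable (K : Subalgebra k H) (M : Type v) [AddCommGroup M] [Module k M]
  [Module ↥K M] [IsScalarTower k ↥K M]

/-- The relations defining the induced module `H ⊗_K M` as a quotient of
`H ⊗_k M`: the `H`-submodule generated by the elements `a ⊗ m - 1 ⊗ a·m`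
for `a ∈ K` (equivalently, spanned by all `h·a ⊗ m - h ⊗ a·m`). -/
def indRel : Submodule H (H ⊗[k] M) :=
  Submodule.span H {z | ∃ (a : ↥K) (m : M),
    z = (a : H) ⊗ₜ[k] m - (1 : H) ⊗ₜ[k] (a • m)}

/-- The induced module `M↑_K^H = H ⊗_K M`, a left `H`-module. -/
abbrev Ind := (H ⊗[k] M) ⧸ indRel k H K M

variable (C : Submodule k H)

/-- The underlying space `CK ⊗_k M` of which the conjugate module `ᶜM` is a
quotient. -/
def CKM : Type _ := ↥(CKsub k H K C) ⊗[k] M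

instance : AddCommGroup (CKM k H K M C) :=
  inferInstanceAs (AddCommGroup (↥(CKsub k H K C) ⊗[k] M))

instance : Module k (CKM k H K M C) :=
  inferInstanceAs (Module k (↥(CKsub k H K C) ⊗[k] M))

/-- The pure tensor `x ⊗ m` as an element of `CK ⊗_k M`. -/
def ckmk (x : ↥(CKsub k H K C)) (m : M) : CKM k H K M C := x ⊗ₜ[k] m

/-- The relations defining the conjugate module `ᶜM = CK ⊗_K M` as a quotient
of `CK ⊗_k M`: `x·a ⊗ m - x ⊗ a·m` for `a ∈ K`. -/
def conjRel : Submodule k (CKM k H K M C) :=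
  Submodule.span k {z | ∃ (x : ↥(CKsub k H K C)) (a : ↥K) (m : M)
    (hxa : (x : H) * (a : H) ∈ CKsub k H K C),
    z = ckmk k H K M C ⟨(x : H) * (a : H), hxa⟩ m - ckmk k H K M C x (a • m)}

/-- The conjugate module `ᶜM := CK ⊗_K M`. -/
abbrev ConjM := CKM k H K M C ⧸ conjRel k H K M C

/-- The canonical copy of the conjugate module `ᶜM = CK ⊗_K M` inside
`H ⊗_K M` (the image of `CK ⊗_K M` under multiplication; this is indeed a
copy of `ᶜM` since `H` is a free right `K`-module and `CK` is one of the
coset summands). -/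
def conjMsub : Submodule k (Ind k H K M) :=
  Submodule.span k {z | ∃ (x : H) (_ : x ∈ CKsub k H K C) (m : M),
    z = Submodule.Quotient.mk (x ⊗ₜ[k] m)}

end Ind

section Comp

variable (L K : Subalgebra k H) (Λ : H) (C : Submodule k H)
variable (M : Type v) [AddCommGroup M] [Module k M] [Module ↥K M] [IsScalarTower k ↥K M]

/-- The underlying space `L ⊗_k (CK ⊗_k M)`. -/
def LCM : Type _ := ↥L ⊗[k] CKM k H K M C

instance : AddCommGroup (LCM k H L K C M) :=
  inferInstanceAs (AddCommGroup (↥L ⊗[k] CKM k H K M C))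

instance : Module k (LCM k H L K C M) :=
  inferInstanceAs (Module k (↥L ⊗[k] CKM k H K M C))

/-- The pure tensor `l ⊗ w` as an element of `L ⊗_k (CK ⊗_k M)`. -/
def lcmk (l : ↥L) (w : CKM k H K M C) : LCM k H L K C M := l ⊗ₜ[k] w

/-- The relations defining `L ⊗_{L ∩ ᶜK} ᶜM` as a quotient of
`L ⊗_k (CK ⊗_k M)`: the balancedness relations over `L ∩ ᶜK` (first set),
together with (the image of) the relations defining `ᶜM = CK ⊗_K M`
(second set). -/
def compRel : Submodule k (LCM k H L K C M) :=
  Submodule.span k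
    ({z | ∃ (l : ↥L) (a : H) (haL : a ∈ L) (_ : a ∈ conjK k H K Λ C)
        (x : ↥(CKsub k H K C)) (m : M) (hax : a * (x : H) ∈ CKsub k H K C),
        z = lcmk k H L K C M ⟨(l : H) * a, mul_mem l.2 haL⟩ (ckmk k H K M C x m)
          - lcmk k H L K C M l (ckmk k H K M C ⟨a * (x : H), hax⟩ m)} ∪
     {z | ∃ (l : ↥L) (x : ↥(CKsub k H K C)) (a : ↥K) (m : M)
        (hxa : (x : H) * (a : H) ∈ CKsub k H K C),
        z = lcmk k H L K C M l (ckmk k H K M C ⟨(x : H) * (a : H), hxa⟩ m)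
          - lcmk k H L K C M l (ckmk k H K M C x (a • m))})

/-- The module `L ⊗_{L ∩ ᶜK} ᶜM` (a left `L`-module via multiplication on the
first tensor factor). -/
abbrev Comp := LCM k H L K C M ⧸ compRel k H L K Λ C M

end Comp

open DirectSum

section Mackey

variable (L K : Subalgebra k H) (Λ : H)

/-- The Mackey isomorphism property for the pair `(L, K)` at the `K`-module
`M`: for any system of double coset representatives, the left-multiplication
map `⊕_C L ⊗_{L ∩ ᶜK} ᶜM → M↑_K^H↓_L^H`, `l ⊗ v ↦ l·v`, is an isomorphism of
`L`-modules.  (A `k`-linear map satisfying the displayed formula on the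
spanning elements is automatically `L`-equivariant for the evident
`L`-actions, so this property is stated for `k`-linear maps.) -/
def MackeyAt (M : Type v) [AddCommGroup M] [Module k M] [Module ↥K M]
    [IsScalarTower k ↥K M] [Module.Finite k M] : Prop :=
  ∀ (ι : Type) [DecidableEq ι] (rep : ι → Submodule k H),
    IsDoubleCosetReps k H L K rep →
    ∃ π : (⨁ i : ι, Comp k H L K Λ (rep i) M) →ₗ[k] Ind k H K M,
      Function.Bijective π ∧
      ∀ (i : ι) (l : ↥L) (x : ↥(CKsub k H K (rep i))) (m : M),
        π (DirectSum.of (fun i => Comp k H L K Λ (rep i) M) i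
            (Submodule.Quotient.mk (lcmk k H L K (rep i) M l (ckmk k H K M (rep i) x m)))) =
          Submodule.Quotient.mk (((l : H) * (x : H)) ⊗ₜ[k] m)

/-- `(L, K)` is a Mackey pair of Hopf subalgebras of `H` (here `Λ` is the
idempotent integral of `K`): for every finite-dimensional `K`-module `M` the
left-multiplication homomorphism `π_M` is an isomorphism. -/
def IsMackeyPair : Prop :=
  ∀ (M : Type v) [AddCommGroup M] [Module k M] [Module ↥K M]
    [IsScalarTower k ↥K M] [Module.Finite k M], MackeyAt k H L K Λ M

end Mackey

/-!
The dual of a coalgebra acts on it on both sides, and a subspace is a subcoalgebra exactly when it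
is stable under both actions. So if subcoalgebras `E` and `X` of a Hopf algebra meet trivially,
the functional which vanishes on `X` and agrees with `ε` on `E` acts as `0` on `X` and as the
identity on `E`.

Suppose that `LX ⊆ X` for a subcoalgebra `L`. Then the operator can be replaced by one which still
vanishes on `X` and is the identity on `LE`, so that `LE ∩ X = 0`. Indeed `L` is spanned by the
entries of a multiplicative matrix `c`, and `c` is invertible by the antipode axiom. Take an
idempotent `θ` in the annihilator `I` of `X` (in the algebra of operators of the dual) such that
`x - xθ` lies in the Jacobson radical for all `x ∈ I`. Left multiplication by `c` conjugates
`diag(θ)` into an idempotent matrix `p`, whose entries lie in `I` because `LX ⊆ X`. Then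
`p - p diag(θ)` is nilpotent, and since `p` and `diag(θ)` are conjugate, this forces `p` to fix
every vector with entries in `E`, which says that `θ` fixes `LE`.

Applying this on both sides to `X = LBK` and a simple subcoalgebra `D` shows that `D ⊆ LBK` for
every nonzero subcoalgebra `B ⊆ LDK`: otherwise `D ∩ X = 0` and hence `B ⊆ LDK ∩ LBK = 0`.
The intersection `B = LCK ∩ LDK` therefore generates both double cosets as soon as it is nonzero,
and if `Λ_L C Λ_K = Λ_L D Λ_K` it is: it contains `Λ_L c Λ_K`, where `ε(Λ_L c Λ_K) = ε(c) ≠ 0` for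
some `c ∈ C`.
-/

section Idempotents

theorem eq_zero_of_isNilpotent_of_smul_eq_self {R M : Type*} [Ring R] [AddCommGroup M] [Module R M]
    {a : R} (ha : IsNilpotent a) {x : M} (hx : a • x = x) : x = 0 :=
  ha.isUnit_one_sub.smul_left_cancel.1 <| by rw [sub_smul, one_smul, hx, sub_self, smul_zero]

theorem isNilpotent_of_mem_jacobson {R : Type*} [Ring R] [IsSemiprimaryRing R] {x : R}
    (hx : x ∈ Ring.jacobson R) : IsNilpotent x := by
  obtain ⟨n, hn⟩ := IsSemiprimaryRing.isNilpotent (R := R)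
  exact ⟨n, by simpa [hn] using Ideal.pow_mem_pow hx n⟩

theorem isNilpotent_matrix_of_forall_mem {R ι : Type*} [Ring R] [Fintype ι] [DecidableEq ι]
    {I : Ideal R} (hI : IsNilpotent I) {N : Matrix ι ι R}
    (hN : ∀ i j, N i j ∈ I) : IsNilpotent N := by
  obtain ⟨n, hn⟩ := hI
  have hpow (m : ℕ) : ∀ i j, (N ^ m) i j ∈ I ^ m := by
    induction m with
    | zero => simp [Submodule.pow_zero, Ideal.one_eq_top]
    | succ m ih =>
      intro i j
      rw [Submodule.pow_succ, _root_.pow_succ, Matrix.mul_apply]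
      exact sum_mem fun l _ => Ideal.mul_mem_mul (ih i l) (hN l j)
  exact ⟨n, Matrix.ext fun i j => by simpa [hn] using hpow n i j⟩

theorem exists_isIdempotentElem_mem_sub_mul_mem_jacobson {R : Type*} [Ring R] [IsSemiprimaryRing R]
    (I : Ideal R) [I.IsTwoSided] :
    ∃ θ ∈ I, IsIdempotentElem θ ∧ ∀ x ∈ I, x - x * θ ∈ Ring.jacobson R := by
  set J := Ring.jacobson R
  let π := Ideal.Quotient.mk J
  obtain ⟨_, he', hspan⟩ := IsSemisimpleRing.ideal_eq_span_idempotent (I.map π)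
  obtain ⟨e, heI, rfl⟩ := (Ideal.mem_map_iff_of_surjective π Ideal.Quotient.mk_surjective).1
    (hspan ▸ Ideal.mem_span_singleton_self _)
  have he : ∀ x ∈ I, x - x * e ∈ J := by
    intro x hx
    obtain ⟨a, ha⟩ := Ideal.mem_span_singleton'.1 (hspan ▸ Ideal.mem_map_of_mem π hx)
    rw [← Ideal.Quotient.eq_zero_iff_mem, map_sub, map_mul]
    change π x - π x * π e = 0
    rw [← ha, mul_assoc, he'.eq, sub_self]
  -- Lifting along `R ⧸ (I ⊓ J)` rather than `R ⧸ J` keeps the lifted idempotent in `I`.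
  have : (I ⊓ J).IsTwoSided := ⟨fun b h => ⟨I.mul_mem_right b h.1, J.mul_mem_right b h.2⟩⟩
  have hidem : IsIdempotentElem (Ideal.Quotient.mk (I ⊓ J) e) := by
    refine (Ideal.Quotient.eq.2 ?_).symm
    exact ⟨sub_mem heI (Ideal.mul_mem_left _ _ heI), he e heI⟩
  obtain ⟨θ, hθ, hθe⟩ := exists_isIdempotentElem_eq_of_ker_isNilpotent
    (Ideal.Quotient.mk (I ⊓ J))
    (fun x hx => isNilpotent_of_mem_jacobson (Ideal.mk_ker.le hx).2) _ ⟨e, rfl⟩ hidem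
  obtain ⟨hθI, hθJ⟩ := Ideal.Quotient.eq.1 hθe
  refine ⟨θ, by simpa using add_mem hθI heI, hθ, fun x hx => ?_⟩
  have hsplit : x - x * θ = x - x * e - x * (θ - e) := by noncomm_ring
  exact hsplit ▸ sub_mem (he x hx) (Ideal.mul_mem_left _ _ hθJ)

theorem smul_eq_self_of_sub_mul_mem_jacobson {R M : Type*} [Ring R] [IsSemiprimaryRing R]
    [AddCommGroup M] [Module R M] {i θ : R} (hθ : IsIdempotentElem θ)
    (hiθ : i - i * θ ∈ Ring.jacobson R) {N : Submodule R M} (hN : ∀ x ∈ N, i • x = x) {x : M}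
    (hx : x ∈ N) : θ • x = x := by
  have hfix : (i - i * θ) • (x - θ • x) = x - θ • x := by
    rw [sub_smul, hN _ (sub_mem hx (N.smul_mem θ hx)), mul_smul, smul_sub θ, ← mul_smul, hθ.eq,
      sub_self, smul_zero, sub_zero]
  exact (sub_eq_zero.1 <|
    eq_zero_of_isNilpotent_of_smul_eq_self (isNilpotent_of_mem_jacobson hiθ) hfix).symm

theorem isIdempotentElem_of_mul_eq_mul {R : Type*} [Monoid R] {p q : R} (hq : IsIdempotentElem q)
    (t : Rˣ) (hqt : q * t = t * p) : IsIdempotentElem p := by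
  rw [IsIdempotentElem, ← t.mul_right_inj, ← mul_assoc, ← hqt, mul_assoc, ← hqt, ← mul_assoc, hq.eq]

theorem eq_zero_of_smul_eq_self_of_smul_eq_zero {k R M : Type*} [Field k] [Ring R] [Algebra k R]
    [AddCommGroup M] [Module k M] [FiniteDimensional k M] [Module R M] [IsScalarTower k R M]
    {p q : R} (hq : IsIdempotentElem q) (t : Rˣ) (hqt : q * t = t * p)
    (hpq : IsNilpotent (p - p * q)) {z : M} (hqz : q • z = z) (hpz : p • z = 0) : z = 0 := by
  have hp : IsIdempotentElem p := isIdempotentElem_of_mul_eq_mul hq t hqt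
  have hfix {x : M} (hpx : p • x = x) (hpqx : p • q • x = 0) : x = 0 :=
    eq_zero_of_isNilpotent_of_smul_eq_self hpq (by rw [sub_smul, mul_smul, hpx, hpqx, sub_zero])
  have hpt : p * ↑t⁻¹ = ↑t⁻¹ * q := by
    rw [Units.eq_inv_mul_iff_mul_eq, ← mul_assoc, ← hqt, Units.mul_inv_cancel_right]
  -- `g` is injective since `p - pq` is nilpotent, hence surjective, and a `g`-preimage of `t⁻¹z`
  -- is fixed by `p - pq`.
  let g : R := 1 - p + ↑t⁻¹ * q * p
  have hpg : p * g = ↑t⁻¹ * q * p := by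
    rw [mul_add, mul_sub, mul_one, hp.eq, sub_self, zero_add, ← mul_assoc, ← mul_assoc, hpt,
      mul_assoc (↑t⁻¹ : R), hq.eq]
  have hg {x y : M} (hx : g • x = ↑t⁻¹ • y) (hy : q • y = y) : p • x = x ∧ q • x = y := by
    have hpy : (↑t⁻¹ * q * p) • x = (↑t⁻¹ : R) • y := by
      rw [← hpg, mul_smul, hx, Units.smul_def, ← mul_smul, hpt, mul_smul, hy]
    have hpx : p • x = x := by
      rw [add_smul, hpy, Units.smul_def, add_eq_right, sub_smul, one_smul, sub_eq_zero] at hx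
      exact hx.symm
    rw [mul_smul, mul_smul, hpx] at hpy
    exact ⟨hpx, smul_left_cancel t⁻¹ hpy⟩
  have hinj : Function.Injective (Algebra.lsmul k k M g) := by
    refine (injective_iff_map_eq_zero _).2 fun x hx => ?_
    obtain ⟨hpx, hqx⟩ := hg (hx.trans (smul_zero t⁻¹).symm) (smul_zero q)
    exact hfix hpx (by rw [hqx, smul_zero])
  obtain ⟨x, hx⟩ := LinearMap.surjective_of_injective hinj (t⁻¹ • z)
  obtain ⟨hpx, hqx⟩ := hg hx hqz
  rw [← hqx, hfix hpx (hqx ▸ hpz), smul_zero]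

end Idempotents

section Intertwining

open scoped Matrix.Module

theorem matrix_smul_piSingle_apply {R M ι : Type*} [Ring R] [AddCommGroup M] [Module R M]
    [Fintype ι] [DecidableEq ι] (T : Matrix ι ι R) (s : ι) (x : M) (r : ι) :
    (T • (Pi.single s x : ι → M)) r = T r s • x := by
  rw [Matrix.Module.smul_apply, Finset.sum_eq_single s] <;> simp +contextual

variable {k V ι : Type*} [Field k] [AddCommGroup V] [Module k V] [FiniteDimensional k V]
  [Fintype ι] [DecidableEq ι] {A : Subalgebra k (Module.End k V)} {N : Submodule A V}

theorem matrix_smul_piSingle_eq_self {θ : A} (hθ : IsIdempotentElem θ) (hθN : ∀ x ∈ N, θ • x = x)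
    {p : Matrix ι ι A} (hpθ : ∀ r s, p r s - p r s * θ ∈ Ring.jacobson A)
    (t : (Matrix ι ι (Module.End k V))ˣ)
    (ht : Matrix.scalar ι (θ : Module.End k V) * t.val = t.val * p.map Subtype.val) {x : V}
    (hx : x ∈ N) (s : ι) :
    p.map Subtype.val • (Pi.single s x : ι → V) = (Pi.single s x : ι → V) := by
  have : IsArtinianRing A := .of_finite k A
  let val : Matrix ι ι A →+* Matrix ι ι (Module.End k V) := A.val.toRingHom.mapMatrix
  let q : Matrix ι ι A := Matrix.scalar ι θ
  have hval_q : val q = Matrix.scalar ι (θ : Module.End k V) := Matrix.diagonal_map (map_zero _)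
  have hqt : val q * t.val = t.val * val p := hval_q ▸ ht
  have hq : IsIdempotentElem (val q) := (hθ.map (Matrix.scalar ι)).map val
  have hpq : IsNilpotent (p - p * q) := by
    refine isNilpotent_matrix_of_forall_mem (IsSemiprimaryRing.isNilpotent (R := A)) fun r s => ?_
    simpa [q] using hpθ r s
  set y : ι → V := Pi.single s x with hy
  have hyN (r : ι) : (y - val p • y) r ∈ N := by
    refine sub_mem ?_ ?_
    · obtain rfl | hrs := eq_or_ne r s
      · rwa [hy, Pi.single_eq_same]
      · rw [hy, Pi.single_eq_of_ne hrs]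
        exact zero_mem N
    · rw [matrix_smul_piSingle_apply]
      exact N.smul_mem (p r s) hx
  have hqy : val q • (y - val p • y) = y - val p • y := by
    rw [hval_q, Matrix.Module.scalar_smul]
    exact funext fun r => hθN _ (hyN r)
  have hpy : val p • (y - val p • y) = 0 := by
    rw [smul_sub, ← mul_smul, (isIdempotentElem_of_mul_eq_mul hq t hqt).eq, sub_self]
  exact (sub_eq_zero.1 <| eq_zero_of_smul_eq_self_of_smul_eq_zero (k := k) hq t hqt
    (by simpa using hpq.map val) hqy hpy).symm

theorem exists_mem_smul_eq_self_of_intertwining {I : Ideal A} [I.IsTwoSided] {i : A} (hiI : i ∈ I)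
    (hiN : ∀ x ∈ N, i • x = x) (t : (Matrix ι ι (Module.End k V))ˣ)
    (ht : ∀ a ∈ I, ∃ p : Matrix ι ι A, (∀ r s, p r s ∈ I) ∧
      Matrix.scalar ι (a : Module.End k V) * t.val = t.val * p.map Subtype.val) :
    ∃ a ∈ I, ∀ x ∈ N, ∀ r s, a • t.val r s x = t.val r s x := by
  have : IsArtinianRing A := .of_finite k A
  obtain ⟨θ, hθI, hθ, hθJ⟩ := exists_isIdempotentElem_mem_sub_mul_mem_jacobson I
  have hθN : ∀ x ∈ N, θ • x = x := fun x hx =>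
    smul_eq_self_of_sub_mul_mem_jacobson hθ (hθJ i hiI) hiN hx
  obtain ⟨p, hpI, hpt⟩ := ht θ hθI
  refine ⟨θ, hθI, fun x hx r s => ?_⟩
  have hfix : Matrix.scalar ι (θ : Module.End k V) • t.val • (Pi.single s x : ι → V) =
      t.val • (Pi.single s x : ι → V) := by
    rw [← mul_smul, hpt, mul_smul,
      matrix_smul_piSingle_eq_self hθ hθN (fun r s => hθJ _ (hpI r s)) t hpt hx]
  have hfix_r := congrFun hfix r
  rw [Matrix.Module.scalar_smul, Pi.smul_apply, matrix_smul_piSingle_apply] at hfix_r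
  exact hfix_r

end Intertwining

section DualActions

variable {k V ι : Type*} [Field k] [AddCommGroup V] [Module k V]

theorem exists_dual_eq_zero_eq_of_disjoint {E X : Submodule k V} (hEX : Disjoint E X)
    (φ : Module.Dual k V) :
    ∃ f : Module.Dual k V, (∀ x ∈ X, f x = 0) ∧ ∀ e ∈ E, f e = φ e := by
  obtain ⟨Y, hEY, hYX⟩ := hEX.exists_isCompl
  refine ⟨φ ∘ₗ Y.projection X hYX, fun x hx => ?_, fun e he => ?_⟩
  · rw [LinearMap.comp_apply, (Submodule.projection_apply_eq_zero_iff hYX).2 hx, map_zero]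
  · rw [LinearMap.comp_apply, Submodule.projection_apply_left hYX ⟨e, hEY he⟩]

/-- Two commuting families of operators on `V` indexed by functionals, each related to the
functional `ε` by `ε (ρ f x) = f x`. This abstracts the two actions of the dual of a coalgebra on
that coalgebra, and the symmetry between `ρ` and `σ` makes left and right multiplications in a Hopf
algebra instances of one statement. -/
structure IsDualActionPair (ε : Module.Dual k V) (ρ σ : Module.Dual k V → Module.End k V) :
    Prop where
  apply_comm (f g : Module.Dual k V) (x : V) : σ g (ρ f x) = ρ f (σ g x)
  apply_left (f : Module.Dual k V) (x : V) : ε (ρ f x) = f x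
  apply_right (f : Module.Dual k V) (x : V) : ε (σ f x) = f x

namespace IsDualActionPair

variable {ε : Module.Dual k V} {ρ σ : Module.Dual k V → Module.End k V} {X E : Submodule k V}

theorem symm (h : IsDualActionPair ε ρ σ) : IsDualActionPair ε σ ρ :=
  ⟨fun f g x => (h.apply_comm g f x).symm, h.apply_right, h.apply_left⟩

theorem dual_apply (h : IsDualActionPair ε ρ σ) (f g : Module.Dual k V) (x : V) :
    g (ρ f x) = f (σ g x) := by
  rw [← h.apply_right g, h.apply_comm, h.apply_left]

theorem apply_eq_zero (h : IsDualActionPair ε ρ σ) (hX : ∀ g, ∀ x ∈ X, σ g x ∈ X)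
    {f : Module.Dual k V} (hf : ∀ x ∈ X, f x = 0) {x : V} (hx : x ∈ X) : ρ f x = 0 :=
  (Module.forall_dual_apply_eq_zero_iff k _).1 fun g => by rw [h.dual_apply, hf _ (hX g x hx)]

theorem apply_eq_self (h : IsDualActionPair ε ρ σ) (hX : ∀ g, ∀ x ∈ X, σ g x ∈ X)
    {f : Module.Dual k V} (hf : ∀ x ∈ X, f x = ε x) {x : V} (hx : x ∈ X) : ρ f x = x :=
  sub_eq_zero.1 <| (Module.forall_dual_apply_eq_zero_iff k _).1 fun g => by
    rw [map_sub, h.dual_apply, hf _ (hX g x hx), h.apply_right, sub_self]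

theorem eq_of_mem_centralizer (h : IsDualActionPair ε ρ σ) {a : Module.End k V}
    (ha : a ∈ Subalgebra.centralizer k (Set.range σ)) : a = ρ (ε ∘ₗ a) := by
  refine LinearMap.ext fun x => sub_eq_zero.1 <| (Module.forall_dual_apply_eq_zero_iff k _).1
    fun g => ?_
  have hcomm : σ g (a x) = a (σ g x) :=
    LinearMap.congr_fun ((Subalgebra.mem_centralizer_iff k).1 ha _ ⟨g, rfl⟩) x
  rw [map_sub, h.dual_apply, ← h.apply_right g, hcomm, LinearMap.comp_apply, sub_self]

theorem mem_centralizer (h : IsDualActionPair ε ρ σ) (f : Module.Dual k V) :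
    ρ f ∈ Subalgebra.centralizer k (Set.range σ) := by
  rw [Subalgebra.mem_centralizer_iff]
  rintro _ ⟨g, rfl⟩
  exact LinearMap.ext (h.apply_comm f g)

/-- A `ρ`-invariant subspace as a submodule over the centralizer of the operators `σ g`, which
consists of the operators `ρ f`. -/
def toSubmodule (h : IsDualActionPair ε ρ σ) (hX : ∀ f, ∀ x ∈ X, ρ f x ∈ X) :
    Submodule (Subalgebra.centralizer k (Set.range σ)) V where
  __ := X.toAddSubmonoid
  smul_mem' a x hx := by
    change (a : Module.End k V) x ∈ X
    rw [h.eq_of_mem_centralizer a.2]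
    exact hX _ x hx

theorem exists_eq_zero_and_eq_self [FiniteDimensional k V] [Fintype ι] [DecidableEq ι]
    (h : IsDualActionPair ε ρ σ) (hXρ : ∀ f, ∀ x ∈ X, ρ f x ∈ X) (hXσ : ∀ f, ∀ x ∈ X, σ f x ∈ X)
    (hEρ : ∀ f, ∀ x ∈ E, ρ f x ∈ E) (hEσ : ∀ f, ∀ x ∈ E, σ f x ∈ E) (hEX : Disjoint E X)
    (t : (Matrix ι ι (Module.End k V))ˣ) (htX : ∀ i j, ∀ x ∈ X, t.val i j x ∈ X)
    (htρ : ∀ f i j x, ρ f (t.val i j x) = ∑ l, t.val i l (ρ (f ∘ₗ t.val l j) x)) :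
    ∃ a : Module.End k V, (∀ x ∈ X, a x = 0) ∧ ∀ e ∈ E, ∀ i j, a (t.val i j e) = t.val i j e := by
  let A := Subalgebra.centralizer k (Set.range σ)
  let I : Ideal A := Module.annihilator A (h.toSubmodule hXρ)
  have eq_zero_of_mem {a : A} (ha : a ∈ I) : ∀ x ∈ X, a.val x = 0 := fun x hx =>
    congrArg Subtype.val (Module.mem_annihilator.1 ha ⟨x, hx⟩)
  have mem_of_eq_zero (f) (hf : ∀ x ∈ X, f x = 0) : ⟨ρ f, h.mem_centralizer f⟩ ∈ I :=
    Module.mem_annihilator.2 fun x => Subtype.ext (h.apply_eq_zero hXσ hf x.2)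
  have intertwining : ∀ a ∈ I, ∃ p : Matrix ι ι A, (∀ r s, p r s ∈ I) ∧
      Matrix.scalar ι a.val * t.val = t.val * p.map Subtype.val := by
    refine fun a ha => ⟨.of fun r s => ⟨ρ ((ε ∘ₗ a.val) ∘ₗ t.val r s), h.mem_centralizer _⟩,
      fun r s => mem_of_eq_zero _ fun x hx => ?_, ?_⟩
    · rw [LinearMap.comp_apply, LinearMap.comp_apply, eq_zero_of_mem ha _ (htX r s x hx), map_zero]
    · ext i j x
      rw [Matrix.scalar_apply, Matrix.diagonal_mul, Matrix.mul_apply, Module.End.mul_apply,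
        LinearMap.sum_apply]
      conv_lhs => rw [h.eq_of_mem_centralizer a.2, htρ]
      rfl
  obtain ⟨f, hfX, hfE⟩ := exists_dual_eq_zero_eq_of_disjoint hEX ε
  obtain ⟨θ, hθI, hθE⟩ := exists_mem_smul_eq_self_of_intertwining (N := h.toSubmodule hEρ)
    (mem_of_eq_zero f hfX) (fun e he => h.apply_eq_self hEσ hfE he) t intertwining
  exact ⟨θ, eq_zero_of_mem hθI, fun e he i j => hθE e he i j⟩

end IsDualActionPair

end DualActions

section HitActions

open Coalgebra

variable {k H : Type*} [CommSemiring k] [AddCommMonoid H] [Module k H] [Coalgebra k H]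

/-- The right hit action `f ⇀ h = h₁ f(h₂)` of the dual of a coalgebra. -/
def hitR (f : Module.Dual k H) : Module.End k H :=
  (TensorProduct.rid k H).toLinearMap ∘ₗ f.lTensor H ∘ₗ comul

/-- The left hit action `h ↼ f = f(h₁) h₂` of the dual of a coalgebra. -/
def hitL (f : Module.Dual k H) : Module.End k H :=
  (TensorProduct.lid k H).toLinearMap ∘ₗ f.rTensor H ∘ₗ comul

theorem comul_hitL (f : Module.Dual k H) (h : H) :
    comul (R := k) (hitL f h) = (hitL f).rTensor H (comul h) := by
  let T : (H ⊗[k] H) ⊗[k] H →ₗ[k] H ⊗[k] H :=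
    ((TensorProduct.lid k H).toLinearMap ∘ₗ f.rTensor H).rTensor H
  have hT : comul ∘ₗ (TensorProduct.lid k H).toLinearMap ∘ₗ f.rTensor H =
      T ∘ₗ (TensorProduct.assoc k H H H).symm.toLinearMap ∘ₗ comul.lTensor H := by
    refine TensorProduct.ext' fun a b => ?_
    simp only [T, LinearMap.comp_apply, LinearEquiv.coe_coe, LinearMap.lTensor_tmul,
      LinearMap.rTensor_tmul, TensorProduct.lid_tmul, map_smul]
    induction comul (R := k) b using TensorProduct.induction_on with
    | zero => simp
    | tmul x y => simp [TensorProduct.smul_tmul']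
    | add x y hx hy => simp only [TensorProduct.tmul_add, map_add, smul_add, hx, hy]
  calc comul (hitL f h)
      = T ((TensorProduct.assoc k H H H).symm (comul.lTensor H (comul h))) :=
        LinearMap.congr_fun hT (comul h)
    _ = T (comul.rTensor H (comul h)) := by rw [coassoc_symm_apply]
    _ = (hitL f).rTensor H (comul h) := by
        rw [← LinearMap.rTensor_comp_apply]
        rfl

theorem hitL_hitR_comm (f g : Module.Dual k H) (h : H) :
    hitL f (hitR g h) = hitR g (hitL f h) := by
  have hcomm : hitL f ∘ₗ (TensorProduct.rid k H).toLinearMap ∘ₗ g.lTensor H =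
      (TensorProduct.rid k H).toLinearMap ∘ₗ g.lTensor H ∘ₗ (hitL f).rTensor H :=
    TensorProduct.ext' fun a b => by simp
  rw [hitR, LinearMap.comp_apply, LinearMap.comp_apply, LinearMap.comp_apply, LinearMap.comp_apply,
    comul_hitL]
  exact LinearMap.congr_fun hcomm (comul h)

theorem counit_hitR (f : Module.Dual k H) (h : H) : counit (R := k) (hitR f h) = f h := by
  have hf : counit (R := k) ∘ₗ (TensorProduct.rid k H).toLinearMap ∘ₗ f.lTensor H =
      f ∘ₗ (TensorProduct.lid k H).toLinearMap ∘ₗ (counit (R := k) (A := H)).rTensor H :=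
    TensorProduct.ext' fun a b => by simp [mul_comm]
  simpa [hitR] using LinearMap.congr_fun hf (comul h)

theorem counit_hitL (f : Module.Dual k H) (h : H) : counit (R := k) (hitL f h) = f h := by
  have hf : counit (R := k) ∘ₗ (TensorProduct.lid k H).toLinearMap ∘ₗ f.rTensor H =
      f ∘ₗ (TensorProduct.rid k H).toLinearMap ∘ₗ (counit (R := k) (A := H)).lTensor H :=
    TensorProduct.ext' fun a b => by simp [mul_comm]
  simpa [hitL] using LinearMap.congr_fun hf (comul h)

theorem isDualActionPair_hitR_hitL {k H : Type*} [Field k] [AddCommGroup H] [Module k H]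
    [Coalgebra k H] : IsDualActionPair (counit (R := k) (A := H)) hitR hitL :=
  ⟨fun f g => hitL_hitR_comm g f, counit_hitR, counit_hitL⟩

end HitActions

section Slices

variable {k V W : Type*} [Field k] [AddCommGroup V] [Module k V] [AddCommGroup W] [Module k W]

theorem eq_of_forall_lid_rTensor_eq {s t : V ⊗[k] W}
    (h : ∀ f : Module.Dual k V,
      TensorProduct.lid k W (f.rTensor W s) = TensorProduct.lid k W (f.rTensor W t)) : s = t := by
  classical
  let b := Module.Basis.ofVectorSpace k V
  refine (TensorProduct.equivFinsuppOfBasisLeft (N := W) b).injective (Finsupp.ext fun i => ?_)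
  rw [TensorProduct.equivFinsuppOfBasisLeft_apply, TensorProduct.equivFinsuppOfBasisLeft_apply]
  exact h (b.coord i)

theorem eq_of_forall_rid_lTensor_eq {s t : V ⊗[k] W}
    (h : ∀ f : Module.Dual k W,
      TensorProduct.rid k V (f.lTensor V s) = TensorProduct.rid k V (f.lTensor V t)) : s = t := by
  classical
  let b := Module.Basis.ofVectorSpace k W
  refine (TensorProduct.equivFinsuppOfBasisRight (M := V) b).injective (Finsupp.ext fun i => ?_)
  rw [TensorProduct.equivFinsuppOfBasisRight_apply, TensorProduct.equivFinsuppOfBasisRight_apply]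
  exact h (b.coord i)

end Slices

section Subcoalgebra

open Coalgebra

theorem apply_mem_of_mem_range_map_subtype {k V W U : Type*} [CommSemiring k] [AddCommMonoid V]
    [Module k V] [AddCommMonoid W] [Module k W] [AddCommMonoid U] [Module k U] {P : Submodule k V}
    {Q : Submodule k W} {Z : Submodule k U} (φ : V ⊗[k] W →ₗ[k] U)
    (hφ : ∀ x ∈ P, ∀ y ∈ Q, φ (x ⊗ₜ[k] y) ∈ Z) {t : V ⊗[k] W}
    (ht : t ∈ LinearMap.range (TensorProduct.map P.subtype Q.subtype)) : φ t ∈ Z := by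
  obtain ⟨u, rfl⟩ := ht
  induction u using TensorProduct.induction_on with
  | zero => simp
  | tmul x y => exact hφ x x.2 y y.2
  | add u v hu hv => simpa only [map_add] using add_mem hu hv

variable {k H : Type} [Field k] [Ring H] [HopfAlgebra k H] {C D : Submodule k H}

theorem IsSubcoalgebra.hitR_mem (hC : IsSubcoalgebra k H C) (f : Module.Dual k H) :
    ∀ c ∈ C, hitR f c ∈ C := fun c hc =>
  apply_mem_of_mem_range_map_subtype ((TensorProduct.rid k H).toLinearMap ∘ₗ f.lTensor H)
    (fun x hx y _ => by simpa using C.smul_mem (f y) hx) (hC c hc)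

theorem IsSubcoalgebra.hitL_mem (hC : IsSubcoalgebra k H C) (f : Module.Dual k H) :
    ∀ c ∈ C, hitL f c ∈ C := fun c hc =>
  apply_mem_of_mem_range_map_subtype ((TensorProduct.lid k H).toLinearMap ∘ₗ f.rTensor H)
    (fun x _ y hy => by simpa using C.smul_mem (f x) hy) (hC c hc)

theorem isSubcoalgebra_of_hit_mem (hR : ∀ f : Module.Dual k H, ∀ c ∈ C, hitR f c ∈ C)
    (hL : ∀ f : Module.Dual k H, ∀ c ∈ C, hitL f c ∈ C) : IsSubcoalgebra k H C := by
  obtain ⟨p, hp⟩ := C.subtype.exists_leftInverse_of_injective C.ker_subtype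
  have hpC : ∀ c ∈ C, (p c : H) = c := fun c hc =>
    congrArg Subtype.val (LinearMap.congr_fun hp ⟨c, hc⟩)
  refine fun c hc => ⟨TensorProduct.map p p (comul c), ?_⟩
  have hl : (C.subtype ∘ₗ p).lTensor H (comul (R := k) c) = comul c :=
    eq_of_forall_lid_rTensor_eq fun f => by
      have hslice : (TensorProduct.lid k H).toLinearMap ∘ₗ f.rTensor H ∘ₗ
          (C.subtype ∘ₗ p).lTensor H = C.subtype ∘ₗ p ∘ₗ (TensorProduct.lid k H).toLinearMap ∘ₗ
          f.rTensor H := TensorProduct.ext' fun x y => by simp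
      exact (LinearMap.congr_fun hslice (comul c)).trans (hpC _ (hL f c hc))
  have hr : (C.subtype ∘ₗ p).rTensor H (comul (R := k) c) = comul c :=
    eq_of_forall_rid_lTensor_eq fun f => by
      have hslice : (TensorProduct.rid k H).toLinearMap ∘ₗ f.lTensor H ∘ₗ
          (C.subtype ∘ₗ p).rTensor H = C.subtype ∘ₗ p ∘ₗ (TensorProduct.rid k H).toLinearMap ∘ₗ
          f.lTensor H := TensorProduct.ext' fun x y => by simp
      exact (LinearMap.congr_fun hslice (comul c)).trans (hpC _ (hR f c hc))
  rw [← LinearMap.comp_apply, ← TensorProduct.map_comp, ← LinearMap.lTensor_comp_rTensor,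
    LinearMap.comp_apply, hr, hl]

theorem IsSubcoalgebra.inf (hC : IsSubcoalgebra k H C) (hD : IsSubcoalgebra k H D) :
    IsSubcoalgebra k H (C ⊓ D) :=
  isSubcoalgebra_of_hit_mem (fun f c hc => ⟨hC.hitR_mem f c hc.1, hD.hitR_mem f c hc.2⟩)
    fun f c hc => ⟨hC.hitL_mem f c hc.1, hD.hitL_mem f c hc.2⟩

theorem IsSubcoalgebra.mul (hC : IsSubcoalgebra k H C) (hD : IsSubcoalgebra k H D) :
    IsSubcoalgebra k H (C * D) := by
  change C * D ≤ Submodule.comap comul (LinearMap.range (TensorProduct.map _ _))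
  refine Submodule.mul_le.2 fun c hc d hd => ?_
  rw [Submodule.mem_comap, Bialgebra.comul_mul]
  refine apply_mem_of_mem_range_map_subtype (LinearMap.mulRight k (comul d)) (fun x hx y hy => ?_)
    (hC c hc)
  refine apply_mem_of_mem_range_map_subtype (LinearMap.mulLeft k (x ⊗ₜ[k] y))
    (fun z hz w hw => ?_) (hD d hd)
  exact ⟨⟨x * z, Submodule.mul_mem_mul hx hz⟩ ⊗ₜ[k] ⟨y * w, Submodule.mul_mem_mul hy hw⟩, by simp⟩

theorem IsSubcoalgebra.exists_counit_ne_zero (hC : IsSubcoalgebra k H C) (hC₀ : C ≠ ⊥) :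
    ∃ c ∈ C, counit (R := k) c ≠ 0 := by
  by_contra! hcounit
  obtain ⟨c, hc, hc₀⟩ := C.ne_bot_iff.1 hC₀
  have hpair := isDualActionPair_hitR_hitL (k := k) (H := H)
  refine hc₀ ?_
  rw [← hpair.apply_eq_self hC.hitL_mem (fun _ _ => rfl) hc,
    hpair.apply_eq_zero hC.hitL_mem hcounit hc]

theorem IsSimpleSubcoalgebra.le_or_disjoint (hD : IsSimpleSubcoalgebra k H D)
    (hC : IsSubcoalgebra k H C) : D ≤ C ∨ Disjoint D C := by
  refine or_iff_not_imp_right.2 fun hDC => ?_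
  exact inf_eq_left.1 (hD.2.2 _ inf_le_left (hD.1.inf hC) (mt disjoint_iff.2 hDC))

end Subcoalgebra

section MultiplicativeMatrix

open Coalgebra

variable {k H ι : Type*} [Fintype ι] [DecidableEq ι]

theorem of_mulRight_mul_of_mulRight [CommSemiring k] [Semiring H] [Algebra k H] {a b : Matrix ι ι H}
    (hab : a * b = 1) :
    (Matrix.of fun i j => LinearMap.mulRight k (b j i)) *
      (Matrix.of fun i j => LinearMap.mulRight k (a j i)) = 1 := by
  refine Matrix.ext fun i j => LinearMap.ext fun x => ?_
  have hx : x * (a * b) j i = (1 : Matrix ι ι (Module.End k H)) i j x := by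
    rw [hab]
    obtain rfl | hij := eq_or_ne i j
    · simp
    · simp [Matrix.one_apply_ne hij, Matrix.one_apply_ne hij.symm]
  simpa [Matrix.mul_apply, mul_assoc, Finset.mul_sum] using hx

/-- A multiplicative matrix over a coalgebra: `Δ(c i j) = ∑ l, c i l ⊗ c l j` and
`ε(c i j) = δ i j`, the coalgebra analogue of the matrix coefficients of a representation. -/
structure IsMultiplicativeMatrix (k : Type*) {H : Type*} [CommSemiring k] [AddCommMonoid H]
    [Module k H] [Coalgebra k H] (c : Matrix ι ι H) : Prop where
  comul_apply (i j : ι) : comul (R := k) (c i j) = ∑ l, c i l ⊗ₜ[k] c l j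
  counit_apply (i j : ι) : counit (R := k) (c i j) = (1 : Matrix ι ι k) i j

namespace IsMultiplicativeMatrix

variable [CommRing k] [Ring H] [HopfAlgebra k H] {c : Matrix ι ι H}

theorem map_antipode_mul (hc : IsMultiplicativeMatrix k c) :
    c.map (HopfAlgebra.antipode k) * c = 1 := by
  ext i j
  have h := HopfAlgebra.mul_antipode_rTensor_comul_apply (R := k) (c i j)
  rw [hc.comul_apply, hc.counit_apply] at h
  simpa [Matrix.mul_apply, Matrix.one_apply, apply_ite] using h

theorem mul_map_antipode (hc : IsMultiplicativeMatrix k c) :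
    c * c.map (HopfAlgebra.antipode k) = 1 := by
  ext i j
  have h := HopfAlgebra.mul_antipode_lTensor_comul_apply (R := k) (c i j)
  rw [hc.comul_apply, hc.counit_apply] at h
  simpa [Matrix.mul_apply, Matrix.one_apply, apply_ite] using h

/-- Left multiplications by the entries of a multiplicative matrix, as an invertible matrix of
operators. -/
def mulLeft (hc : IsMultiplicativeMatrix k c) : (Matrix ι ι (Module.End k H))ˣ :=
  Units.map (Algebra.lmul k H).toRingHom.mapMatrix.toMonoidHom
    ⟨c, c.map (HopfAlgebra.antipode k), hc.mul_map_antipode, hc.map_antipode_mul⟩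

/-- Right multiplications by the entries of a multiplicative matrix, as an invertible matrix of
operators. It is transposed because right multiplication reverses products. -/
def mulRight (hc : IsMultiplicativeMatrix k c) : (Matrix ι ι (Module.End k H))ˣ where
  val := .of fun i j => LinearMap.mulRight k (c j i)
  inv := .of fun i j => LinearMap.mulRight k (HopfAlgebra.antipode k (c j i))
  val_inv := of_mulRight_mul_of_mulRight hc.map_antipode_mul
  inv_val := of_mulRight_mul_of_mulRight hc.mul_map_antipode

theorem mulLeft_apply (hc : IsMultiplicativeMatrix k c) (i j : ι) (x : H) :
    hc.mulLeft.val i j x = c i j * x := rfl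

theorem mulRight_apply (hc : IsMultiplicativeMatrix k c) (i j : ι) (x : H) :
    hc.mulRight.val i j x = x * c j i := rfl

theorem hitR_mulLeft (hc : IsMultiplicativeMatrix k c) (f : Module.Dual k H) (i j : ι) (x : H) :
    hitR f (hc.mulLeft.val i j x) =
      ∑ l, hc.mulLeft.val i l (hitR (f ∘ₗ hc.mulLeft.val l j) x) := by
  have hmul (a b : H) (u : H ⊗[k] H) :
      TensorProduct.rid k H (f.lTensor H (a ⊗ₜ[k] b * u)) =
        a * TensorProduct.rid k H ((f ∘ₗ LinearMap.mulLeft k b).lTensor H u) := by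
    induction u using TensorProduct.induction_on with
    | zero => simp
    | tmul y z => simp
    | add u v hu hv => simp only [mul_add, map_add, hu, hv]
  rw [mulLeft_apply, hitR, LinearMap.comp_apply, LinearMap.comp_apply, Bialgebra.comul_mul,
    hc.comul_apply, Finset.sum_mul, map_sum, map_sum]
  exact Finset.sum_congr rfl fun l _ => hmul _ _ _

theorem hitL_mulRight (hc : IsMultiplicativeMatrix k c) (f : Module.Dual k H) (i j : ι) (x : H) :
    hitL f (hc.mulRight.val i j x) =
      ∑ l, hc.mulRight.val i l (hitL (f ∘ₗ hc.mulRight.val l j) x) := by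
  have hmul (a b : H) (u : H ⊗[k] H) :
      TensorProduct.lid k H (f.rTensor H (u * a ⊗ₜ[k] b)) =
        TensorProduct.lid k H ((f ∘ₗ LinearMap.mulRight k a).rTensor H u) * b := by
    induction u using TensorProduct.induction_on with
    | zero => simp
    | tmul y z => simp
    | add u v hu hv => simp only [add_mul, map_add, hu, hv]
  rw [mulRight_apply, hitL, LinearMap.comp_apply, LinearMap.comp_apply, Bialgebra.comul_mul,
    hc.comul_apply, Finset.mul_sum, map_sum, map_sum]
  exact Finset.sum_congr rfl fun l _ => hmul _ _ _

end IsMultiplicativeMatrix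

end MultiplicativeMatrix

section DoubleCosets

open Coalgebra

variable {k H : Type} [Field k] [Ring H] [HopfAlgebra k H]

theorem sum_coord_smul_coe {R M ι : Type*} [CommSemiring R] [AddCommMonoid M] [Module R M]
    [Fintype ι] {N : Submodule R M} (b : Module.Basis ι R N) (x : N) :
    ∑ i, b.coord i x • (b i : M) = x := by
  simpa only [map_sum, map_smul, Submodule.subtype_apply, Module.Basis.coord_apply] using
    congrArg N.subtype (b.sum_repr x)

theorem IsSubcoalgebra.comul_eq_sum_tmul_hitL {C : Submodule k H} (hC : IsSubcoalgebra k H C)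
    {ι : Type*} [Fintype ι] (b : Module.Basis ι k C) {p : H →ₗ[k] C} (hp : ∀ x : C, p x = x) {x : H}
    (hx : x ∈ C) : comul (R := k) x = ∑ i, (b i : H) ⊗ₜ[k] hitL (b.coord i ∘ₗ p) x := by
  let T : Module.End k (H ⊗[k] H) := ∑ i, TensorProduct.mk k H H (b i) ∘ₗ
    (TensorProduct.lid k H).toLinearMap ∘ₗ (b.coord i ∘ₗ p).rTensor H
  have hT : (T - 1) (comul (R := k) x) ∈ (⊥ : Submodule k (H ⊗[k] H)) := by
    refine apply_mem_of_mem_range_map_subtype _ (fun y hy z _ => ?_) (hC x hx)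
    have hy_sum : ∑ i, b.coord i (p y) • (b i : H) = y := by
      rw [hp ⟨y, hy⟩, sum_coord_smul_coe]
    simp only [Submodule.mem_bot, LinearMap.sub_apply, Module.End.one_apply, sub_eq_zero]
    conv_rhs => rw [← hy_sum, TensorProduct.sum_tmul]
    simp [T, TensorProduct.smul_tmul']
  rw [Submodule.mem_bot, LinearMap.sub_apply, Module.End.one_apply, sub_eq_zero] at hT
  simpa [T, hitL] using hT.symm

theorem IsSubcoalgebra.exists_isMultiplicativeMatrix {C : Submodule k H}
    (hC : IsSubcoalgebra k H C) [FiniteDimensional k C] :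
    ∃ c : Matrix (Fin (Module.finrank k C)) (Fin (Module.finrank k C)) H,
      IsMultiplicativeMatrix k c ∧
        Submodule.span k (Set.range fun i : _ × _ => c i.1 i.2) = C := by
  let b := Module.finBasis k C
  obtain ⟨p, hp⟩ := C.subtype.exists_leftInverse_of_injective C.ker_subtype
  have hpC : ∀ x : C, p x = x := LinearMap.congr_fun hp
  have hcomul (j) := hC.comul_eq_sum_tmul_hitL b hpC (b j).2
  refine ⟨.of fun i j => hitL (b.coord i ∘ₗ p) (b j), ⟨fun i j => ?_, fun i j => ?_⟩, ?_⟩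
  · rw [Matrix.of_apply, comul_hitL, hcomul]
    simp
  · rw [Matrix.of_apply, counit_hitL]
    simp [hpC, Matrix.one_apply, Finsupp.single_apply, eq_comm]
  · refine le_antisymm (Submodule.span_le.2 ?_) fun x hx => ?_
    · rintro _ ⟨⟨i, j⟩, rfl⟩
      exact hC.hitL_mem _ _ (b j).2
    · have hb (j) : (b j : H) = ∑ i, counit (R := k) (b i : H) • hitL (b.coord i ∘ₗ p) (b j) := by
        have h := congrArg (TensorProduct.lid k H) (rTensor_counit_comul (R := k) (b j : H))
        rw [hcomul] at h
        simpa using h.symm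
      have hx_sum : ∑ j, b.coord j ⟨x, hx⟩ • (b j : H) = x := sum_coord_smul_coe b ⟨x, hx⟩
      rw [← hx_sum]
      refine sum_mem fun j _ => Submodule.smul_mem _ _ ?_
      rw [hb]
      exact sum_mem fun i _ => Submodule.smul_mem _ _ (Submodule.subset_span ⟨(i, j), rfl⟩)

theorem disjoint_mul_left [FiniteDimensional k H] {L E X : Submodule k H}
    (hL : IsSubcoalgebra k H L) (hE : IsSubcoalgebra k H E) (hX : IsSubcoalgebra k H X)
    (hLX : L * X ≤ X) (hEX : Disjoint E X) : Disjoint (L * E) X := by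
  obtain ⟨c, hc, hcL⟩ := hL.exists_isMultiplicativeMatrix
  have hcX (i j) : ∀ x ∈ X, c i j * x ∈ X := fun x hx =>
    hLX (Submodule.mul_mem_mul (hcL ▸ Submodule.subset_span ⟨(i, j), rfl⟩) hx)
  obtain ⟨a, haX, haE⟩ := isDualActionPair_hitR_hitL.exists_eq_zero_and_eq_self hX.hitR_mem
    hX.hitL_mem hE.hitR_mem hE.hitL_mem hEX hc.mulLeft hcX hc.hitR_mulLeft
  have ha : L * E ≤ LinearMap.eqLocus a LinearMap.id := by
    refine Submodule.mul_le.2 fun l hl e he => ?_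
    refine (hcL ▸ Submodule.span_le.2 ?_ :
      L ≤ (LinearMap.eqLocus a LinearMap.id).comap (LinearMap.mulRight k e)) hl
    rintro _ ⟨⟨i, j⟩, rfl⟩
    exact haE e he i j
  exact Submodule.disjoint_def.2 fun y hy hyX => (ha hy).symm.trans (haX y hyX)

theorem disjoint_mul_right [FiniteDimensional k H] {K E X : Submodule k H}
    (hK : IsSubcoalgebra k H K) (hE : IsSubcoalgebra k H E) (hX : IsSubcoalgebra k H X)
    (hXK : X * K ≤ X) (hEX : Disjoint E X) : Disjoint (E * K) X := by
  obtain ⟨c, hc, hcK⟩ := hK.exists_isMultiplicativeMatrix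
  have hcX (i j) : ∀ x ∈ X, x * c j i ∈ X := fun x hx =>
    hXK (Submodule.mul_mem_mul hx (hcK ▸ Submodule.subset_span ⟨(j, i), rfl⟩))
  obtain ⟨a, haX, haE⟩ := isDualActionPair_hitR_hitL.symm.exists_eq_zero_and_eq_self hX.hitL_mem
    hX.hitR_mem hE.hitL_mem hE.hitR_mem hEX hc.mulRight hcX hc.hitL_mulRight
  have ha : E * K ≤ LinearMap.eqLocus a LinearMap.id := by
    refine Submodule.mul_le.2 fun e he x hx => ?_
    refine (hcK ▸ Submodule.span_le.2 ?_ :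
      K ≤ (LinearMap.eqLocus a LinearMap.id).comap (LinearMap.mulLeft k e)) hx
    rintro _ ⟨⟨i, j⟩, rfl⟩
    exact haE e he j i
  exact Submodule.disjoint_def.2 fun y hy hyX => (ha hy).symm.trans (haX y hyX)

theorem one_mem_toSubmodule {R A : Type*} [CommSemiring R] [Semiring A] [Algebra R A]
    (K : Subalgebra R A) : 1 ∈ K.toSubmodule := K.one_mem

theorem le_mul_mul {R A : Type*} [CommSemiring R] [Semiring A] [Algebra R A] (L K : Subalgebra R A)
    (E : Submodule R A) : E ≤ L.toSubmodule * E * K.toSubmodule := fun x hx => by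
  simpa using Submodule.mul_mem_mul (Submodule.mul_mem_mul (one_mem_toSubmodule L) hx)
    (one_mem_toSubmodule K)

theorem mul_mul_le_of_le {R A : Type*} [CommSemiring R] [Semiring A] [Algebra R A]
    {L K : Subalgebra R A} {E E' : Submodule R A} (h : E ≤ L.toSubmodule * E' * K.toSubmodule) :
    L.toSubmodule * E * K.toSubmodule ≤ L.toSubmodule * E' * K.toSubmodule := by
  refine (mul_le_mul' (mul_le_mul' le_rfl h) le_rfl).trans ?_
  rw [← mul_assoc, ← mul_assoc, L.isIdempotentElem_toSubmodule.eq, mul_assoc,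
    K.isIdempotentElem_toSubmodule.eq]

theorem IsSimpleSubcoalgebra.le_mul_mul_of_le_mul_mul [FiniteDimensional k H] {L K : Subalgebra k H}
    (hL : IsSubcoalgebra k H L.toSubmodule) (hK : IsSubcoalgebra k H K.toSubmodule)
    {B D : Submodule k H} (hD : IsSimpleSubcoalgebra k H D) (hB : IsSubcoalgebra k H B)
    (hB₀ : B ≠ ⊥) (hBD : B ≤ L.toSubmodule * D * K.toSubmodule) :
    D ≤ L.toSubmodule * B * K.toSubmodule := by
  set X := L.toSubmodule * B * K.toSubmodule with hX_def
  have hX : IsSubcoalgebra k H X := (hL.mul hB).mul hK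
  have hLX : L.toSubmodule * X ≤ X := by
    rw [hX_def, ← mul_assoc, ← mul_assoc, L.isIdempotentElem_toSubmodule.eq]
  have hXK : X * K.toSubmodule ≤ X := by
    rw [hX_def, mul_assoc, K.isIdempotentElem_toSubmodule.eq]
  refine (hD.le_or_disjoint hX).resolve_right fun hDX => hB₀ ?_
  have hLDKX : Disjoint (L.toSubmodule * D * K.toSubmodule) X :=
    disjoint_mul_right hK (hL.mul hD.1) hX hXK (disjoint_mul_left hL hD.1 hX hLX hDX)
  exact le_bot_iff.1 (hLDKX hBD (le_mul_mul L K B))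

theorem IsIdempotentIntegral.span_mul {K : Subalgebra k H} {Λ : H}
    (hΛ : IsIdempotentIntegral k H K Λ) :
    Submodule.span k {Λ} * K.toSubmodule = Submodule.span k {Λ} := by
  refine le_antisymm (Submodule.mul_le.2 fun a ha x hx => ?_) fun a ha => ?_
  · obtain ⟨r, rfl⟩ := Submodule.mem_span_singleton.1 ha
    rw [smul_mul_assoc, (hΛ.2.2 x hx).2, smul_smul]
    exact Submodule.mem_span_singleton.2 ⟨_, rfl⟩
  · simpa using Submodule.mul_mem_mul ha (one_mem_toSubmodule K)

theorem IsIdempotentIntegral.mul_span {K : Subalgebra k H} {Λ : H}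
    (hΛ : IsIdempotentIntegral k H K Λ) :
    K.toSubmodule * Submodule.span k {Λ} = Submodule.span k {Λ} := by
  refine le_antisymm (Submodule.mul_le.2 fun x hx a ha => ?_) fun a ha => ?_
  · obtain ⟨r, rfl⟩ := Submodule.mem_span_singleton.1 ha
    rw [mul_smul_comm, (hΛ.2.2 x hx).1, smul_smul]
    exact Submodule.mem_span_singleton.2 ⟨_, rfl⟩
  · simpa using Submodule.mul_mem_mul (one_mem_toSubmodule K) ha

variable {L K : Subalgebra k H} {ΛL ΛK : H}

theorem span_mul_mul_mul_span (hΛL : IsIdempotentIntegral k H L ΛL)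
    (hΛK : IsIdempotentIntegral k H K ΛK) (E : Submodule k H) :
    Submodule.span k {ΛL} * (L.toSubmodule * E * K.toSubmodule) * Submodule.span k {ΛK} =
      Submodule.span k {ΛL} * E * Submodule.span k {ΛK} := by
  rw [← mul_assoc, ← mul_assoc, hΛL.span_mul, mul_assoc, hΛK.mul_span]

theorem mul_mul_inf_mul_mul_ne_bot (hΛL : IsIdempotentIntegral k H L ΛL)
    (hΛK : IsIdempotentIntegral k H K ΛK) {C D : Submodule k H} (hC : IsSubcoalgebra k H C)
    (hC₀ : C ≠ ⊥)
    (hCD : Submodule.span k {ΛL} * C * Submodule.span k {ΛK} =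
      Submodule.span k {ΛL} * D * Submodule.span k {ΛK}) :
    L.toSubmodule * C * K.toSubmodule ⊓ L.toSubmodule * D * K.toSubmodule ≠ ⊥ := by
  have hspan_le (E : Submodule k H) : Submodule.span k {ΛL} * E * Submodule.span k {ΛK} ≤
      L.toSubmodule * E * K.toSubmodule :=
    mul_le_mul' (mul_le_mul' (by simpa using hΛL.1) le_rfl) (by simpa using hΛK.1)
  obtain ⟨c, hc, hc₀⟩ := hC.exists_counit_ne_zero hC₀
  have hmem : ΛL * c * ΛK ∈ Submodule.span k {ΛL} * C * Submodule.span k {ΛK} :=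
    Submodule.mul_mem_mul (Submodule.mul_mem_mul (Submodule.mem_span_singleton_self _) hc)
      (Submodule.mem_span_singleton_self _)
  refine (Submodule.ne_bot_iff _).2 ⟨_, ⟨hspan_le C hmem, hspan_le D (hCD ▸ hmem)⟩, fun h => hc₀ ?_⟩
  simpa [hΛL.2.1, hΛK.2.1] using congrArg (counit (R := k)) h

theorem mul_mul_eq_of_inf_ne_bot [FiniteDimensional k H] (hL : IsSubcoalgebra k H L.toSubmodule)
    (hK : IsSubcoalgebra k H K.toSubmodule) {C D : Submodule k H} (hC : IsSimpleSubcoalgebra k H C)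
    (hD : IsSimpleSubcoalgebra k H D)
    (hCD : L.toSubmodule * C * K.toSubmodule ⊓ L.toSubmodule * D * K.toSubmodule ≠ ⊥) :
    L.toSubmodule * C * K.toSubmodule = L.toSubmodule * D * K.toSubmodule := by
  have hB := ((hL.mul hC.1).mul hK).inf ((hL.mul hD.1).mul hK)
  have hCB := hC.le_mul_mul_of_le_mul_mul hL hK hB hCD inf_le_left
  have hDB := hD.le_mul_mul_of_le_mul_mul hL hK hB hCD inf_le_right
  exact le_antisymm (mul_mul_le_of_le (hCB.trans (mul_mul_le_of_le inf_le_right)))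
    (mul_mul_le_of_le (hDB.trans (mul_mul_le_of_le inf_le_left)))

theorem statement_3_general [FiniteDimensional k H] (hL : IsSubcoalgebra k H L.toSubmodule)
    (hK : IsSubcoalgebra k H K.toSubmodule) (hΛL : IsIdempotentIntegral k H L ΛL)
    (hΛK : IsIdempotentIntegral k H K ΛK) {C D : Submodule k H} (hC : IsSimpleSubcoalgebra k H C)
    (hD : IsSimpleSubcoalgebra k H D) :
    (C ≤ L.toSubmodule * D * K.toSubmodule ↔
      L.toSubmodule * C * K.toSubmodule = L.toSubmodule * D * K.toSubmodule) ∧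
    (L.toSubmodule * C * K.toSubmodule = L.toSubmodule * D * K.toSubmodule ↔
      Submodule.span k {ΛL} * C * Submodule.span k {ΛK} =
        Submodule.span k {ΛL} * D * Submodule.span k {ΛK}) := by
  refine ⟨⟨fun h => ?_, fun h => h ▸ le_mul_mul L K C⟩, fun h => ?_, fun h => ?_⟩
  · exact le_antisymm (mul_mul_le_of_le h)
      (mul_mul_le_of_le (hD.le_mul_mul_of_le_mul_mul hL hK hC.1 hC.2.1 h))
  · rw [← span_mul_mul_mul_span hΛL hΛK C, h, span_mul_mul_mul_span hΛL hΛK D]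
  · exact mul_mul_eq_of_inf_ne_bot hL hK hC hD
      (mul_mul_inf_mul_mul_ne_bot hΛL hΛK hC.1 hC.2.1 h)

end DoubleCosets

section Statements

variable [FiniteDimensional k H] [IsSemisimpleRing H]

/-- Proposition 10: for Hopf subalgebras `L, K` of the
semisimple Hopf algebra `H` and simple subcoalgebras `C, D` of `H`, the
following are equivalent: (1) `C ⊆ LDK`; (2) `LCK = LDK`;
(3) `Λ_L·C·Λ_K = Λ_L·D·Λ_K` as subspaces of `H`. -/
theorem statement_3 (L K : Subalgebra k H)
    (hL : IsHopfSubalgebra k H L) (hK : IsHopfSubalgebra k H K)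
    (ΛL ΛK : H) (hΛL : IsIdempotentIntegral k H L ΛL)
    (hΛK : IsIdempotentIntegral k H K ΛK)
    (C D : Submodule k H) (hC : IsSimpleSubcoalgebra k H C)
    (hD : IsSimpleSubcoalgebra k H D) :
    (C ≤ L.toSubmodule * D * K.toSubmodule ↔
      L.toSubmodule * C * K.toSubmodule = L.toSubmodule * D * K.toSubmodule) ∧
    (L.toSubmodule * C * K.toSubmodule = L.toSubmodule * D * K.toSubmodule ↔
      Submodule.span k {ΛL} * C * Submodule.span k {ΛK} =
        Submodule.span k {ΛL} * D * Submodule.span k {ΛK}) := by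
  exact statement_3_general hL.1 hK.1 hΛL hΛK hC hD

end Statements

end

end MackeyPaper
end

section
/- Let C be a subcoalgebra of H with associated character d ∈ C(H*). Then the principal eigenspace of the operator L_d (the eigenspace of L_d for its Frobenius–Perron eigenvalue ε(d)) coincides with the principal eigenspace of L_{Λ_{⟨d⟩}}, where ⟨d⟩ is the Hopf subalgebra of H generated by C; the latter eigenspace equals Λ_{⟨d⟩}·C(H*). -/
open TensorProduct

namespace MackeyPaper

noncomputable section

universe v

variable (k : Type) [Field k] [CharZero k] [IsAlgClosed k]
variable (H : Type) [Ring H] [HopfAlgebra k H]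

open DirectSum

section Statements

variable [FiniteDimensional k H] [IsSemisimpleRing H]

/-- `d` is the character associated to the (not necessarily simple)
subcoalgebra `C`: the sum of the irreducible `H^*`-characters of the simple
subcoalgebras of `C`. -/
def IsAssocCharacter (d : H) (C : Submodule k H) : Prop :=
  ∃ (s : Finset (Submodule k H)) (f : Submodule k H → H),
    (∀ D ∈ s, IsSimpleSubcoalgebra k H D ∧ D ≤ C ∧ IsCharacterOf k H (f D) D) ∧
    (∀ D : Submodule k H, IsSimpleSubcoalgebra k H D → D ≤ C → D ∈ s) ∧
    d = ∑ D ∈ s, f D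

end Statements

end

end MackeyPaper

/-!
In a semisimple Hopf algebra `H` in characteristic zero the antipode satisfies `S² = id`
(Larson–Radford): the functional `λ(x) = Tr(L_x ∘ S²)` is an integral of `H*`, so `(a, b) ↦ λ(ab)`
is a Frobenius form. Comparing it with the traces of the blocks of `H` expresses `λ(1)` through sums
of roots of unity, and the vanishing of `∑ⱼ |tr uⱼ|²` would force all these sums to vanish; hence
`λ(1) ≠ 0` and `S⁴ = id`. The eigenspaces of the involution `S²` are then compared by divisibility
of traces, which leaves only `S² = id`.

If `S² = id`, then `(dim A) Λ_A` is the regular character of the Hopf subalgebra `A`, and `H*` is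
semisimple, so that cocommutative elements are combinations of irreducible characters. For an
idempotent `e` of `H*` and a character `χ`, the number `e(χ)` is the rank of a projection, hence a
natural number. Since `Λ` lies in the coefficient space of the character `(1 + d)^j` for large `j`,
the element `q = K (1 + d)^j - (dim A) Λ` has natural coefficients for large `K`. If `d y = ε(d) y`
and `Λ y = 0`, then `q y = (ε(q) + dim A) y`, which exceeds the Frobenius–Perron eigenvalue of `q`,
so `y = 0`. The theorem follows by applying this to `y - Λ y`.
-/

namespace MackeyPaper

noncomputable section

open Coalgebra HopfAlgebra WithConv

section Hit

variable {k : Type*} [Field k]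

theorem eq_of_forall_dual_apply_eq {V : Type*} [AddCommGroup V] [Module k V] {x y : V}
    (h : ∀ f : V →ₗ[k] k, f x = f y) : x = y :=
  Module.eval_apply_injective k (LinearMap.ext h)

variable {C : Type*} [AddCommGroup C] [Module k C] [Coalgebra k C]

/-- The convolution algebra `C^*`. -/
abbrev ConvDual (k C : Type*) [Field k] [AddCommGroup C] [Module k C] [Coalgebra k C] :=
  WithConv (C →ₗ[k] k)

/-- The left action `f ⇀ y = y₁ f(y₂)` of functionals on a coalgebra. -/
def leftHit : (C →ₗ[k] k) →ₗ[k] Module.End k C where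
  toFun f := (TensorProduct.rid k C).toLinearMap ∘ₗ f.lTensor C ∘ₗ comul
  map_add' f g := by ext; simp [LinearMap.lTensor_add]
  map_smul' c f := by ext; simp [LinearMap.lTensor_smul]

/-- The right action `y ↼ f = f(y₁) y₂` of functionals on a coalgebra. -/
def rightHit : (C →ₗ[k] k) →ₗ[k] Module.End k C where
  toFun f := (TensorProduct.lid k C).toLinearMap ∘ₗ f.rTensor C ∘ₗ comul
  map_add' f g := by ext; simp [LinearMap.rTensor_add]
  map_smul' c f := by ext; simp [LinearMap.rTensor_smul]

variable {ι : Type*} {y : C}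

theorem leftHit_apply (f : C →ₗ[k] k) (r : Repr k y ι) :
    leftHit f y = ∑ i ∈ r.index, f (r.right i) • r.left i := by
  simp [leftHit, ← r.eq]

theorem rightHit_apply (f : C →ₗ[k] k) (r : Repr k y ι) :
    rightHit f y = ∑ i ∈ r.index, f (r.left i) • r.right i := by
  simp [rightHit, ← r.eq]

theorem apply_leftHit (f g : C →ₗ[k] k) (y : C) :
    f (leftHit g y) = (toConv f * toConv g).ofConv y := by
  rw [leftHit_apply g (ℛ k y), (ℛ k y).convMul_apply]
  simp [mul_comm]

theorem apply_rightHit (f g : C →ₗ[k] k) (y : C) :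
    f (rightHit g y) = (toConv g * toConv f).ofConv y := by
  rw [rightHit_apply g (ℛ k y), (ℛ k y).convMul_apply]
  simp

theorem leftHit_mul (f g : ConvDual k C) :
    leftHit (f * g).ofConv = leftHit f.ofConv * leftHit g.ofConv :=
  LinearMap.ext fun y => eq_of_forall_dual_apply_eq (k := k) fun u => by
    rw [apply_leftHit, Module.End.mul_apply, apply_leftHit, toConv_ofConv, ← mul_assoc,
      ← toConv_ofConv (toConv u * f), ← apply_leftHit]

theorem rightHit_mul (f g : ConvDual k C) :
    rightHit (f * g).ofConv = rightHit g.ofConv * rightHit f.ofConv :=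
  LinearMap.ext fun y => eq_of_forall_dual_apply_eq (k := k) fun u => by
    rw [apply_rightHit, Module.End.mul_apply, apply_rightHit, toConv_ofConv, mul_assoc,
      ← toConv_ofConv (g * toConv u), ← apply_rightHit]

theorem leftHit_counit : leftHit (counit : C →ₗ[k] k) = 1 :=
  LinearMap.ext fun y => eq_of_forall_dual_apply_eq (k := k) fun u => by
    rw [apply_leftHit]
    exact congr(($(mul_one (toConv u))).ofConv y)

theorem rightHit_counit : rightHit (counit : C →ₗ[k] k) = 1 :=
  LinearMap.ext fun y => eq_of_forall_dual_apply_eq (k := k) fun u => by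
    rw [apply_rightHit]
    exact congr(($(one_mul (toConv u))).ofConv y)

/-- The left action `⇀` as an algebra homomorphism from the convolution algebra. -/
def leftHitAlgHom (k C : Type*) [Field k] [AddCommGroup C] [Module k C] [Coalgebra k C] :
    ConvDual k C →ₐ[k] Module.End k C :=
  AlgHom.ofLinearMap (leftHit ∘ₗ (WithConv.linearEquiv k (C →ₗ[k] k)).toLinearMap)
    leftHit_counit leftHit_mul

theorem tensor_ext {V W : Type*} [AddCommGroup V] [Module k V] [AddCommGroup W] [Module k W]
    {s t : V ⊗[k] W}
    (h : ∀ (f : V →ₗ[k] k) (g : W →ₗ[k] k),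
      LinearMap.mul' k k (TensorProduct.map f g s) = LinearMap.mul' k k (TensorProduct.map f g t)) :
    s = t := by
  let b := Module.Basis.ofVectorSpace k V
  let c := Module.Basis.ofVectorSpace k W
  have repr_eq (u : V ⊗[k] W) (i j) : (b.tensorProduct c).repr u (i, j) =
      LinearMap.mul' k k (TensorProduct.map (b.coord i) (c.coord j) u) := by
    induction u with
    | zero => simp
    | tmul x y => simp [mul_comm]
    | add x y hx hy => simp [hx, hy]
  exact (b.tensorProduct c).ext_elem fun ⟨i, j⟩ => by rw [repr_eq, repr_eq, h]

end Hit

section Antipode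

variable {k : Type*} [Field k] {H : Type*} [Ring H] [HopfAlgebra k H]

theorem toConv_comp_antipode_mul_toConv {B : Type*} [Ring B] [Algebra k B] (f : H →ₐ[k] B) :
    toConv (f.toLinearMap ∘ₗ antipode k) * toConv f.toLinearMap = 1 := by
  ext x
  rw [(ℛ k x).convMul_apply]
  simp [← map_mul, ← map_sum, sum_antipode_mul_eq_algebraMap_counit]

theorem comul_antipode (x : H) :
    comul (R := k) (antipode k x) =
      TensorProduct.map (antipode k) (antipode k) (TensorProduct.comm k H H (comul x)) := by
  let iL : H →ₐ[k] H ⊗[k] H := Algebra.TensorProduct.includeLeft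
  let iR : H →ₐ[k] H ⊗[k] H := Algebra.TensorProduct.includeRight
  have antipode_eq : toConv (TensorProduct.map (antipode k (A := H)) (antipode k (A := H)) ∘ₗ
      (TensorProduct.comm k H H).toLinearMap ∘ₗ comul) =
      toConv (iR.toLinearMap ∘ₗ antipode k) * toConv (iL.toLinearMap ∘ₗ antipode k) := by
    ext x
    rw [(ℛ k x).convMul_apply]
    simp [← (ℛ k x).eq, iL, iR]
  have comul_eq : toConv (comul (R := k) (A := H)) =
      toConv iL.toLinearMap * toConv iR.toLinearMap := by
    ext x
    rw [(ℛ k x).convMul_apply]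
    simp [← (ℛ k x).eq, iL, iR]
  have left_inv : toConv (TensorProduct.map (antipode k (A := H)) (antipode k (A := H)) ∘ₗ
      (TensorProduct.comm k H H).toLinearMap ∘ₗ comul) * toConv (comul (R := k) (A := H)) = 1 := by
    rw [antipode_eq, comul_eq, mul_assoc, ← mul_assoc (toConv (iL.toLinearMap ∘ₗ _)),
      toConv_comp_antipode_mul_toConv, one_mul, toConv_comp_antipode_mul_toConv]
  exact congr(($(left_inv_eq_right_inv left_inv LinearMap.comul_right_inv)).ofConv x).symm

theorem convMul_apply_antipode (f g : H →ₗ[k] k) (x : H) :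
    (toConv f * toConv g).ofConv (antipode k x) =
      (toConv (g ∘ₗ antipode k) * toConv (f ∘ₗ antipode k)).ofConv x := by
  simp only [LinearMap.convMul_apply, comul_antipode, ← (ℛ k x).eq]
  simp [mul_comm]

theorem leftHit_antipode (f : H →ₗ[k] k) (x : H) :
    leftHit f (antipode k x) = antipode k (rightHit (f ∘ₗ antipode k) x) :=
  eq_of_forall_dual_apply_eq (k := k) fun u => by
    rw [apply_leftHit, convMul_apply_antipode, ← apply_rightHit]
    rfl

theorem rightHit_antipode (f : H →ₗ[k] k) (x : H) :
    rightHit f (antipode k x) = antipode k (leftHit (f ∘ₗ antipode k) x) :=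
  eq_of_forall_dual_apply_eq (k := k) fun u => by
    rw [apply_rightHit, convMul_apply_antipode, ← apply_leftHit]
    rfl

/-- The square of the antipode, as an algebra endomorphism. -/
def sqAntipode (k H : Type*) [Field k] [Ring H] [HopfAlgebra k H] : H →ₐ[k] H :=
  AlgHom.ofLinearMap (antipode k ∘ₗ antipode k) (by simp)
    (by simp [antipode_mul_antidistrib])

theorem sqAntipode_apply (x : H) : sqAntipode k H x = antipode k (antipode k x) := rfl

theorem rightHit_sqAntipode (f : H →ₗ[k] k) (x : H) :
    rightHit f (sqAntipode k H x) =
      sqAntipode k H (rightHit (f ∘ₗ (sqAntipode k H).toLinearMap) x) := by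
  rw [sqAntipode_apply, rightHit_antipode, leftHit_antipode]
  rfl

theorem leftHit_sqAntipode (f : H →ₗ[k] k) (x : H) :
    leftHit f (sqAntipode k H x) =
      sqAntipode k H (leftHit (f ∘ₗ (sqAntipode k H).toLinearMap) x) := by
  rw [sqAntipode_apply, leftHit_antipode, rightHit_antipode]
  rfl

end Antipode

section TraceIntegral

variable {k : Type*} [Field k] {H : Type*} [Ring H] [HopfAlgebra k H]

/-- The functional `x ↦ Tr(L_x ∘ S²)` on `H`, an integral of the dual Hopf algebra. -/
def traceIntegral (k H : Type*) [Field k] [Ring H] [HopfAlgebra k H] : H →ₗ[k] k :=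
  LinearMap.trace k H ∘ₗ LinearMap.mulRight k (sqAntipode k H).toLinearMap ∘ₗ LinearMap.mul k H

theorem traceIntegral_apply (x : H) : traceIntegral k H x =
    LinearMap.trace k H (LinearMap.mulLeft k x * (sqAntipode k H).toLinearMap) := rfl

theorem traceIntegral_mul (a b : H) :
    traceIntegral k H (a * b) = traceIntegral k H (b * sqAntipode k H a) := by
  have left : LinearMap.mulLeft k (a * b) * (sqAntipode k H).toLinearMap =
      LinearMap.mulLeft k a * (LinearMap.mulLeft k b * (sqAntipode k H).toLinearMap) := by
    ext; simp
  have right : LinearMap.mulLeft k (b * sqAntipode k H a) * (sqAntipode k H).toLinearMap =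
      (LinearMap.mulLeft k b * (sqAntipode k H).toLinearMap) * LinearMap.mulLeft k a := by
    ext; simp [mul_assoc]
  rw [traceIntegral_apply, traceIntegral_apply, left, right, LinearMap.trace_mul_comm]

theorem rightHit_mul_mulLeft {ι : Type*} (f : H →ₗ[k] k) {x : H} (r : Repr k x ι) :
    rightHit f * LinearMap.mulLeft k x = ∑ i ∈ r.index,
      LinearMap.mulLeft k (r.right i) * rightHit (f ∘ₗ LinearMap.mulLeft k (r.left i)) := by
  ext z
  simp only [LinearMap.sum_apply, Module.End.mul_apply, rightHit_apply _ (ℛ k z)]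
  simp only [rightHit, LinearMap.coe_mk, AddHom.coe_mk, LinearMap.comp_apply,
    LinearMap.mulLeft_apply, Bialgebra.comul_mul, ← r.eq, ← (ℛ k z).eq]
  simp [Finset.sum_mul, Finset.mul_sum, Finset.sum_comm (s := r.index)]

theorem rightHit_mul_mulLeft_mul_sqAntipode {ι : Type*} (f : H →ₗ[k] k) {x : H} (r : Repr k x ι) :
    rightHit f * (LinearMap.mulLeft k x * (sqAntipode k H).toLinearMap) = ∑ i ∈ r.index,
      LinearMap.mulLeft k (r.right i) * (sqAntipode k H).toLinearMap *
        rightHit (f ∘ₗ LinearMap.mulLeft k (r.left i) ∘ₗ (sqAntipode k H).toLinearMap) := by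
  rw [← mul_assoc, rightHit_mul_mulLeft f r, Finset.sum_mul]
  refine Finset.sum_congr rfl fun i _ => ?_
  rw [mul_assoc, mul_assoc]
  exact congr(LinearMap.mulLeft k (r.right i) * $(LinearMap.ext (rightHit_sqAntipode _)))

section Basis

variable {ι : Type*} [Fintype ι] (b : Module.Basis ι k H) (g : H →ₗ[k] k)

theorem sum_coord_mul_apply_basis_mul (a c : H) :
    ∑ j, b.coord j a * g (b j * c) = g (a * c) := by
  conv_rhs => rw [← b.sum_repr a, Finset.sum_mul, map_sum]
  simp

theorem sum_coord_mul_comp_antipode :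
    ∑ j, toConv (b.coord j) * toConv (g ∘ₗ LinearMap.mulLeft k (b j) ∘ₗ antipode k) =
      g 1 • (1 : ConvDual k H) := by
  ext w
  calc _ = ∑ t ∈ (ℛ k w).index, ∑ j, b.coord j ((ℛ k w).left t) *
          g (b j * antipode k ((ℛ k w).right t)) := by
        simp only [ofConv_sum, LinearMap.sum_apply, (ℛ k w).convMul_apply]
        exact Finset.sum_comm
    _ = g (∑ t ∈ (ℛ k w).index, (ℛ k w).left t * antipode k ((ℛ k w).right t)) := by
        simp only [sum_coord_mul_apply_basis_mul, map_sum]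
    _ = _ := by
        simp [sum_mul_antipode_eq_smul, mul_comm]

theorem sum_sqAntipode_mul_antipode {κ : Type*} {w : H} (r : Repr k w κ) :
    ∑ t ∈ r.index, sqAntipode k H (r.right t) * antipode k (r.left t) =
      counit (R := k) w • 1 := by
  simp only [sqAntipode_apply, ← antipode_mul_antidistrib, ← map_sum, sum_mul_antipode_eq_smul r]
  simp

theorem sum_comp_antipode_mul_coord_comp (a : H) :
    ∑ j, toConv (g ∘ₗ LinearMap.mulLeft k (b j) ∘ₗ antipode k) *
        toConv (b.coord j ∘ₗ LinearMap.mulLeft k a ∘ₗ (sqAntipode k H).toLinearMap) =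
      g a • (1 : ConvDual k H) := by
  ext w
  calc _ = ∑ t ∈ (ℛ k w).index, ∑ j, b.coord j (a * sqAntipode k H ((ℛ k w).right t)) *
          g (b j * antipode k ((ℛ k w).left t)) := by
        simp only [ofConv_sum, LinearMap.sum_apply, (ℛ k w).convMul_apply]
        rw [Finset.sum_comm]
        exact Finset.sum_congr rfl fun t _ => Finset.sum_congr rfl fun j _ => mul_comm _ _
    _ = g (a * ∑ t ∈ (ℛ k w).index,
          sqAntipode k H ((ℛ k w).right t) * antipode k ((ℛ k w).left t)) := by
        simp only [sum_coord_mul_apply_basis_mul, Finset.mul_sum, map_sum, mul_assoc]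
    _ = _ := by
        simp [sum_sqAntipode_mul_antipode, mul_comm]

theorem sum_rightHit_coord_mul_mulLeft_mul_sqAntipode (x : H) :
    ∑ j, rightHit (b.coord j) * (LinearMap.mulLeft k x * (sqAntipode k H).toLinearMap) *
        rightHit (g ∘ₗ LinearMap.mulLeft k (b j) ∘ₗ antipode k) =
      LinearMap.mulLeft k (rightHit g x) * (sqAntipode k H).toLinearMap := by
  simp only [rightHit_mul_mulLeft_mul_sqAntipode _ (ℛ k x), Finset.sum_mul, mul_assoc]
  rw [Finset.sum_comm]
  have sum_rightHit (a : H) :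
      ∑ j, rightHit (b.coord j ∘ₗ LinearMap.mulLeft k a ∘ₗ (sqAntipode k H).toLinearMap) *
        rightHit (g ∘ₗ LinearMap.mulLeft k (b j) ∘ₗ antipode k) = g a • 1 := by
    rw [← rightHit_counit, ← map_smul]
    refine Eq.trans ?_ congr(rightHit ($(sum_comp_antipode_mul_coord_comp b g a)).ofConv)
    simp only [ofConv_sum, map_sum, rightHit_mul]
  simp only [← Finset.mul_sum, sum_rightHit, rightHit_apply g (ℛ k x)]
  ext y
  simp [Finset.sum_mul]

end Basis

variable [FiniteDimensional k H]

theorem traceIntegral_rightHit (g : H →ₗ[k] k) (x : H) :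
    traceIntegral k H (rightHit g x) = g 1 * traceIntegral k H x := by
  let b := Module.finBasis k H
  let h j := g ∘ₗ LinearMap.mulLeft k (b j) ∘ₗ antipode k
  let T := LinearMap.mulLeft k x * (sqAntipode k H).toLinearMap
  calc traceIntegral k H (rightHit g x)
      = ∑ j, LinearMap.trace k H (rightHit (b.coord j) * T * rightHit (h j)) := by
        rw [traceIntegral_apply, ← sum_rightHit_coord_mul_mulLeft_mul_sqAntipode b, map_sum]
    _ = ∑ j, LinearMap.trace k H (T * rightHit (toConv (b.coord j) * toConv (h j)).ofConv) := by
        refine Finset.sum_congr rfl fun j _ => ?_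
        rw [rightHit_mul, LinearMap.trace_mul_comm, ← mul_assoc, LinearMap.trace_mul_comm]
    _ = LinearMap.trace k H (T * rightHit (g 1 • (1 : ConvDual k H)).ofConv) := by
        rw [← sum_coord_mul_comp_antipode b, ofConv_sum, map_sum, Finset.mul_sum, map_sum]
    _ = g 1 * traceIntegral k H x := by
        rw [ofConv_smul, map_smul, show (1 : ConvDual k H).ofConv = counit from rfl,
          rightHit_counit, mul_smul_comm, mul_one, map_smul, smul_eq_mul]
        rfl

theorem leftHit_traceIntegral (x : H) :
    leftHit (traceIntegral k H) x = traceIntegral k H x • (1 : H) :=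
  eq_of_forall_dual_apply_eq (k := k) fun u => by
    rw [apply_leftHit, ← apply_rightHit, traceIntegral_rightHit, map_smul, smul_eq_mul, mul_comm]

end TraceIntegral

section Integral

theorem exists_apply_eq_one_and_mul_eq_smul {k R : Type*} [CommRing k] [Ring R] [Algebra k R]
    [IsSemisimpleRing R] (ε : R →ₐ[k] k) : ∃ e : R, ε e = 1 ∧ ∀ x, x * e = ε x • e := by
  obtain ⟨J, hJ⟩ := exists_isCompl (RingHom.ker ε)
  obtain ⟨i, hi, e, he, hie⟩ := Submodule.mem_sup.1
    (show (1 : R) ∈ RingHom.ker ε ⊔ J by rw [hJ.sup_eq_top]; trivial)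
  have apply_e : ε e = 1 := by
    simpa [RingHom.mem_ker.1 hi] using congr(ε $hie)
  refine ⟨e, apply_e, fun x => sub_eq_zero.1 ?_⟩
  refine Submodule.disjoint_def.1 hJ.disjoint _ ?_ (J.sub_mem (J.smul_mem x he) ?_)
  · simp [RingHom.mem_ker, apply_e]
  · rw [Algebra.smul_def]
    exact J.smul_mem _ he

/-- A two-sided integral `Λ` of `H`, normalized by `ε(Λ) = 1`. -/
structure IsNormalizedIntegral (k : Type*) {H : Type*} [Field k] [Ring H] [HopfAlgebra k H]
    (Λ : H) : Prop where
  counit_eq_one : counit (R := k) Λ = 1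
  mul_eq : ∀ x, Λ * x = counit (R := k) x • Λ
  eq_mul : ∀ x, x * Λ = counit (R := k) x • Λ

theorem exists_isNormalizedIntegral (k H : Type*) [Field k] [Ring H] [HopfAlgebra k H]
    [IsSemisimpleRing H] : ∃ Λ : H, IsNormalizedIntegral k Λ := by
  obtain ⟨e, counit_e, mul_e⟩ :=
    exists_apply_eq_one_and_mul_eq_smul (Bialgebra.counitAlgHom k H)
  obtain ⟨f, counit_f, mul_f⟩ := exists_apply_eq_one_and_mul_eq_smul
    ((Bialgebra.counitAlgHom k H).fromOpposite fun x y => Commute.all _ _)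
  have f_mul (x : H) : f.unop * x = counit (R := k) x • f.unop :=
    congr(MulOpposite.unop $(mul_f (MulOpposite.op x)))
  have f_eq_e : f.unop = e := by
    calc f.unop = counit (R := k) e • f.unop := by
          rw [show counit (R := k) e = 1 from counit_e, one_smul]
      _ = f.unop * e := (f_mul e).symm
      _ = e := (mul_e f.unop).trans
          (by rw [show Bialgebra.counitAlgHom k H f.unop = 1 from counit_f, one_smul])
  exact ⟨e, counit_e, f_eq_e ▸ f_mul, mul_e⟩

variable {k : Type*} [Field k] {H : Type*} [Ring H] [HopfAlgebra k H]

/-- The bilinear form `(c, x) ↦ μ(xc)` attached to a functional `μ`. -/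
def mulPairing (μ : H →ₗ[k] k) : H →ₗ[k] H →ₗ[k] k :=
  LinearMap.llcomp k H H k μ ∘ₗ (LinearMap.mul k H).flip

theorem mulPairing_apply (μ : H →ₗ[k] k) (c x : H) : mulPairing μ c x = μ (x * c) := rfl

theorem sum_leftHit_mulPairing_mul {ι : Type*} (μ : H →ₗ[k] k) (Λ : H) {x : H} (r : Repr k x ι) :
    ∑ i ∈ r.index, leftHit (mulPairing μ (r.right i)) Λ * r.left i = leftHit μ (Λ * x) := by
  simp only [leftHit_apply _ (ℛ k Λ)]
  simp only [leftHit, LinearMap.coe_mk, AddHom.coe_mk, LinearMap.comp_apply, Bialgebra.comul_mul,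
    ← r.eq, ← (ℛ k Λ).eq]
  simp [mulPairing_apply, Finset.sum_mul, Finset.mul_sum]

namespace IsNormalizedIntegral

variable {Λ : H} (hΛ : IsNormalizedIntegral k Λ)
include hΛ

theorem antipode_leftHit_mulPairing (μ : H →ₗ[k] k) (c : H) :
    antipode k (leftHit (mulPairing μ c) Λ) = c * antipode k (leftHit μ Λ) := by
  let Φ : H →ₗ[k] H := antipode k ∘ₗ leftHit.flip Λ ∘ₗ mulPairing μ
  let Ψ : H →ₗ[k] H := LinearMap.toSpanSingleton k H (antipode k (leftHit μ Λ)) ∘ₗ counit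
  have antipode_mul_Φ : toConv (antipode k (A := H)) * toConv Φ = toConv Ψ := by
    ext x
    rw [(ℛ k x).convMul_apply]
    simp only [Φ, Ψ, LinearMap.comp_apply, LinearMap.flip_apply, ← antipode_mul_antidistrib,
      ← map_sum, sum_leftHit_mulPairing_mul, hΛ.mul_eq]
    simp
  have Φ_eq : toConv Φ = toConv LinearMap.id * toConv Ψ := by
    rw [← antipode_mul_Φ, ← mul_assoc, LinearMap.id_mul_antipode, one_mul]
  have c_eq := congr($(leftHit_counit (k := k) (C := H)) c)
  rw [leftHit_apply _ (ℛ k c), Module.End.one_apply] at c_eq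
  calc antipode k (leftHit (mulPairing μ c) Λ) = (toConv LinearMap.id * toConv Ψ).ofConv c := by
        rw [← Φ_eq]
        rfl
    _ = (∑ i ∈ (ℛ k c).index, counit (R := k) ((ℛ k c).right i) • (ℛ k c).left i) *
          antipode k (leftHit μ Λ) := by
        rw [(ℛ k c).convMul_apply]
        simp [Ψ, Finset.sum_mul]
    _ = c * antipode k (leftHit μ Λ) := by rw [c_eq]

variable [FiniteDimensional k H]

theorem traceIntegral_eq_one : traceIntegral k H Λ = 1 := by
  have rank_one : LinearMap.mulLeft k Λ * (sqAntipode k H).toLinearMap =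
      LinearMap.toSpanSingleton k H Λ ∘ₗ counit := by
    ext y
    simp [hΛ.mul_eq, sqAntipode_apply]
  rw [traceIntegral_apply, rank_one, LinearMap.trace_comp_comm']
  have : (counit : H →ₗ[k] k) ∘ₗ LinearMap.toSpanSingleton k H Λ = LinearMap.id := by
    ext
    simp [hΛ.counit_eq_one]
  rw [this, LinearMap.trace_id, Module.finrank_self, Nat.cast_one]

theorem antipode_leftHit_mulPairing_traceIntegral (c : H) :
    antipode k (leftHit (mulPairing (traceIntegral k H) c) Λ) = c := by
  rw [hΛ.antipode_leftHit_mulPairing, leftHit_traceIntegral, hΛ.traceIntegral_eq_one, one_smul,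
    antipode_one, mul_one]

theorem antipode_bijective : Function.Bijective (antipode k (A := H)) := by
  have surjective : Function.Surjective (antipode k (A := H)) :=
    fun x => ⟨_, hΛ.antipode_leftHit_mulPairing_traceIntegral x⟩
  exact ⟨LinearMap.injective_iff_surjective.2 surjective, surjective⟩

theorem mulPairing_traceIntegral_bijective :
    Function.Bijective (mulPairing (traceIntegral k H)) := by
  have injective : Function.Injective (mulPairing (traceIntegral k H)) := fun v w h => by
    rw [← hΛ.antipode_leftHit_mulPairing_traceIntegral v, h,
      hΛ.antipode_leftHit_mulPairing_traceIntegral]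
  exact ⟨injective, (LinearMap.injective_iff_surjective_of_finrank_eq_finrank
    Subspace.dual_finrank_eq.symm).1 injective⟩

theorem eq_smul_traceIntegral {ν : H →ₗ[k] k} (hν : ∀ x, leftHit ν x = ν x • (1 : H)) :
    ν = ν Λ • traceIntegral k H := by
  obtain ⟨w, rfl⟩ := hΛ.mulPairing_traceIntegral_bijective.2 ν
  have w_eq := hΛ.antipode_leftHit_mulPairing_traceIntegral w
  rw [hν, map_smul, antipode_one] at w_eq
  ext x
  conv_lhs => rw [mulPairing_apply, ← w_eq]
  simp

end IsNormalizedIntegral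

/-- The modular group-like element `Λ ↼ λ` of `H`, where `λ` is the trace integral. -/
def modular (k : Type*) {H : Type*} [Field k] [Ring H] [HopfAlgebra k H] (Λ : H) : H :=
  rightHit (traceIntegral k H) Λ

theorem rightHit_mul_of_isGroupLikeElem {γ : H} (hγ : IsGroupLikeElem k γ) (f : H →ₗ[k] k)
    (x : H) : rightHit f (x * γ) = rightHit (mulPairing f γ) x * γ := by
  rw [rightHit_apply _ (ℛ k x)]
  simp only [rightHit, LinearMap.coe_mk, AddHom.coe_mk, LinearMap.comp_apply, Bialgebra.comul_mul,
    hγ.comul_eq_tmul_self, ← (ℛ k x).eq]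
  simp [mulPairing_apply, Finset.sum_mul]

namespace IsNormalizedIntegral

variable [FiniteDimensional k H] {Λ : H} (hΛ : IsNormalizedIntegral k Λ)
include hΛ

theorem traceIntegral_convMul (f : H →ₗ[k] k) :
    toConv (traceIntegral k H) * toConv f = f (modular k Λ) • toConv (traceIntegral k H) := by
  have := hΛ.eq_smul_traceIntegral (ν := (toConv (traceIntegral k H) * toConv f).ofConv)
    fun x => by
      rw [leftHit_mul, Module.End.mul_apply, ofConv_toConv, ofConv_toConv, leftHit_traceIntegral,
        apply_leftHit]
  rw [← apply_rightHit] at this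
  exact congr(toConv $this)

theorem rightHit_traceIntegral (x : H) :
    rightHit (traceIntegral k H) x = traceIntegral k H x • modular k Λ :=
  eq_of_forall_dual_apply_eq (k := k) fun u => by
    rw [apply_rightHit, hΛ.traceIntegral_convMul]
    simp [mul_comm]

theorem isGroupLikeElem_modular : IsGroupLikeElem k (modular k Λ) where
  counit_eq_one := by
    rw [modular, apply_rightHit, ← hΛ.traceIntegral_eq_one]
    exact congr(($(mul_one (toConv (traceIntegral k H)))).ofConv Λ)
  comul_eq_tmul_self := tensor_ext fun f g => by
    have mul_fg := hΛ.traceIntegral_convMul (toConv f * toConv g).ofConv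
    rw [toConv_ofConv, ← mul_assoc, hΛ.traceIntegral_convMul f, smul_mul_assoc,
      hΛ.traceIntegral_convMul g] at mul_fg
    simpa [hΛ.traceIntegral_eq_one] using congr(($mul_fg).ofConv Λ).symm

theorem exists_modular_pow_eq_one : ∃ m, 0 < m ∧ modular k Λ ^ m = 1 := by
  have : Finite (GroupLike k H) := linearIndep_groupLikeVal.finite
  let γ : GroupLike k H := ⟨modular k Λ, hΛ.isGroupLikeElem_modular⟩
  exact ⟨Nat.card (GroupLike k H), Nat.card_pos, congr(GroupLike.val $(pow_card_eq_one' (x := γ)))⟩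

theorem rightHit_mulPairing_traceIntegral_modular (x : H) :
    rightHit (mulPairing (traceIntegral k H) (modular k Λ)) x =
      traceIntegral k H (x * modular k Λ) • (1 : H) := by
  have hγ := hΛ.isGroupLikeElem_modular
  have := congr($(hΛ.rightHit_traceIntegral (x * modular k Λ)) * antipode k (modular k Λ))
  rwa [rightHit_mul_of_isGroupLikeElem hγ, mul_assoc, hγ.mul_antipode_cancel, mul_one,
    smul_mul_assoc, hγ.mul_antipode_cancel] at this

theorem exists_traceIntegral_antipode_mul_modular :
    ∃ c : k, c ≠ 0 ∧
      ∀ x, traceIntegral k H (antipode k x * modular k Λ) = c * traceIntegral k H x := by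
  set κ := mulPairing (traceIntegral k H) (modular k Λ) with hκ
  have κ_antipode := hΛ.eq_smul_traceIntegral (ν := κ ∘ₗ antipode k) fun x => by
    apply hΛ.antipode_bijective.1
    rw [← rightHit_antipode, hΛ.rightHit_mulPairing_traceIntegral_modular]
    simp [hκ, mulPairing_apply]
  refine ⟨_, fun h0 => hΛ.isGroupLikeElem_modular.ne_zero ?_, fun x => congr($κ_antipode x)⟩
  rw [h0, zero_smul] at κ_antipode
  apply hΛ.mulPairing_traceIntegral_bijective.1
  ext x
  obtain ⟨y, rfl⟩ := hΛ.antipode_bijective.2 x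
  simpa using congr($κ_antipode y)

theorem mul_modular (y : H) :
    y * modular k Λ = modular k Λ * sqAntipode k H (sqAntipode k H y) := by
  obtain ⟨c, hc, h⟩ := hΛ.exists_traceIntegral_antipode_mul_modular
  have hγ := hΛ.isGroupLikeElem_modular
  set γ := modular k Λ
  have conj_eq : γ * sqAntipode k H (sqAntipode k H y) * antipode k γ =
      sqAntipode k H (γ * sqAntipode k H y * antipode k γ) := by
    simp only [map_mul, sqAntipode_apply, hγ.antipode_antipode]
  have y_eq : y = γ * sqAntipode k H (sqAntipode k H y) * antipode k γ := by
    refine hΛ.mulPairing_traceIntegral_bijective.1 (LinearMap.ext fun x => mul_left_cancel₀ hc ?_)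
    rw [mulPairing_apply, mulPairing_apply, conj_eq, ← traceIntegral_mul, ← h, ← h,
      antipode_mul_antidistrib, mul_assoc, traceIntegral_mul, antipode_mul_antidistrib]
    simp only [antipode_mul_antidistrib, hγ.antipode_antipode, mul_assoc, hγ.antipode_mul_cancel]
    simp [sqAntipode_apply]
  conv_lhs => rw [y_eq, mul_assoc, hγ.antipode_mul_cancel, mul_one]

end IsNormalizedIntegral

end Integral

section DiagonalizableTrace

variable {k V : Type*} [Field k] [AddCommGroup V] [Module k V]

theorem trace_eq_sum_of_apply_basis {ι : Type*} [Fintype ι] (b : Module.Basis ι k V)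
    {f : Module.End k V} {μ : ι → k} (hf : ∀ i, f (b i) = μ i • b i) :
    LinearMap.trace k V f = ∑ i, μ i := by
  classical
  simp [LinearMap.trace_eq_matrix_trace k b, Matrix.trace, LinearMap.toMatrix_apply, hf]

variable [FiniteDimensional k V]

theorem exists_trace_eq_natCast_le_finrank {f : Module.End k V} (hf : IsIdempotentElem f) :
    ∃ n : ℕ, n ≤ Module.finrank k V ∧ LinearMap.trace k V f = n :=
  ⟨_, Submodule.finrank_le _, (LinearMap.IsIdempotentElem.isProj_range f hf).trace⟩

theorem exists_basis_apply_eq_smul [IsAlgClosed k] {f : Module.End k V} (hf : f.IsSemisimple) :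
    ∃ (b : Module.Basis (Fin (Module.finrank k V)) k V) (μ : Fin (Module.finrank k V) → k),
      ∀ i, f (b i) = μ i • b i := by
  classical
  have internal : DirectSum.IsInternal f.eigenspace :=
    (DirectSum.isInternal_submodule_iff_iSupIndep_and_iSup_eq_top _).2
      ⟨f.eigenspaces_iSupIndep, hf.iSup_eigenspace_eq_top⟩
  let b := internal.collectedBasis fun μ => Module.finBasis k (f.eigenspace μ)
  let e := b.indexEquiv (Module.finBasis k V)
  refine ⟨b.reindex e, fun i => (e.symm i).1, fun i => ?_⟩
  rw [b.reindex_apply]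
  exact Module.End.mem_eigenspace_iff.1 (internal.collectedBasis_mem _ _)

theorem exists_roots_trace_eq_sum [CharZero k] [IsAlgClosed k] {N : ℕ} (hN : N ≠ 0)
    {u u' : Module.End k V} (hu : u ^ N = 1) (hu' : u' * u = 1) :
    ∃ μ : Fin (Module.finrank k V) → k, (∀ i, μ i ^ N = 1) ∧
      LinearMap.trace k V u = ∑ i, μ i ∧ LinearMap.trace k V u' = ∑ i, (μ i)⁻¹ := by
  have semisimple : u.IsSemisimple := by
    refine Module.End.isSemisimple_of_squarefree_aeval_eq_zero
      (Polynomial.separable_X_pow_sub_C (1 : k) (Nat.cast_ne_zero.2 hN) one_ne_zero).squarefree ?_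
    simp [hu]
  obtain ⟨b, μ, hb⟩ := exists_basis_apply_eq_smul semisimple
  have pow_apply (n : ℕ) (i) : (u ^ n) (b i) = μ i ^ n • b i := by
    induction n with
    | zero => simp
    | succ n ih => rw [pow_succ', Module.End.mul_apply, ih, map_smul, hb, smul_smul, pow_succ]
  have pow_eq_one (i) : μ i ^ N = 1 := by
    have h := pow_apply N i
    rw [hu, Module.End.one_apply] at h
    exact smul_left_injective k (b.ne_zero i) (h.symm.trans (one_smul k _).symm)
  refine ⟨μ, pow_eq_one, trace_eq_sum_of_apply_basis b hb,
    trace_eq_sum_of_apply_basis b fun i => ?_⟩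
  have ne_zero : μ i ≠ 0 := fun h => by simpa [h, hN] using pow_eq_one i
  rw [eq_inv_smul_iff₀ ne_zero, ← map_smul, ← hb, ← Module.End.mul_apply, hu',
    Module.End.one_apply]

theorem exists_roots_matrix_trace_eq_sum {k m : Type*} [Field k] [CharZero k] [IsAlgClosed k]
    [Fintype m] [DecidableEq m] {N : ℕ} (hN : N ≠ 0) {u u' : Matrix m m k} (hu : u ^ N = 1)
    (hu' : u' * u = 1) :
    ∃ μ : Fin (Module.finrank k (m → k)) → k, (∀ i, μ i ^ N = 1) ∧
      u.trace = ∑ i, μ i ∧ u'.trace = ∑ i, (μ i)⁻¹ := by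
  have trace_eq (M : Matrix m m k) :
      LinearMap.trace k (m → k) (Matrix.toLinAlgEquiv' M) = M.trace := M.trace_toLin'_eq
  simpa only [trace_eq] using exists_roots_trace_eq_sum hN
    (u := Matrix.toLinAlgEquiv' u) (u' := Matrix.toLinAlgEquiv' u')
    (by rw [← map_pow, hu, map_one]) (by rw [← map_mul, hu', map_one])

end DiagonalizableTrace

theorem exists_ne_zero_smul_pow_eq_one {k A : Type*} [Field k] [IsAlgClosed k] [Ring A]
    [Nontrivial A] [Algebra k A] {N : ℕ} (hN : N ≠ 0) {v w : A} (hvw : Commute v w)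
    (h : v * w = 1) {a : k} (hw : w ^ N = a • 1) : ∃ c : k, c ≠ 0 ∧ (c⁻¹ • w) ^ N = 1 := by
  have a_ne_zero : a ≠ 0 := by
    rintro rfl
    have pow_eq_one : v ^ N * w ^ N = 1 := by rw [← hvw.mul_pow, h, one_pow]
    simp [hw] at pow_eq_one
  obtain ⟨c, rfl⟩ := IsAlgClosed.exists_pow_nat_eq a (Nat.pos_of_ne_zero hN)
  refine ⟨c, ne_zero_pow hN a_ne_zero, ?_⟩
  rw [smul_pow, hw, smul_smul, inv_pow, inv_mul_cancel₀ a_ne_zero, one_smul]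

section RootsOfUnity

variable {k ι : Type*} [Field k] [CharZero k] [Fintype ι]

-- Roots of unity embed in `ℂ`, where inversion becomes complex conjugation.
theorem sum_eq_zero_of_sum_mul_sum_inv_eq_zero {κ : ι → Type*} [∀ i, Fintype (κ i)] {N : ℕ}
    (hN : N ≠ 0) {μ : ∀ i, κ i → k} (hμ : ∀ i j, μ i j ^ N = 1)
    (h : ∑ i, (∑ j, μ i j) * ∑ j, (μ i j)⁻¹ = 0) (i : ι) : ∑ j, μ i j = 0 := by
  let K := algebraicClosure ℚ k
  have : Algebra.IsAlgebraic ℚ K := algebraicClosure.isAlgebraic ℚ k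
  let F : K →ₐ[ℚ] ℂ := IsAlgClosed.lift
  let z (i : ι) (j : κ i) : K := ⟨μ i j, mem_algebraicClosure_iff.2
    (IsIntegral.of_pow (Nat.pos_of_ne_zero hN) (hμ i j ▸ isIntegral_one)).isAlgebraic⟩
  have coe_z (i j) : (z i j : k) = μ i j := rfl
  have conj_F_z (i j) : starRingEnd ℂ (F (z i j)) = (F (z i j))⁻¹ := by
    have z_pow : z i j ^ N = 1 := Subtype.ext (hμ i j)
    exact (Complex.inv_eq_conj
      (Complex.norm_eq_one_of_pow_eq_one (by rw [← map_pow, z_pow, map_one]) hN)).symm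
  have sum_z : ∑ i, (∑ j, z i j) * ∑ j, (z i j)⁻¹ = 0 := by
    apply Subtype.ext
    push_cast
    exact h
  have sum_normSq : ∑ i, Complex.normSq (F (∑ j, z i j)) = 0 := by
    have h₀ := congr(F $sum_z)
    simp only [map_sum, map_mul, map_inv₀, map_zero] at h₀
    rw [← Complex.ofReal_eq_zero, ← h₀]
    simp [← Complex.mul_conj, conj_F_z]
  have F_eq_zero : F (∑ j, z i j) = 0 := Complex.normSq_eq_zero.1 <|
    (Finset.sum_eq_zero_iff_of_nonneg fun i _ => Complex.normSq_nonneg _).1 sum_normSq i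
      (Finset.mem_univ i)
  simpa [coe_z] using congr((($((map_eq_zero F).1 F_eq_zero) : K) : k))

theorem sum_trace_ne_zero_of_pow_eq_smul_one [IsAlgClosed k] [Nonempty ι] {m : ι → Type*}
    [∀ i, Fintype (m i)] [∀ i, DecidableEq (m i)] {N : ℕ} (hN : N ≠ 0)
    {v w : ∀ i, Matrix (m i) (m i) k} (hvw : ∀ i, v i * w i = 1) (hv : ∀ i, (v i).trace = 1)
    (hw : ∀ i, ∃ a : k, w i ^ N = a • 1) : ∑ i, (w i).trace ≠ 0 := by
  intro sum_eq_zero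
  have nontrivial (i) : Nontrivial (Matrix (m i) (m i) k) :=
    ⟨v i, 0, fun h => by simpa [h] using hv i⟩
  choose a ha using hw
  choose c c_ne_zero hc using fun i => exists_ne_zero_smul_pow_eq_one hN
    ((hvw i).trans (mul_eq_one_comm.1 (hvw i)).symm) (hvw i) (ha i)
  choose μ μ_pow trace_w trace_v using fun i => exists_roots_matrix_trace_eq_sum hN
    (u' := c i • v i) (hc i)
    (by rw [smul_mul_smul_comm, hvw, mul_inv_cancel₀ (c_ne_zero i), one_smul])
  simp only [Matrix.trace_smul, smul_eq_mul, hv, mul_one] at trace_w trace_v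
  obtain ⟨i⟩ := ‹Nonempty ι›
  have sum_inv_eq_zero := sum_eq_zero_of_sum_mul_sum_inv_eq_zero hN (μ := fun i j => (μ i j)⁻¹)
    (fun i j => by rw [inv_pow, μ_pow, inv_one])
    (by simpa [← trace_v, ← trace_w, mul_inv_cancel_left₀ (c_ne_zero _)] using sum_eq_zero) i
  exact c_ne_zero i ((trace_v i).trans sum_inv_eq_zero)

end RootsOfUnity

section PiMatrix

variable {k : Type*} [Field k] {ι : Type*} {m : ι → Type*} [∀ i, Fintype (m i)]

/-- The matrix unit `E_ab` of the `i`-th block of a product of matrix algebras. -/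
abbrev blockUnit (k : Type*) [Field k] {ι : Type*} [DecidableEq ι] {m : ι → Type*}
    [∀ i, DecidableEq (m i)] (i : ι) (a b : m i) : ∀ i, Matrix (m i) (m i) k :=
  Pi.single i (Matrix.single a b 1)

theorem exists_eq_smul_one_of_forall_commute [∀ i, DecidableEq (m i)]
    {M : ∀ i, Matrix (m i) (m i) k} (hM : ∀ X, Commute X M) (i : ι) : ∃ c : k, M i = c • 1 := by
  classical
  have mem_range : M i ∈ Set.range (Matrix.scalar (m i) (α := k)) :=
    Matrix.mem_range_scalar_iff_commute_single'.2 fun a b => by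
      simpa [Commute, SemiconjBy] using congr($(hM (blockUnit k i a b)) i)
  obtain ⟨c, hc⟩ := mem_range
  exact ⟨c, by rw [← hc, Matrix.smul_one_eq_diagonal]; rfl⟩

variable [Fintype ι]

/-- The sum of the traces of the blocks of an element of a product of matrix algebras. -/
def blockTrace (k : Type*) [Field k] {ι : Type*} [Fintype ι] (m : ι → Type*)
    [∀ i, Fintype (m i)] : (∀ i, Matrix (m i) (m i) k) →ₗ[k] k :=
  ∑ i, Matrix.traceLinearMap (m i) k k ∘ₗ LinearMap.proj i

theorem blockTrace_apply (M : ∀ i, Matrix (m i) (m i) k) :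
    blockTrace k m M = ∑ i, (M i).trace := by
  simp [blockTrace]

theorem blockTrace_mul_comm (M N : ∀ i, Matrix (m i) (m i) k) :
    blockTrace k m (M * N) = blockTrace k m (N * M) := by
  simp only [blockTrace_apply, Pi.mul_apply]
  exact Finset.sum_congr rfl fun i _ => Matrix.trace_mul_comm _ _

variable [DecidableEq ι] [∀ i, DecidableEq (m i)]

theorem eq_sum_smul_blockUnit (M : ∀ i, Matrix (m i) (m i) k) :
    M = ∑ i, ∑ a, ∑ b, M i a b • blockUnit k i a b := by
  funext i
  conv_lhs => rw [Matrix.matrix_eq_sum_single (M i)]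
  rw [Finset.sum_apply, Finset.sum_eq_single i]
  · simp [Finset.sum_apply]
  · intro j _ hj
    simp [Finset.sum_apply, Pi.single_eq_of_ne' hj]
  · simp

theorem sum_blockUnit_mul_mul_blockUnit (M : ∀ i, Matrix (m i) (m i) k) :
    ∑ i, ∑ a, ∑ b, blockUnit k i a b * M * blockUnit k i b a = fun i => (M i).trace • 1 := by
  funext i
  rw [Finset.sum_apply, Finset.sum_eq_single i]
  · ext a b
    simp [Finset.sum_apply, Matrix.sum_apply, Matrix.single_mul_mul_single, Matrix.single_apply,
      Matrix.trace, Matrix.one_apply, ite_and]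
  · intro j _ hj
    simp [Finset.sum_apply, Pi.single_eq_of_ne' hj]
  · simp

theorem blockTrace_mul_blockUnit (M : ∀ i, Matrix (m i) (m i) k) (i : ι) (a b : m i) :
    blockTrace k m (M * blockUnit k i a b) = M i b a := by
  rw [blockTrace_apply, Finset.sum_eq_single i]
  · rw [Pi.mul_apply, Matrix.trace_mul_comm]
    simp [Matrix.trace_single_mul]
  · intro j _ hj
    simp [hj]
  · simp

omit [DecidableEq ι] [∀ i, DecidableEq (m i)] in
theorem exists_eq_blockTrace_mul (f : (∀ i, Matrix (m i) (m i) k) →ₗ[k] k) :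
    ∃ w, ∀ M, f M = blockTrace k m (M * w) := by
  classical
  refine ⟨∑ i, ∑ a, ∑ b, f (blockUnit k i a b) • blockUnit k i b a, fun M => ?_⟩
  conv_lhs => rw [eq_sum_smul_blockUnit M]
  simp only [map_sum, Finset.mul_sum, map_smul, mul_smul_comm, blockTrace_mul_blockUnit,
    smul_eq_mul, mul_comm]

omit [DecidableEq ι] [∀ i, DecidableEq (m i)] in
theorem eq_of_blockTrace_mul_eq {M N : ∀ i, Matrix (m i) (m i) k}
    (h : ∀ X, blockTrace k m (X * M) = blockTrace k m (X * N)) : M = N := by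
  classical
  funext i
  ext a b
  rw [← blockTrace_mul_blockUnit M, ← blockTrace_mul_blockUnit N, blockTrace_mul_comm, h,
    blockTrace_mul_comm]

end PiMatrix

section AntipodeOrder

variable {k : Type*} [Field k] {H : Type*} [Ring H] [HopfAlgebra k H] [FiniteDimensional k H]

theorem IsNormalizedIntegral.sum_mul_eq_one_of_dual {Λ : H} (hΛ : IsNormalizedIntegral k Λ)
    {ι : Type*} {s : Finset ι} {b c : ι → H}
    (h : ∀ x, x = ∑ j ∈ s, traceIntegral k H (x * c j) • b j) : ∑ j ∈ s, c j * b j = 1 := by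
  have expand (j) : c j * b j = ∑ t ∈ (ℛ k Λ).index, antipode k ((ℛ k Λ).left t) *
      (traceIntegral k H ((ℛ k Λ).right t * c j) • b j) := by
    conv_lhs => rw [← hΛ.antipode_leftHit_mulPairing_traceIntegral (c j),
      leftHit_apply _ (ℛ k Λ)]
    simp [Finset.sum_mul, mulPairing_apply]
  calc ∑ j ∈ s, c j * b j
      = ∑ t ∈ (ℛ k Λ).index, antipode k ((ℛ k Λ).left t) * (ℛ k Λ).right t := by
        simp only [expand, Finset.sum_comm (t := (ℛ k Λ).index), ← Finset.mul_sum, ← h]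
    _ = 1 := by rw [sum_antipode_mul_eq_algebraMap_counit, hΛ.counit_eq_one, map_one]

variable {ι : Type*} [Fintype ι] {m : ι → Type*} [∀ i, Fintype (m i)]
  [∀ i, DecidableEq (m i)] {φ : H ≃ₐ[k] ∀ i, Matrix (m i) (m i) k}
  {w : ∀ i, Matrix (m i) (m i) k}

theorem IsNormalizedIntegral.trace_eq_one_of_blockTrace_eq {Λ : H}
    (hΛ : IsNormalizedIntegral k Λ) {v : H}
    (hv : ∀ x, blockTrace k m (φ x) = traceIntegral k H (x * v)) (i : ι) [Nonempty (m i)] :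
    (φ v i).trace = 1 := by
  classical
  let E (t : Σ i, m i × m i) : H := φ.symm (blockUnit k t.1 t.2.1 t.2.2)
  let E' (t : Σ i, m i × m i) : H := φ.symm (blockUnit k t.1 t.2.2 t.2.1)
  have dual (x : H) : x = ∑ t, traceIntegral k H (x * (E t * v)) • E' t := by
    apply φ.injective
    conv_lhs => rw [eq_sum_smul_blockUnit (φ x)]
    simp only [← mul_assoc, ← hv, map_sum, map_smul, map_mul, E, E', AlgEquiv.apply_symm_apply,
      blockTrace_mul_blockUnit, Fintype.sum_sigma, Fintype.sum_prod_type]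
    exact Finset.sum_congr rfl fun i _ => Finset.sum_comm
  have sum_eq_one := congr(φ $(hΛ.sum_mul_eq_one_of_dual dual))
  simp only [map_sum, map_mul, E, E', AlgEquiv.apply_symm_apply, map_one, Fintype.sum_sigma,
    Fintype.sum_prod_type, sum_blockUnit_mul_mul_blockUnit] at sum_eq_one
  obtain ⟨a⟩ := ‹Nonempty (m i)›
  simpa using congr($sum_eq_one i a a)

omit [FiniteDimensional k H] in
theorem mul_apply_eq_of_traceIntegral_eq
    (hw : ∀ x, traceIntegral k H x = blockTrace k m (φ x * w)) (a : H) :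
    w * φ a = φ (sqAntipode k H a) * w := by
  refine eq_of_blockTrace_mul_eq fun X => ?_
  obtain ⟨x, rfl⟩ := φ.surjective X
  calc blockTrace k m (φ x * (w * φ a)) = blockTrace k m (φ (a * x) * w) := by
        rw [← mul_assoc, blockTrace_mul_comm, ← mul_assoc, ← map_mul φ]
    _ = blockTrace k m (φ x * (φ (sqAntipode k H a) * w)) := by
        rw [← hw, traceIntegral_mul, hw, map_mul φ, mul_assoc]

theorem IsNormalizedIntegral.exists_pow_eq_smul_one {Λ : H} (hΛ : IsNormalizedIntegral k Λ)
    (hw : ∀ x, traceIntegral k H x = blockTrace k m (φ x * w)) :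
    ∃ N ≠ 0, ∀ i, ∃ a : k, w i ^ N = a • 1 := by
  have conj := mul_apply_eq_of_traceIntegral_eq hw
  obtain ⟨n, n_pos, γ_pow⟩ := hΛ.exists_modular_pow_eq_one
  have hγ := hΛ.isGroupLikeElem_modular
  have mul_γ := hΛ.mul_modular
  set γ := modular k Λ
  have commute : Commute (φ γ) w := by
    have := conj γ
    rw [sqAntipode_apply, hγ.antipode_antipode] at this
    exact this.symm
  have central (X) : Commute X (φ γ * w ^ 2) := by
    obtain ⟨x, rfl⟩ := φ.surjective X
    rw [Commute, SemiconjBy, ← mul_assoc, ← map_mul, mul_γ, map_mul, mul_assoc, mul_assoc,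
      pow_two, ← mul_assoc _ w w, ← conj, mul_assoc w, ← conj, mul_assoc]
  refine ⟨2 * n, by omega, fun i => ?_⟩
  obtain ⟨c, hc⟩ := exists_eq_smul_one_of_forall_commute central i
  refine ⟨c ^ n, ?_⟩
  calc w i ^ (2 * n) = ((φ γ * w ^ 2) ^ n) i := by
        rw [(commute.pow_right 2).mul_pow, ← map_pow, γ_pow, map_one, one_mul, pow_mul]
        rfl
    _ = c ^ n • 1 := by rw [Pi.pow_apply, hc, smul_pow, one_pow]

theorem traceIntegral_one_ne_zero (k H : Type*) [Field k] [CharZero k] [IsAlgClosed k] [Ring H]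
    [HopfAlgebra k H] [FiniteDimensional k H] [IsSemisimpleRing H] :
    traceIntegral k H 1 ≠ 0 := by
  obtain ⟨Λ, hΛ⟩ := exists_isNormalizedIntegral k H
  obtain ⟨n, d, hd, ⟨φ⟩⟩ := IsSemisimpleRing.exists_algEquiv_pi_matrix_of_isAlgClosed k H
  have : Nontrivial H := (Bialgebra.counitAlgHom k H).toRingHom.domain_nontrivial
  have : Nonempty (Fin n) := by
    by_contra h
    rw [not_nonempty_iff] at h
    exact zero_ne_one (φ.injective (Subsingleton.elim (φ 0) (φ 1)))
  obtain ⟨w, hw⟩ := exists_eq_blockTrace_mul (traceIntegral k H ∘ₗ φ.symm.toLinearMap)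
  replace hw (x : H) : traceIntegral k H x = blockTrace k (fun i => Fin (d i)) (φ x * w) := by
    simpa using hw (φ x)
  obtain ⟨v, hv⟩ := hΛ.mulPairing_traceIntegral_bijective.2
    (blockTrace k (fun i => Fin (d i)) ∘ₗ φ.toLinearMap)
  replace hv (x : H) : blockTrace k (fun i => Fin (d i)) (φ x) = traceIntegral k H (x * v) :=
    congr($hv.symm x)
  have v_mul_w : φ v * w = 1 := eq_of_blockTrace_mul_eq fun X => by
    obtain ⟨x, rfl⟩ := φ.surjective X
    rw [← mul_assoc, ← map_mul, ← hw, ← hv, mul_one]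
  obtain ⟨N, hN, w_pow⟩ := hΛ.exists_pow_eq_smul_one hw
  rw [hw, map_one, one_mul, blockTrace_apply]
  exact sum_trace_ne_zero_of_pow_eq_smul_one hN (fun i => congr($v_mul_w i))
    (fun i => hΛ.trace_eq_one_of_blockTrace_eq hv i) w_pow

theorem sqAntipode_sqAntipode {k H : Type*} [Field k] [CharZero k] [IsAlgClosed k] [Ring H]
    [HopfAlgebra k H] [FiniteDimensional k H] [IsSemisimpleRing H] (x : H) :
    sqAntipode k H (sqAntipode k H x) = x := by
  obtain ⟨Λ, hΛ⟩ := exists_isNormalizedIntegral k H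
  have modular_eq_one : modular k Λ = 1 := by
    have h := hΛ.rightHit_traceIntegral 1
    rw [show rightHit (traceIntegral k H) (1 : H) = traceIntegral k H 1 • 1 by
      simp [rightHit, Algebra.TensorProduct.one_def]] at h
    exact (smul_right_injective H (traceIntegral_one_ne_zero k H) h).symm
  simpa [modular_eq_one] using (hΛ.mul_modular x).symm

end AntipodeOrder

section RegularElement

variable {k : Type} [Field k] {H : Type} [Ring H] [HopfAlgebra k H]

theorem exists_repr_mem {C : Submodule k H} (hC : IsSubcoalgebra k H C) {x : H} (hx : x ∈ C) :
    ∃ r : Repr k x (C × C), ∀ i, r.left i ∈ C ∧ r.right i ∈ C := by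
  obtain ⟨t, ht⟩ := hC x hx
  obtain ⟨s, hs⟩ := TensorProduct.exists_finset t
  exact ⟨⟨s, fun i => i.1, fun i => i.2, by rw [← ht, hs]; simp⟩, fun i => ⟨i.1.2, i.2.2⟩⟩

theorem leftHit_mem {C : Submodule k H} (hC : IsSubcoalgebra k H C) (f : H →ₗ[k] k) {x : H}
    (hx : x ∈ C) : leftHit f x ∈ C := by
  obtain ⟨r, hr⟩ := exists_repr_mem hC hx
  rw [leftHit_apply f r]
  exact C.sum_mem fun i _ => C.smul_mem _ (hr i).1

theorem rightHit_mem {C : Submodule k H} (hC : IsSubcoalgebra k H C) (f : H →ₗ[k] k) {x : H}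
    (hx : x ∈ C) : rightHit f x ∈ C := by
  obtain ⟨r, hr⟩ := exists_repr_mem hC hx
  rw [rightHit_apply f r]
  exact C.sum_mem fun i _ => C.smul_mem _ (hr i).2

theorem isCocomm_iff {x : H} : IsCocomm k H x ↔
    ∀ f g : ConvDual k H, (f * g).ofConv x = (g * f).ofConv x := by
  have swap (f g : ConvDual k H) : LinearMap.mul' k k (TensorProduct.map f.ofConv g.ofConv
      (TensorProduct.comm k H H (comul x))) = (g * f).ofConv x := by
    rw [LinearMap.convMul_apply, ← (ℛ k x).eq]
    simp [mul_comm]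
  refine ⟨fun h f g => ?_, fun h => tensor_ext fun f g => ?_⟩
  · rw [← swap f g, show TensorProduct.comm k H H (comul (R := k) x) = comul (R := k) x from h]
    exact LinearMap.convMul_apply f g x
  · exact (swap (toConv f) (toConv g)).trans (h _ _)

theorem isHopfSubalgebra_top : IsHopfSubalgebra k H ⊤ := by
  refine ⟨fun c _ => ?_, fun _ _ => trivial⟩
  rw [← (ℛ k c).eq]
  exact Submodule.sum_mem _ fun i _ =>
    ⟨⟨(ℛ k c).left i, trivial⟩ ⊗ₜ ⟨(ℛ k c).right i, trivial⟩, TensorProduct.map_tmul ..⟩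

/-- The element `a₂ S(a₁)` of `H`, which equals `ε(a)` when `a` is cocommutative or `S² = id`. -/
def mulAntipodeSwap (a : H) : H :=
  LinearMap.mul' k H ((antipode k).lTensor H (TensorProduct.comm k H H (comul (R := k) a)))

theorem mulAntipodeSwap_eq_sum {a : H} {ι : Type*} (r : Repr k a ι) :
    mulAntipodeSwap (k := k) a = ∑ i ∈ r.index, r.right i * antipode k (r.left i) := by
  simp [mulAntipodeSwap, ← r.eq]

theorem IsCocomm.mulAntipodeSwap_eq {a : H} (ha : IsCocomm k H a) :
    mulAntipodeSwap (k := k) a = counit (R := k) a • (1 : H) := by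
  rw [mulAntipodeSwap,
    show TensorProduct.comm k H H (comul (R := k) a) = comul (R := k) a from ha]
  simp [Algebra.algebraMap_eq_smul_one]

theorem mulAntipodeSwap_eq_of_sqAntipode (hS : ∀ x : H, sqAntipode k H x = x) (a : H) :
    mulAntipodeSwap (k := k) a = counit (R := k) a • (1 : H) := by
  have h := congr(antipode k $(sum_mul_antipode_eq_algebraMap_counit (ℛ k a)))
  simp only [map_sum, antipode_mul_antidistrib, ← sqAntipode_apply, hS] at h
  rw [mulAntipodeSwap_eq_sum (ℛ k a), h]
  simp [Algebra.algebraMap_eq_smul_one]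

theorem leftHit_comp_mulLeft {ι : Type*} (f : H →ₗ[k] k) {a : H} (r : Repr k a ι) :
    leftHit (f ∘ₗ LinearMap.mulLeft k a) = ∑ i ∈ r.index,
      LinearMap.mulLeft k (antipode k (r.left i)) * leftHit f *
        LinearMap.mulLeft k (r.right i) := by
  ext y
  let Φ : H →ₗ[k] H := leftHit.flip y ∘ₗ LinearMap.llcomp k H H k f ∘ₗ LinearMap.mul k H
  have leftHit_mul_eq :
      toConv (leftHit f ∘ₗ LinearMap.mulRight k y) = toConv LinearMap.id * toConv Φ := by
    ext c
    rw [(ℛ k c).convMul_apply]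
    simp only [Φ, LinearMap.comp_apply, LinearMap.flip_apply, leftHit_apply _ (ℛ k y)]
    simp only [leftHit, LinearMap.coe_mk, AddHom.coe_mk, LinearMap.comp_apply,
      LinearMap.mulRight_apply, Bialgebra.comul_mul, ← (ℛ k c).eq, ← (ℛ k y).eq]
    simp only [Finset.mul_sum, Finset.sum_mul, Algebra.TensorProduct.tmul_mul_tmul, map_sum,
      LinearMap.lTensor_tmul, LinearEquiv.coe_coe, TensorProduct.rid_tmul, LinearMap.id_coe, id_eq,
      LinearMap.llcomp_apply, LinearMap.mul_apply_apply, Algebra.mul_smul_comm]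
    exact Finset.sum_comm
  have Φ_eq : toConv Φ = toConv (antipode k) * toConv (leftHit f ∘ₗ LinearMap.mulRight k y) := by
    rw [leftHit_mul_eq, ← mul_assoc, LinearMap.antipode_mul_id, one_mul]
  calc leftHit (f ∘ₗ LinearMap.mulLeft k a) y = (toConv Φ).ofConv a := rfl
    _ = _ := by
        rw [Φ_eq, r.convMul_apply]
        simp

theorem trace_mul_mul_comm_of_isProj {V : Type*} [AddCommGroup V] [Module k V]
    {A : Submodule k V} {P : Module.End k V} (hP : LinearMap.IsProj A P) {X Y : Module.End k V}
    (hX : ∀ v ∈ A, X v ∈ A) (hY : ∀ v ∈ A, Y v ∈ A) :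
    LinearMap.trace k V (X * Y * P) = LinearMap.trace k V (Y * X * P) := by
  have left : X * Y * P = (X * P) * (Y * P) := by
    ext v
    simp [hP.map_id _ (hY _ (hP.map_mem v))]
  have right : Y * X * P = (Y * P) * (X * P) := by
    ext v
    simp [hP.map_id _ (hX _ (hP.map_mem v))]
  rw [left, right, LinearMap.trace_mul_comm]

variable [FiniteDimensional k H]

/-- The element `r` of `H` with `f(r) = Tr(L_f ∘ P)` for every functional `f`, where
`L_f y = y₁ f(y₂)`. For a projection `P` onto a subcoalgebra `A` it is the character of `A` as a
module over its dual algebra. -/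
def regularElement (P : Module.End k H) : H :=
  ∑ j, rightHit ((Module.finBasis k H).coord j) (P (Module.finBasis k H j))

theorem apply_regularElement (P : Module.End k H) (f : H →ₗ[k] k) :
    f (regularElement P) = LinearMap.trace k H (leftHit f * P) := by
  rw [LinearMap.trace_eq_matrix_trace k (Module.finBasis k H)]
  simp only [regularElement, map_sum, apply_rightHit, Matrix.trace, Matrix.diag_apply,
    LinearMap.toMatrix_apply, Module.End.mul_apply]
  refine Finset.sum_congr rfl fun j _ => ?_
  rw [← apply_leftHit]
  rfl

theorem mul_regularElement {A : Subalgebra k H} (hA : IsHopfSubalgebra k H A)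
    {P : Module.End k H} (hP : LinearMap.IsProj A.toSubmodule P) {a : H} (ha : a ∈ A)
    (h : mulAntipodeSwap (k := k) a = counit (R := k) a • (1 : H)) :
    a * regularElement P = counit (R := k) a • regularElement P := by
  refine eq_of_forall_dual_apply_eq (k := k) fun f => ?_
  obtain ⟨r, hr⟩ := exists_repr_mem hA.1 ha
  have trace_comm (i) : LinearMap.trace k H (LinearMap.mulLeft k (antipode k (r.left i)) *
        leftHit f * LinearMap.mulLeft k (r.right i) * P) =
      LinearMap.trace k H
        (leftHit f * LinearMap.mulLeft k (r.right i * antipode k (r.left i)) * P) := by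
    rw [mul_assoc (LinearMap.mulLeft k _), trace_mul_mul_comm_of_isProj hP
      (X := LinearMap.mulLeft k (antipode k (r.left i)))
      (Y := leftHit f * LinearMap.mulLeft k (r.right i))
      (fun v hv => A.mul_mem (hA.2 _ (hr i).1) hv)
      (fun v hv => leftHit_mem hA.1 f (A.mul_mem (hr i).2 hv)), mul_assoc (leftHit f),
      LinearMap.mulLeft_mul]
    rfl
  calc f (a * regularElement P) = (f ∘ₗ LinearMap.mulLeft k a) (regularElement P) := rfl
    _ = ∑ i ∈ r.index, LinearMap.trace k H
          (leftHit f * LinearMap.mulLeft k (r.right i * antipode k (r.left i)) * P) := by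
        rw [apply_regularElement, leftHit_comp_mulLeft f r, Finset.sum_mul, map_sum]
        exact Finset.sum_congr rfl fun i _ => trace_comm i
    _ = LinearMap.trace k H (leftHit f * LinearMap.mulLeft k (mulAntipodeSwap (k := k) a) * P) := by
        rw [← map_sum, ← Finset.sum_mul, ← Finset.mul_sum, mulAntipodeSwap_eq_sum r]
        congr 3
        ext
        simp [Finset.sum_mul, mul_assoc]
    _ = f (counit (R := k) a • regularElement P) := by
        rw [h, map_smul, apply_regularElement, ← map_smul]
        congr 1
        ext
        simp

theorem isCocomm_regularElement {A : Submodule k H} (hA : IsSubcoalgebra k H A)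
    {P : Module.End k H} (hP : LinearMap.IsProj A P) : IsCocomm k H (regularElement P) := by
  rw [isCocomm_iff]
  intro f g
  rw [apply_regularElement, apply_regularElement, leftHit_mul, leftHit_mul]
  exact trace_mul_mul_comm_of_isProj hP (fun v hv => leftHit_mem hA _ hv)
    (fun v hv => leftHit_mem hA _ hv)

theorem regularElement_mem {A : Submodule k H} (hA : IsSubcoalgebra k H A)
    {P : Module.End k H} (hP : LinearMap.IsProj A P) : regularElement P ∈ A :=
  A.sum_mem fun _ _ => rightHit_mem hA _ (hP.map_mem _)

theorem counit_regularElement {A : Submodule k H} {P : Module.End k H}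
    (hP : LinearMap.IsProj A P) :
    counit (R := k) (regularElement P) = Module.finrank k A := by
  rw [apply_regularElement, leftHit_counit, one_mul, hP.trace]

end RegularElement

section Involution

variable {k : Type*} [Field k] [CharZero k]

theorem isIdempotentElem_half_add {R : Type*} [Ring R] [Algebra k R] {T : R}
    (hT : T * T * T = T) : IsIdempotentElem ((2 : k)⁻¹ • (T * T + T)) := by
  have square : (T * T + T) * (T * T + T) = (2 : k) • (T * T + T) := by
    rw [show (T * T + T) * (T * T + T) = (T * T * T) * T + (T * T * T) + T * T * T + T * T by
      noncomm_ring, hT, two_smul]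
    abel
  rw [IsIdempotentElem, smul_mul_smul_comm, square, smul_smul]
  congr 1
  field_simp

theorem isIdempotentElem_half_sub {R : Type*} [Ring R] [Algebra k R] {T : R}
    (hT : T * T * T = T) : IsIdempotentElem ((2 : k)⁻¹ • (T * T - T)) := by
  have h := isIdempotentElem_half_add (k := k) (T := -T) (by simp [hT])
  rwa [neg_mul_neg, ← sub_eq_add_neg] at h

variable {V : Type*} [AddCommGroup V] [Module k V] [FiniteDimensional k V]

theorem exists_trace_eq_intCast_of_mul_mul_eq_self {T : Module.End k V} (hT : T * T * T = T) :
    ∃ z : ℤ, LinearMap.trace k V T = z := by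
  obtain ⟨p, -, hp⟩ := exists_trace_eq_natCast_le_finrank (isIdempotentElem_half_add (k := k) hT)
  obtain ⟨q, -, hq⟩ := exists_trace_eq_natCast_le_finrank (isIdempotentElem_half_sub (k := k) hT)
  have T_eq : T = (2 : k)⁻¹ • (T * T + T) - (2 : k)⁻¹ • (T * T - T) := by module
  refine ⟨p - q, ?_⟩
  rw [T_eq, map_sub, hp, hq]
  push_cast
  rfl

theorem eq_one_or_eq_neg_one_of_finrank_dvd_trace {σ : Module.End k V} (hσ : σ * σ = 1) {z : ℤ}
    (h : LinearMap.trace k V σ = Module.finrank k V * z) (h₀ : LinearMap.trace k V σ ≠ 0) :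
    σ = 1 ∨ σ = -1 := by
  have cube : σ * σ * σ = σ := by rw [hσ, one_mul]
  have plus := isIdempotentElem_half_add (k := k) cube
  have minus := isIdempotentElem_half_sub (k := k) cube
  rw [hσ] at plus minus
  obtain ⟨p, p_le, hp⟩ := exists_trace_eq_natCast_le_finrank plus
  obtain ⟨q, -, hq⟩ := exists_trace_eq_natCast_le_finrank minus
  have p_add_q : p + q = Module.finrank k V := by
    rw [← Nat.cast_inj (R := k), Nat.cast_add, ← hp, ← hq, ← map_add, ← LinearMap.trace_one]
    congr 1
    module
  have p_sub_q : LinearMap.trace k V σ = p - q := by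
    rw [← hp, ← hq, ← map_sub]
    congr 1
    module
  have dvd : (Module.finrank k V : ℤ) ∣ p - q := ⟨z, by exact_mod_cast p_sub_q.symm.trans h⟩
  have ne_zero : (p - q : ℤ) ≠ 0 := fun h => h₀ (p_sub_q.trans (by exact_mod_cast congr(($h : k))))
  have p_or_q : p = 0 ∨ q = 0 := by
    have := Int.le_of_dvd (abs_pos.2 ne_zero) ((dvd_abs _ _).2 dvd)
    rcases le_abs.1 this with h | h <;> omega
  rcases p_or_q with rfl | rfl
  · right
    have h := (LinearMap.IsIdempotentElem.trace_eq_zero_iff plus).1 (by rw [hp, Nat.cast_zero])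
    rw [smul_eq_zero_iff_right (by norm_num)] at h
    exact (neg_eq_of_add_eq_zero_right h).symm
  · left
    have h := (LinearMap.IsIdempotentElem.trace_eq_zero_iff minus).1 (by rw [hq, Nat.cast_zero])
    rw [smul_eq_zero_iff_right (by norm_num)] at h
    exact (sub_eq_zero.1 h).symm

end Involution

section AntipodeSquared

variable {k : Type} [Field k] [CharZero k] [IsAlgClosed k] {H : Type} [Ring H]
  [HopfAlgebra k H] [FiniteDimensional k H] [IsSemisimpleRing H]

theorem sqAntipode_regularElement_one :
    sqAntipode k H (regularElement (1 : Module.End k H)) = regularElement (1 : Module.End k H) := by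
  refine eq_of_forall_dual_apply_eq (k := k) fun f => ?_
  let σ : Module.End k H := (sqAntipode k H).toLinearMap
  have conj : leftHit (f ∘ₗ σ) = σ * leftHit f * σ := by
    ext y
    simp [σ, leftHit_sqAntipode, sqAntipode_sqAntipode]
  have σ_mul_σ : σ * σ = 1 := LinearMap.ext sqAntipode_sqAntipode
  calc f (sqAntipode k H (regularElement 1)) = (f ∘ₗ σ) (regularElement (1 : Module.End k H)) := rfl
    _ = f (regularElement (1 : Module.End k H)) := by
        rw [apply_regularElement, apply_regularElement, mul_one, mul_one, conj,
          LinearMap.trace_mul_comm, ← mul_assoc, σ_mul_σ, one_mul]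

omit [CharZero k] [IsAlgClosed k] [IsSemisimpleRing H] in
theorem traceIntegral_regularElement_one :
    traceIntegral k H (regularElement (1 : Module.End k H)) = traceIntegral k H 1 := by
  have rank_one : leftHit (traceIntegral k H) = (traceIntegral k H).smulRight 1 := by
    ext y
    simp [leftHit_traceIntegral]
  rw [apply_regularElement, mul_one, rank_one, LinearMap.trace_smulRight]

omit [CharZero k] [IsAlgClosed k] [IsSemisimpleRing H] in
theorem regularElement_one_mul_self :
    regularElement (1 : Module.End k H) * regularElement (1 : Module.End k H) =
      (Module.finrank k H : k) • regularElement (1 : Module.End k H) := by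
  have isProj_top : LinearMap.IsProj (⊤ : Submodule k H) (1 : Module.End k H) :=
    LinearMap.IsProj.top k H
  have counit_eq : counit (R := k) (regularElement (1 : Module.End k H)) = Module.finrank k H := by
    rw [counit_regularElement isProj_top, finrank_top]
  rw [← counit_eq]
  exact mul_regularElement isHopfSubalgebra_top isProj_top trivial
    (isCocomm_regularElement isHopfSubalgebra_top.1 isProj_top).mulAntipodeSwap_eq

theorem exists_traceIntegral_one_eq_finrank_mul :
    ∃ z : ℤ, traceIntegral k H 1 = Module.finrank k H * z := by
  have : Nontrivial H := (Bialgebra.counitAlgHom k H).toRingHom.domain_nontrivial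
  let n : k := Module.finrank k H
  let r : H := regularElement (1 : Module.End k H)
  let T : Module.End k H := LinearMap.mulLeft k r * (sqAntipode k H).toLinearMap
  have n_ne_zero : n ≠ 0 := Nat.cast_ne_zero.2 Module.finrank_pos.ne'
  have T_mul_T : T * T = n • LinearMap.mulLeft k r := by
    ext y
    simp only [T, r, n, Module.End.mul_apply, LinearMap.mulLeft_apply, AlgHom.toLinearMap_apply,
      map_mul, sqAntipode_regularElement_one, sqAntipode_sqAntipode, LinearMap.smul_apply]
    rw [← mul_assoc, regularElement_one_mul_self, smul_mul_assoc]
  have T_cube : T * T * T = (n * n) • T := by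
    ext y
    rw [T_mul_T, mul_smul]
    simp only [T, r, n, Module.End.mul_apply, LinearMap.mulLeft_apply, LinearMap.smul_apply]
    rw [← mul_assoc, regularElement_one_mul_self, smul_mul_assoc]
  have cube : (n⁻¹ • T) * (n⁻¹ • T) * (n⁻¹ • T) = n⁻¹ • T := by
    rw [smul_mul_smul_comm, smul_mul_smul_comm, T_cube, smul_smul]
    congr 1
    field_simp
  obtain ⟨z, hz⟩ := exists_trace_eq_intCast_of_mul_mul_eq_self cube
  refine ⟨z, ?_⟩
  rw [← hz, map_smul, smul_eq_mul, mul_inv_cancel_left₀ n_ne_zero,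
    ← traceIntegral_regularElement_one, traceIntegral_apply]

theorem sqAntipode_eq (x : H) : sqAntipode k H x = x := by
  have trace_eq : LinearMap.trace k H (sqAntipode k H).toLinearMap = traceIntegral k H 1 := by
    rw [traceIntegral_apply, LinearMap.mulLeft_one]
    rfl
  obtain ⟨z, hz⟩ := exists_traceIntegral_one_eq_finrank_mul (k := k) (H := H)
  rcases eq_one_or_eq_neg_one_of_finrank_dvd_trace
    (LinearMap.ext sqAntipode_sqAntipode : _ * _ = (1 : Module.End k H)) (trace_eq.trans hz)
    (trace_eq ▸ traceIntegral_one_ne_zero k H) with h | h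
  · exact congr($h x)
  · have one_eq : (1 : H) = -1 := (map_one (sqAntipode k H)).symm.trans congr($h 1)
    have counit_eq : (1 : k) = -1 := by simpa using congr(counit (R := k) $one_eq)
    exact absurd (self_eq_neg.1 counit_eq) one_ne_zero

theorem regularElement_eq_finrank_smul {A : Subalgebra k H} (hA : IsHopfSubalgebra k H A) {Λ : H}
    (hΛ : IsIdempotentIntegral k H A Λ) {P : Module.End k H}
    (hP : LinearMap.IsProj A.toSubmodule P) :
    regularElement P = (Module.finrank k A : k) • Λ := by
  have h := mul_regularElement hA hP hΛ.1 (mulAntipodeSwap_eq_of_sqAntipode sqAntipode_eq Λ)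
  rw [hΛ.2.1, one_smul, (hΛ.2.2 _ (regularElement_mem hA.1 hP)).2, counit_regularElement hP] at h
  exact h.symm

end AntipodeSquared

section DualAlgebra

instance {k C : Type*} [Field k] [AddCommGroup C] [Module k C] [Coalgebra k C]
    [FiniteDimensional k C] : FiniteDimensional k (ConvDual k C) :=
  Module.Finite.equiv (WithConv.linearEquiv k (C →ₗ[k] k)).symm

theorem exists_isProj {k V : Type*} [Field k] [AddCommGroup V] [Module k V] (A : Submodule k V) :
    ∃ P : Module.End k V, LinearMap.IsProj A P := by
  obtain ⟨g, hg⟩ := A.subtype.exists_leftInverse_of_injective A.ker_subtype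
  exact ⟨A.subtype ∘ₗ g, fun x => (g x).2, fun x hx => congr(($hg ⟨x, hx⟩ : V))⟩

variable {k : Type} [Field k] {H : Type} [Ring H] [HopfAlgebra k H]

theorem mem_charRing_iff {x : H} : x ∈ charRing k H ↔ IsCocomm k H x := by
  simp [charRing, IsCocomm, sub_eq_zero]

theorem finrank_subalgebra_ne_zero [FiniteDimensional k H] (A : Subalgebra k H) :
    Module.finrank k A ≠ 0 := by
  have : Nontrivial H := (Bialgebra.counitAlgHom k H).toRingHom.domain_nontrivial
  exact Module.finrank_pos.ne'

variable [CharZero k] [IsAlgClosed k] [FiniteDimensional k H] [IsSemisimpleRing H]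

theorem IsNormalizedIntegral.apply_eq_zero_of_isNilpotent {Λ : H} (hΛ : IsNormalizedIntegral k Λ)
    {g : ConvDual k H} (hg : IsNilpotent g) : g.ofConv Λ = 0 := by
  have regular := regularElement_eq_finrank_smul (k := k) isHopfSubalgebra_top (Λ := Λ)
    ⟨trivial, hΛ.counit_eq_one, fun x _ => ⟨hΛ.eq_mul x, hΛ.mul_eq x⟩⟩
    (P := 1) (LinearMap.IsProj.top k H)
  have trace_eq_zero : LinearMap.trace k H (leftHit g.ofConv) = 0 :=
    (LinearMap.isNilpotent_trace_of_isNilpotent (hg.map (leftHitAlgHom k H))).eq_zero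
  have smul_eq_zero := apply_regularElement 1 g.ofConv
  rw [mul_one, trace_eq_zero, regular, map_smul, smul_eq_mul] at smul_eq_zero
  exact (mul_eq_zero.1 smul_eq_zero).resolve_left
    (Nat.cast_ne_zero.2 (finrank_subalgebra_ne_zero ⊤))

theorem isSemisimpleRing_convDual : IsSemisimpleRing (ConvDual k H) := by
  have : IsArtinianRing (ConvDual k H) := IsArtinianRing.of_finite k _
  rw [IsArtinianRing.isSemisimpleRing_iff_jacobson, eq_bot_iff]
  intro g hg
  obtain ⟨Λ, hΛ⟩ := exists_isNormalizedIntegral k H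
  obtain ⟨m, jacobson_pow⟩ := IsSemiprimaryRing.isNilpotent (R := ConvDual k H)
  have isNilpotent_of_mem {h} (hh : h ∈ Ring.jacobson (ConvDual k H)) : IsNilpotent h :=
    ⟨m, by simpa [jacobson_pow] using Ideal.pow_mem_pow hh m⟩
  refine congr(toConv $(LinearMap.ext fun y => ?_))
  obtain ⟨f, rfl⟩ : ∃ f : ConvDual k H, leftHit f.ofConv Λ = y :=
    ⟨toConv (mulPairing (traceIntegral k H) (antipode k y)),
      hΛ.antipode_bijective.1 (hΛ.antipode_leftHit_mulPairing_traceIntegral _)⟩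
  rw [apply_leftHit]
  exact hΛ.apply_eq_zero_of_isNilpotent (isNilpotent_of_mem (Ideal.mul_mem_right f _ hg))

theorem IsIdempotentIntegral.isCocomm {A : Subalgebra k H} (hA : IsHopfSubalgebra k H A) {Λ : H}
    (hΛ : IsIdempotentIntegral k H A Λ) : IsCocomm k H Λ := by
  obtain ⟨P, hP⟩ := exists_isProj A.toSubmodule
  have h := isCocomm_regularElement hA.1 hP
  rw [regularElement_eq_finrank_smul hA hΛ hP, ← mem_charRing_iff] at h
  rw [← mem_charRing_iff]
  exact ((charRing k H).smul_mem_iff (Nat.cast_ne_zero.2 (finrank_subalgebra_ne_zero A))).1 h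

theorem IsIdempotentIntegral.exists_finrank_mul_apply_eq_natCast {A : Subalgebra k H}
    (hA : IsHopfSubalgebra k H A) {Λ : H} (hΛ : IsIdempotentIntegral k H A Λ) {e : ConvDual k H}
    (he : IsIdempotentElem e) : ∃ m : ℕ, (Module.finrank k A : k) * e.ofConv Λ = m := by
  obtain ⟨P, hP⟩ := exists_isProj A.toSubmodule
  have isIdempotentElem : IsIdempotentElem (leftHit e.ofConv * P) := by
    ext y
    have square : leftHit e.ofConv * leftHit e.ofConv = leftHit e.ofConv := by
      rw [← leftHit_mul, he.eq]
    simp only [Module.End.mul_apply]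
    rw [hP.map_id _ (leftHit_mem hA.1 _ (hP.map_mem y)), ← Module.End.mul_apply, square]
  obtain ⟨m, -, trace_eq⟩ := exists_trace_eq_natCast_le_finrank isIdempotentElem
  refine ⟨m, ?_⟩
  rw [← trace_eq, ← apply_regularElement, regularElement_eq_finrank_smul hA hΛ hP, map_smul,
    smul_eq_mul]

end DualAlgebra

section Comatrix

/-- A comatrix: a square matrix over a coalgebra with `Δ(M_ab) = ∑ M_ac ⊗ M_cb`, that is, the
matrix of coefficients of a finite-dimensional comodule. -/
def IsComatrix (k : Type*) [Field k] {C : Type*} [AddCommGroup C] [Module k C] [Coalgebra k C]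
    {m : Type*} [Fintype m] (M : Matrix m m C) : Prop :=
  ∀ a b, comul (R := k) (M a b) = ∑ c, M a c ⊗ₜ[k] M c b

namespace IsComatrix

section Coalgebra

variable {k C : Type*} [Field k] [AddCommGroup C] [Module k C] [Coalgebra k C]
  {m : Type*} [Fintype m] {M : Matrix m m C}

theorem convMul_apply (hM : IsComatrix k M) (f g : ConvDual k C) (a b : m) :
    (f * g).ofConv (M a b) = ∑ c, f.ofConv (M a c) * g.ofConv (M c b) := by
  rw [LinearMap.convMul_apply, hM]
  simp

theorem of_convMul_apply (h : ∀ (f g : ConvDual k C) (a b : m),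
    (f * g).ofConv (M a b) = ∑ c, f.ofConv (M a c) * g.ofConv (M c b)) : IsComatrix k M :=
  fun a b => tensor_ext fun f g => by
    simpa [LinearMap.convMul_apply] using h (toConv f) (toConv g) a b

variable (hM : IsComatrix k M) {e : ConvDual k C} (he : IsIdempotentElem e)
include hM he

theorem isIdempotentElem_toLin' [DecidableEq m] :
    IsIdempotentElem (Matrix.toLin' (M.map e.ofConv)) := by
  rw [IsIdempotentElem, Module.End.mul_eq_comp, ← Matrix.toLin'_mul]
  congr 1
  ext a b
  rw [Matrix.mul_apply, Matrix.map_apply]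
  simp only [Matrix.map_apply]
  rw [← hM.convMul_apply, he.eq]

theorem exists_apply_trace_eq_natCast : ∃ t : ℕ, e.ofConv M.trace = t := by
  classical
  obtain ⟨t, -, ht⟩ := exists_trace_eq_natCast_le_finrank (hM.isIdempotentElem_toLin' he)
  refine ⟨t, ?_⟩
  rw [← ht, Matrix.trace_toLin'_eq, Matrix.trace, map_sum]
  rfl

theorem apply_eq_zero_of_apply_trace_eq_zero [CharZero k] (h₀ : e.ofConv M.trace = 0) (a b : m) :
    e.ofConv (M a b) = 0 := by
  classical
  have trace_eq_zero : LinearMap.trace k (m → k) (Matrix.toLin' (M.map e.ofConv)) = 0 := by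
    rw [Matrix.trace_toLin'_eq, ← h₀, Matrix.trace, Matrix.trace, map_sum]
    rfl
  have map_eq_zero : M.map e.ofConv = 0 := by
    simpa using (LinearMap.IsIdempotentElem.trace_eq_zero_iff
      (hM.isIdempotentElem_toLin' he)).1 trace_eq_zero
  exact congr($map_eq_zero a b)

end Coalgebra

variable {k H : Type*} [Field k] [Ring H] [Bialgebra k H] {m n : Type*} [Fintype m] [Fintype n]

theorem kronecker {M : Matrix m m H} {N : Matrix n n H} (hM : IsComatrix k M)
    (hN : IsComatrix k N) : IsComatrix k (Matrix.kroneckerMap (· * ·) M N) := by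
  rintro ⟨a, b⟩ ⟨a', b'⟩
  simp only [Matrix.kroneckerMap_apply, Bialgebra.comul_mul, hM a a', hN b b', Finset.sum_mul_sum,
    Algebra.TensorProduct.tmul_mul_tmul, Fintype.sum_prod_type]

end IsComatrix

/-- `x` is the character of a finite-dimensional comodule whose coefficient space contains `W`. -/
def IsComatrixTrace (k : Type*) [Field k] {C : Type*} [AddCommGroup C] [Module k C]
    [Coalgebra k C] (W : Submodule k C) (x : C) : Prop :=
  ∃ (m : Type) (_ : Fintype m) (M : Matrix m m C), IsComatrix k M ∧ M.trace = x ∧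
    W ≤ Submodule.span k (Set.range fun i : m × m => M i.1 i.2)

namespace IsComatrixTrace

section Coalgebra

variable {k C : Type*} [Field k] [AddCommGroup C] [Module k C] [Coalgebra k C]
  {W W' : Submodule k C} {x x' : C}

theorem zero : IsComatrixTrace k (⊥ : Submodule k C) 0 :=
  ⟨Empty, inferInstance, 0, fun a => a.elim, by simp, bot_le⟩

theorem add (h : IsComatrixTrace k W x) (h' : IsComatrixTrace k W' x') :
    IsComatrixTrace k (W ⊔ W') (x + x') := by
  obtain ⟨m, _, M, hM, rfl, hW⟩ := h
  obtain ⟨n, _, N, hN, rfl, hW'⟩ := h'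
  refine ⟨m ⊕ n, inferInstance, Matrix.fromBlocks M 0 0 N, ?_, by simp [Matrix.trace], ?_⟩
  · unfold IsComatrix at hM hN
    rintro (a | a) (b | b) <;> simp [hM, hN]
  · refine sup_le (hW.trans (Submodule.span_mono ?_)) (hW'.trans (Submodule.span_mono ?_))
    · rintro _ ⟨⟨a, b⟩, rfl⟩
      exact ⟨(.inl a, .inl b), rfl⟩
    · rintro _ ⟨⟨a, b⟩, rfl⟩
      exact ⟨(.inr a, .inr b), rfl⟩

theorem mono (h : IsComatrixTrace k W x) (hW : W' ≤ W) : IsComatrixTrace k W' x := by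
  obtain ⟨m, _, M, hM, hx, hspan⟩ := h
  exact ⟨m, _, M, hM, hx, hW.trans hspan⟩

theorem sum {ι : Type*} (s : Finset ι) {W : ι → Submodule k C} {x : ι → C}
    (h : ∀ i ∈ s, IsComatrixTrace k (W i) (x i)) :
    IsComatrixTrace k (s.sup W) (∑ i ∈ s, x i) := by
  classical
  induction s using Finset.induction_on with
  | empty => exact zero
  | insert i s hi ih =>
    rw [Finset.sup_insert, Finset.sum_insert hi]
    exact (h i (Finset.mem_insert_self ..)).add (ih fun j hj => h j (Finset.mem_insert_of_mem hj))

theorem exists_apply_eq_natCast (h : IsComatrixTrace k W x) {e : ConvDual k C}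
    (he : IsIdempotentElem e) : ∃ t : ℕ, e.ofConv x = t := by
  obtain ⟨m, _, M, hM, rfl, -⟩ := h
  exact hM.exists_apply_trace_eq_natCast he

theorem apply_eq_zero [CharZero k] (h : IsComatrixTrace k W x) {e : ConvDual k C}
    (he : IsIdempotentElem e) (h₀ : e.ofConv x = 0) {w : C} (hw : w ∈ W) : e.ofConv w = 0 := by
  obtain ⟨m, _, M, hM, rfl, hW⟩ := h
  have span_le_ker :
      Submodule.span k (Set.range fun i : m × m => M i.1 i.2) ≤ LinearMap.ker e.ofConv := by
    rw [Submodule.span_le]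
    rintro _ ⟨i, rfl⟩
    exact hM.apply_eq_zero_of_apply_trace_eq_zero he h₀ _ _
  exact span_le_ker (hW hw)

end Coalgebra

variable {k H : Type*} [Field k] [Ring H] [Bialgebra k H] {W W' : Submodule k H} {x x' : H}

theorem one : IsComatrixTrace k (1 : Submodule k H) 1 := by
  refine ⟨Unit, inferInstance, Matrix.of fun _ _ => 1, fun a b => ?_, by simp [Matrix.trace], ?_⟩
  · simp [Algebra.TensorProduct.one_def]
  · rw [Submodule.one_eq_span]
    exact Submodule.span_mono fun y hy => ⟨((), ()), hy.symm⟩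

theorem mul (h : IsComatrixTrace k W x) (h' : IsComatrixTrace k W' x') :
    IsComatrixTrace k (W * W') (x * x') := by
  obtain ⟨m, _, M, hM, rfl, hW⟩ := h
  obtain ⟨n, _, N, hN, rfl, hW'⟩ := h'
  refine ⟨m × n, inferInstance, _, hM.kronecker hN, ?_, (mul_le_mul' hW hW').trans ?_⟩
  · simp [Matrix.trace, Finset.sum_mul_sum, Fintype.sum_prod_type]
  · rw [Submodule.span_mul_span]
    refine Submodule.span_mono ?_
    rintro _ ⟨_, ⟨⟨a, b⟩, rfl⟩, _, ⟨⟨c, d⟩, rfl⟩, rfl⟩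
    exact ⟨((a, c), (b, d)), rfl⟩

theorem pow (h : IsComatrixTrace k W x) (j : ℕ) : IsComatrixTrace k (W ^ j) (x ^ j) := by
  induction j with
  | zero =>
    rw [pow_zero, pow_zero]
    exact one
  | succ j ih =>
    rw [pow_succ, pow_succ]
    exact ih.mul h

end IsComatrixTrace

end Comatrix

section Generated

theorem exists_mem_one_sup_pow_of_mem_adjoin {k R : Type*} [CommSemiring k] [Semiring R]
    [Algebra k R] {C : Submodule k R} {x : R} (hx : x ∈ Algebra.adjoin k (C : Set R)) :
    ∃ j : ℕ, x ∈ (1 ⊔ C) ^ j := by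
  have pow_mono {i j : ℕ} (h : i ≤ j) : (1 ⊔ C) ^ i ≤ (1 ⊔ C) ^ j :=
    pow_le_pow_right' le_sup_left h
  induction hx using Algebra.adjoin_induction with
  | mem x hx => exact ⟨1, by simpa using Submodule.mem_sup_right hx⟩
  | algebraMap r => exact ⟨0, by simp⟩
  | add x y _ _ hx hy =>
    obtain ⟨i, hi⟩ := hx
    obtain ⟨j, hj⟩ := hy
    exact ⟨i + j, add_mem (pow_mono le_self_add hi) (pow_mono le_add_self hj)⟩
  | mul x y _ _ hx hy =>
    obtain ⟨i, hi⟩ := hx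
    obtain ⟨j, hj⟩ := hy
    exact ⟨i + j, by simpa only [pow_add] using Submodule.mul_mem_mul hi hj⟩

theorem mem_subalgebra_of_mul_eq_one {k R : Type*} [Field k] [Ring R] [Algebra k R]
    [FiniteDimensional k R] (T : Subalgebra k R) {a b : R} (ha : a ∈ T) (hba : b * a = 1) :
    b ∈ T := by
  have left_cancel {s : R} : b * (a * s) = s := by rw [← mul_assoc, hba, one_mul]
  have injective : Function.Injective (LinearMap.mulLeft k (⟨a, ha⟩ : T)) := fun s t h =>
    Subtype.ext <| by
      rw [← left_cancel (s := s), ← left_cancel (s := t)]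
      exact congr(b * ($h : R))
  obtain ⟨t, ht⟩ := LinearMap.surjective_of_injective injective 1
  have a_mul_t : a * (t : R) = 1 := congr(($ht : R))
  rw [← mul_one b, ← a_mul_t, left_cancel]
  exact t.2

variable {k : Type} [Field k] {H : Type} [Ring H] [HopfAlgebra k H]

theorem isSubcoalgebra_adjoin {C : Submodule k H} (hC : IsSubcoalgebra k H C) :
    IsSubcoalgebra k H (Algebra.adjoin k (C : Set H)).toSubmodule := by
  let A := Algebra.adjoin k (C : Set H)
  have C_le : C ≤ A.toSubmodule := Algebra.subset_adjoin
  let φ := Algebra.TensorProduct.map A.val A.val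
  have A_le : A ≤ φ.range.comap (Bialgebra.comulAlgHom k H) := by
    refine Algebra.adjoin_le fun c hc => ?_
    obtain ⟨r, hr⟩ := exists_repr_mem hC hc
    change comul (R := k) c ∈ φ.range
    rw [← r.eq]
    exact Subalgebra.sum_mem _ fun i _ =>
      ⟨(⟨_, C_le (hr i).1⟩ : A) ⊗ₜ (⟨_, C_le (hr i).2⟩ : A), Algebra.TensorProduct.map_tmul ..⟩
  intro c hc
  obtain ⟨t, ht⟩ := A_le hc
  exact ⟨t, ht⟩

/-- The linear endomorphisms of `H` which preserve a given subalgebra and subcoalgebra, as a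
subalgebra of the convolution algebra. -/
def convStabilizer {A : Subalgebra k H} (hA : IsSubcoalgebra k H A.toSubmodule) :
    Subalgebra k (WithConv (H →ₗ[k] H)) where
  carrier := {f | ∀ x ∈ A, f.ofConv x ∈ A}
  mul_mem' := by
    intro f g hf hg x hx
    obtain ⟨r, hr⟩ := exists_repr_mem hA hx
    rw [r.convMul_apply]
    exact A.sum_mem fun i _ => A.mul_mem (hf _ (hr i).1) (hg _ (hr i).2)
  add_mem' := fun hf hg x hx => A.add_mem (hf x hx) (hg x hx)
  algebraMap_mem' := by
    intro c x _
    rw [Algebra.algebraMap_eq_smul_one, ofConv_smul, LinearMap.smul_apply, LinearMap.convOne_apply]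
    exact A.smul_mem (A.algebraMap_mem _) _

-- The antipode is the convolution inverse of the identity, which preserves `A`.
theorem isHopfSubalgebra_of_isSubcoalgebra [FiniteDimensional k H] {A : Subalgebra k H}
    (hA : IsSubcoalgebra k H A.toSubmodule) : IsHopfSubalgebra k H A := by
  have : FiniteDimensional k (WithConv (H →ₗ[k] H)) :=
    Module.Finite.equiv (WithConv.linearEquiv k (H →ₗ[k] H)).symm
  exact ⟨hA, mem_subalgebra_of_mul_eq_one (convStabilizer hA) (a := toConv LinearMap.id)
    (fun _ hx => hx) LinearMap.antipode_mul_id⟩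

end Generated

section Coefficients

variable {k C : Type*} [Field k] [AddCommGroup C] [Module k C] [Coalgebra k C]
  {n : ℕ} {d : Fin n → ℕ} (φ : ConvDual k C ≃ₐ[k] ∀ l, Matrix (Fin (d l)) (Fin (d l)) k)

/-- The matrix units of the split semisimple dual algebra, as functionals; they are dual to the
matrix coefficients `coeff`. -/
def coeffDual (l : Fin n) (a b : Fin (d l)) : ConvDual k C :=
  φ.symm (blockUnit k l a b)

theorem coeffDual_mul_mul_coeffDual (l : Fin n) (a a' b b' : Fin (d l)) (f : ConvDual k C) :
    coeffDual φ l a a' * f * coeffDual φ l b' b = φ f l a' b' • coeffDual φ l a b := by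
  apply φ.injective
  simp only [coeffDual, map_mul, map_smul, AlgEquiv.apply_symm_apply]
  funext l'
  obtain rfl | h := eq_or_ne l' l
  · simp [Matrix.single_mul_mul_single]
  · simp [h]

theorem coeffDual_mul_coeffDual (l : Fin n) (a b b' c : Fin (d l)) :
    coeffDual φ l a b * coeffDual φ l b' c = if b = b' then coeffDual φ l a c else 0 := by
  have h := coeffDual_mul_mul_coeffDual φ l a b c b' 1
  rw [mul_one, map_one, Pi.one_apply, Matrix.one_apply] at h
  simpa using h

/-- A primitive idempotent in the `l`-th block of the dual algebra. Its value on a cocommutative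
element is the coefficient of `irrChar φ l` there. -/
def irrIdem [∀ l, NeZero (d l)] (l : Fin n) : ConvDual k C :=
  coeffDual φ l 0 0

theorem isIdempotentElem_irrIdem [∀ l, NeZero (d l)] (l : Fin n) :
    IsIdempotentElem (irrIdem φ l) := by
  rw [IsIdempotentElem, irrIdem, coeffDual_mul_coeffDual, if_pos rfl]

variable [FiniteDimensional k C]

/-- The matrix coefficients of the `l`-th irreducible representation of the dual algebra, as
elements of the coalgebra through `C ≃ C**`. -/
def coeff (l : Fin n) : Matrix (Fin (d l)) (Fin (d l)) C := fun a b =>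
  (Module.evalEquiv k C).symm
    (LinearMap.proj b ∘ₗ LinearMap.proj a ∘ₗ LinearMap.proj l ∘ₗ φ.toLinearMap ∘ₗ
      (WithConv.linearEquiv k (C →ₗ[k] k)).symm.toLinearMap)

/-- The coefficient space of the `l`-th irreducible representation of the dual algebra; for a
Hopf algebra these are the simple subcoalgebras. -/
def coeffSpan (l : Fin n) : Submodule k C :=
  Submodule.span k (Set.range fun i : Fin (d l) × Fin (d l) => coeff φ l i.1 i.2)

/-- The character of the `l`-th irreducible representation of the dual algebra, as an element of
the coalgebra. -/
def irrChar (l : Fin n) : C :=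
  (coeff φ l).trace

theorem apply_coeff (f : ConvDual k C) (l : Fin n) (a b : Fin (d l)) :
    f.ofConv (coeff φ l a b) = φ f l a b :=
  Module.apply_evalEquiv_symm_apply (R := k) (M := C) f.ofConv _

theorem isComatrix_coeff (l : Fin n) : IsComatrix k (coeff φ l) := by
  refine .of_convMul_apply fun f g a b => ?_
  simp only [apply_coeff, map_mul, Pi.mul_apply, Matrix.mul_apply]

theorem coeff_mem_coeffSpan (l : Fin n) (a b : Fin (d l)) : coeff φ l a b ∈ coeffSpan φ l :=
  Submodule.subset_span ⟨(a, b), rfl⟩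

theorem counit_coeff (l : Fin n) (a b : Fin (d l)) :
    counit (R := k) (coeff φ l a b) = if a = b then 1 else 0 := by
  have h := apply_coeff φ 1 l a b
  rw [map_one] at h
  exact h

theorem counit_irrChar (l : Fin n) : counit (R := k) (irrChar φ l) = d l := by
  simp [irrChar, Matrix.trace, counit_coeff]

theorem isComatrixTrace_irrChar (l : Fin n) : IsComatrixTrace k (coeffSpan φ l) (irrChar φ l) :=
  ⟨_, inferInstance, _, isComatrix_coeff φ l, rfl, le_rfl⟩

theorem coeffDual_apply_coeff (l l' : Fin n) (a b : Fin (d l)) (a' b' : Fin (d l')) :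
    (coeffDual φ l a b).ofConv (coeff φ l' a' b') =
      blockUnit (m := fun l => Fin (d l)) k l a b l' a' b' := by
  rw [apply_coeff, coeffDual, AlgEquiv.apply_symm_apply]

theorem eq_sum_coeff (x : C) :
    x = ∑ l, ∑ a, ∑ b, (coeffDual φ l a b).ofConv x • coeff φ l a b := by
  refine eq_of_forall_dual_apply_eq (k := k) fun f => ?_
  have eq_sum_coeffDual :
      toConv f = ∑ l, ∑ a, ∑ b, φ (toConv f) l a b • coeffDual φ l a b := by
    apply φ.injective
    simp only [map_sum, map_smul, coeffDual, AlgEquiv.apply_symm_apply]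
    exact eq_sum_smul_blockUnit _
  have apply_eq := congr(($eq_sum_coeffDual).ofConv x)
  simp only [ofConv_sum, ofConv_smul, LinearMap.sum_apply, LinearMap.smul_apply,
    ← apply_coeff] at apply_eq
  rw [apply_eq]
  simp only [map_sum, map_smul, smul_eq_mul, mul_comm]

theorem exists_coeffDual_apply_ne_zero {x : C} (hx : x ≠ 0) :
    ∃ l a b, (coeffDual φ l a b).ofConv x ≠ 0 := by
  by_contra! h
  exact hx ((eq_sum_coeff φ x).trans (by simp [h]))

theorem rightHit_leftHit_coeffDual (l : Fin n) (a a' b b' : Fin (d l)) (x : C) :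
    rightHit (coeffDual φ l a a').ofConv (leftHit (coeffDual φ l b' b).ofConv x) =
      (coeffDual φ l a b).ofConv x • coeff φ l a' b' := by
  refine eq_of_forall_dual_apply_eq (k := k) fun f => ?_
  rw [apply_rightHit, toConv_ofConv, apply_leftHit, toConv_ofConv, toConv_ofConv,
    coeffDual_mul_mul_coeffDual, ofConv_smul, LinearMap.smul_apply, map_smul, smul_eq_mul,
    smul_eq_mul, mul_comm, ← apply_coeff, ofConv_toConv]

theorem coeffDual_apply_eq_zero_of_mem {l l' : Fin n} (hl : l ≠ l') {x : C}
    (hx : x ∈ coeffSpan φ l') (a b : Fin (d l)) : (coeffDual φ l a b).ofConv x = 0 := by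
  have coeffSpan_le_ker : coeffSpan φ l' ≤ LinearMap.ker (coeffDual φ l a b).ofConv := by
    rw [coeffSpan, Submodule.span_le]
    rintro _ ⟨⟨a', b'⟩, rfl⟩
    rw [SetLike.mem_coe, LinearMap.mem_ker, coeffDual_apply_coeff, blockUnit,
      Pi.single_eq_of_ne hl.symm, Matrix.zero_apply]
  exact coeffSpan_le_ker hx

theorem linearIndependent_coeff (l : Fin n) :
    LinearIndependent k fun i : Fin (d l) × Fin (d l) => coeff φ l i.1 i.2 := by
  rw [Fintype.linearIndependent_iff]
  rintro g hg ⟨a, b⟩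
  have h := congr((coeffDual φ l a b).ofConv $hg)
  simpa [coeffDual_apply_coeff, Matrix.single_apply, Fintype.sum_prod_type, ite_and] using h

theorem finrank_coeffSpan (l : Fin n) : Module.finrank k (coeffSpan φ l) = d l * d l := by
  rw [coeffSpan, finrank_span_eq_card (linearIndependent_coeff φ l)]
  simp

variable [∀ l, NeZero (d l)]

theorem coeffSpan_ne_bot (l : Fin n) : coeffSpan φ l ≠ ⊥ := by
  rw [← Submodule.finrank_eq_zero.ne, finrank_coeffSpan]
  exact mul_ne_zero (NeZero.ne _) (NeZero.ne _)

theorem eq_of_coeffSpan_le {l l' : Fin n} (h : coeffSpan φ l ≤ coeffSpan φ l') : l = l' := by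
  by_contra hl
  have apply_coeff_self := coeffDual_apply_coeff φ l l 0 0 0 0
  rw [coeffDual_apply_eq_zero_of_mem φ hl (h (coeff_mem_coeffSpan φ l 0 0))] at apply_coeff_self
  simp at apply_coeff_self

end Coefficients

section SimpleSubcoalgebras

variable {k : Type} [Field k] {H : Type} [Ring H] [HopfAlgebra k H] [FiniteDimensional k H]
  {n : ℕ} {d : Fin n → ℕ} (φ : ConvDual k H ≃ₐ[k] ∀ l, Matrix (Fin (d l)) (Fin (d l)) k)

theorem isSubcoalgebra_coeffSpan (l : Fin n) : IsSubcoalgebra k H (coeffSpan φ l) := by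
  have coeffSpan_le_comap : coeffSpan φ l ≤ (LinearMap.range (TensorProduct.map
      (coeffSpan φ l).subtype (coeffSpan φ l).subtype)).comap (comul (R := k)) := by
    conv_lhs => rw [coeffSpan]
    rw [Submodule.span_le]
    rintro _ ⟨⟨a, b⟩, rfl⟩
    rw [SetLike.mem_coe, Submodule.mem_comap, isComatrix_coeff φ l a b]
    exact Submodule.sum_mem _ fun c _ =>
      ⟨(⟨_, coeff_mem_coeffSpan φ l a c⟩ : coeffSpan φ l) ⊗ₜ
        (⟨_, coeff_mem_coeffSpan φ l c b⟩ : coeffSpan φ l), TensorProduct.map_tmul ..⟩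
  exact fun c hc => coeffSpan_le_comap hc

theorem coeffSpan_le {C : Submodule k H} (hC : IsSubcoalgebra k H C) {x : H} (hx : x ∈ C)
    {l : Fin n} {a b : Fin (d l)} (h : (coeffDual φ l a b).ofConv x ≠ 0) : coeffSpan φ l ≤ C := by
  rw [coeffSpan, Submodule.span_le]
  rintro _ ⟨⟨a', b'⟩, rfl⟩
  have hit_mem := rightHit_mem hC (coeffDual φ l a a').ofConv
    (leftHit_mem hC (coeffDual φ l b' b).ofConv hx)
  rw [rightHit_leftHit_coeffDual] at hit_mem
  exact (C.smul_mem_iff h).1 hit_mem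

theorem exists_coeffSpan_le {C : Submodule k H} (hC : IsSubcoalgebra k H C) (h₀ : C ≠ ⊥) :
    ∃ l, coeffSpan φ l ≤ C := by
  obtain ⟨x, hx, hx₀⟩ := C.ne_bot_iff.1 h₀
  obtain ⟨l, a, b, h⟩ := exists_coeffDual_apply_ne_zero φ hx₀
  exact ⟨l, coeffSpan_le φ hC hx h⟩

variable [∀ l, NeZero (d l)]

theorem isSimpleSubcoalgebra_coeffSpan (l : Fin n) :
    IsSimpleSubcoalgebra k H (coeffSpan φ l) := by
  refine ⟨isSubcoalgebra_coeffSpan φ l, coeffSpan_ne_bot φ l, fun D hDl hD hD₀ => ?_⟩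
  obtain ⟨l', hl'⟩ := exists_coeffSpan_le φ hD hD₀
  obtain rfl := eq_of_coeffSpan_le φ (hl'.trans hDl)
  exact le_antisymm hDl hl'

theorem IsSimpleSubcoalgebra.exists_eq_coeffSpan {D : Submodule k H}
    (hD : IsSimpleSubcoalgebra k H D) : ∃ l, D = coeffSpan φ l := by
  obtain ⟨l, hl⟩ := exists_coeffSpan_le φ hD.1 hD.2.1
  exact ⟨l, (hD.2.2 _ hl (isSubcoalgebra_coeffSpan φ l) (coeffSpan_ne_bot φ l)).symm⟩

end SimpleSubcoalgebras

section IrreducibleCharacters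

variable {k : Type} [Field k] {H : Type} [Ring H] [HopfAlgebra k H]
  {n : ℕ} {d : Fin n → ℕ} (φ : ConvDual k H ≃ₐ[k] ∀ l, Matrix (Fin (d l)) (Fin (d l)) k)

theorem IsCocomm.coeffDual_apply [∀ l, NeZero (d l)] {x : H} (hx : IsCocomm k H x)
    (l : Fin n) (a b : Fin (d l)) :
    (coeffDual φ l a b).ofConv x = if a = b then (irrIdem φ l).ofConv x else 0 := by
  have apply_mul_comm := isCocomm_iff.1 hx (coeffDual φ l a 0) (coeffDual φ l 0 b)
  rw [coeffDual_mul_coeffDual, coeffDual_mul_coeffDual, if_pos rfl] at apply_mul_comm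
  rw [apply_mul_comm, irrIdem]
  obtain rfl | h := eq_or_ne a b
  · rw [if_pos rfl, if_pos rfl]
  · rw [if_neg h, if_neg h.symm, ofConv_zero, LinearMap.zero_apply]

variable [FiniteDimensional k H]

theorem isCocomm_irrChar (l : Fin n) : IsCocomm k H (irrChar φ l) := by
  rw [isCocomm_iff]
  intro f g
  simp only [irrChar, Matrix.trace, map_sum, Matrix.diag_apply,
    (isComatrix_coeff φ l).convMul_apply]
  rw [Finset.sum_comm]
  simp only [mul_comm]

variable [∀ l, NeZero (d l)]

theorem IsCocomm.eq_sum_irrChar {x : H} (hx : IsCocomm k H x) :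
    x = ∑ l, (irrIdem φ l).ofConv x • irrChar φ l := by
  conv_lhs => rw [eq_sum_coeff φ x]
  simp [hx.coeffDual_apply φ, irrChar, Matrix.trace, Finset.smul_sum, ite_smul]

theorem IsCocomm.counit_eq_sum {x : H} (hx : IsCocomm k H x) :
    counit (R := k) x = ∑ l, (irrIdem φ l).ofConv x * d l := by
  conv_lhs => rw [hx.eq_sum_irrChar φ]
  simp [counit_irrChar]

theorem IsCharacterOf.eq_irrChar [CharZero k] {x : H} {l : Fin n}
    (hx : IsCharacterOf k H x (coeffSpan φ l)) : x = irrChar φ l := by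
  obtain ⟨hmem, hco, hε⟩ := hx
  have eq_smul : x = (irrIdem φ l).ofConv x • irrChar φ l := by
    conv_lhs => rw [hco.eq_sum_irrChar φ]
    refine Finset.sum_eq_single l (fun l' _ hl' => ?_) (by simp)
    rw [irrIdem, coeffDual_apply_eq_zero_of_mem φ hl' hmem, zero_smul]
  have counit_eq := congr(counit (R := k) $eq_smul)
  rw [hε, finrank_coeffSpan, Nat.sqrt_eq, map_smul, counit_irrChar, smul_eq_mul] at counit_eq
  have dim_ne_zero : (d l : k) ≠ 0 := Nat.cast_ne_zero.2 (NeZero.ne _)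
  rw [eq_smul, (mul_eq_right₀ dim_ne_zero).1 counit_eq.symm, one_smul]

theorem exists_irrIdem_apply_mul_eq_natCast (l i j : Fin n) :
    ∃ t : ℕ, (irrIdem φ l).ofConv (irrChar φ i * irrChar φ j) = t :=
  ((isComatrixTrace_irrChar φ i).mul (isComatrixTrace_irrChar φ j)).exists_apply_eq_natCast
    (isIdempotentElem_irrIdem φ l)

end IrreducibleCharacters

section PerronFrobenius

variable {ι : Type*} [Fintype ι]

theorem eq_zero_of_smul_le_mulVec {R : Type*} [CommRing R] [LinearOrder R] [IsStrictOrderedRing R]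
    {M : Matrix ι ι R} {v w : ι → R} {μ ν : R} (hv : ∀ i, 0 < v i)
    (hvM : Matrix.vecMul v M = ν • v) (hw : 0 ≤ w) (hMw : μ • w ≤ M.mulVec w) (hlt : ν < μ) :
    w = 0 := by
  have term_nonneg (i : ι) : 0 ≤ v i * w i := mul_nonneg (hv i).le (hw i)
  have mul_dotProduct_le : μ * (v ⬝ᵥ w) ≤ ν * (v ⬝ᵥ w) := calc
    μ * (v ⬝ᵥ w) = v ⬝ᵥ (μ • w) := by rw [dotProduct_smul, smul_eq_mul]
    _ ≤ v ⬝ᵥ M.mulVec w := dotProduct_le_dotProduct_of_nonneg_left hMw fun i => (hv i).le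
    _ = ν * (v ⬝ᵥ w) := by rw [Matrix.dotProduct_mulVec, hvM, smul_dotProduct, smul_eq_mul]
  have dotProduct_eq_zero : ∑ i, v i * w i = 0 := by
    refine le_antisymm (le_of_not_gt fun hpos => ?_) (Finset.sum_nonneg fun i _ => term_nonneg i)
    exact hlt.not_ge (le_of_mul_le_mul_right mul_dotProduct_le hpos)
  funext i
  have := (Finset.sum_eq_zero_iff_of_nonneg fun i _ => term_nonneg i).1 dotProduct_eq_zero i
    (Finset.mem_univ i)
  exact (mul_eq_zero.1 this).resolve_left (hv i).ne'

theorem eq_zero_of_nsmul_eq_sum_nsmul {V : Type*} [AddCommGroup V] [Module ℚ V]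
    {M : Matrix ι ι ℕ} {v : ι → ℕ} {μ ν : ℕ} (hv : ∀ i, v i ≠ 0)
    (hvM : Matrix.vecMul v M = ν • v) (hlt : ν < μ) {z : ι → V}
    (hz : ∀ i, μ • z i = ∑ j, M i j • z j) : z = 0 := by
  funext i
  refine (Module.forall_dual_apply_eq_zero_iff ℚ (z i)).1 fun ψ => ?_
  have abs_apply_eq_zero : (fun i => |ψ (z i)|) = 0 := by
    refine eq_zero_of_smul_le_mulVec (M := M.map Nat.cast) (v := fun i => (v i : ℚ))
      (fun i => Nat.cast_pos.2 (Nat.pos_of_ne_zero (hv i))) ?_ (fun i => abs_nonneg _)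
      (fun i => ?_) (Nat.cast_lt.2 hlt)
    · funext j
      have := congrFun hvM j
      simp only [Matrix.vecMul, dotProduct, Pi.smul_apply, smul_eq_mul, Matrix.map_apply] at this ⊢
      exact_mod_cast this
    · calc (μ : ℚ) * |ψ (z i)| = |∑ j, (M i j : ℚ) * ψ (z j)| := by
            rw [← Nat.abs_cast μ, ← abs_mul, ← nsmul_eq_mul, ← map_nsmul, hz, map_sum]
            simp only [map_nsmul, nsmul_eq_mul]
        _ ≤ ∑ j, |(M i j : ℚ) * ψ (z j)| := Finset.abs_sum_le_sum_abs ..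
        _ = ∑ j, (M i j : ℚ) * |ψ (z j)| := by simp only [abs_mul, Nat.abs_cast]
  exact abs_eq_zero.1 (congrFun abs_apply_eq_zero i)

end PerronFrobenius

section NaturalCoefficients

variable {k : Type} [Field k] {H : Type} [Ring H] [HopfAlgebra k H]

/-- The character ring `C(H*)` of cocommutative elements, as a subalgebra of `H`. -/
def cocommSubalgebra (k : Type) [Field k] (H : Type) [Ring H] [HopfAlgebra k H] :
    Subalgebra k H :=
  AlgHom.equalizer ((Algebra.TensorProduct.comm k H H : H ⊗[k] H →ₐ[k] H ⊗[k] H).comp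
    (Bialgebra.comulAlgHom k H)) (Bialgebra.comulAlgHom k H)

variable [FiniteDimensional k H] {n : ℕ} {d : Fin n → ℕ} [∀ l, NeZero (d l)]
  (φ : ConvDual k H ≃ₐ[k] ∀ l, Matrix (Fin (d l)) (Fin (d l)) k)

theorem IsCocomm.exists_irrIdem_apply_mul_irrChar_eq_natCast {q : H} (hq : IsCocomm k H q)
    (hnat : ∀ l, ∃ t : ℕ, (irrIdem φ l).ofConv q = t) (l j : Fin n) :
    ∃ t : ℕ, (irrIdem φ l).ofConv (q * irrChar φ j) = t := by
  choose Q hQ using hnat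
  choose T hT using exists_irrIdem_apply_mul_eq_natCast φ
  refine ⟨∑ i, Q i * T l i j, ?_⟩
  conv_lhs => rw [hq.eq_sum_irrChar φ]
  simp [Finset.sum_mul, hT, hQ]

theorem eq_zero_of_mul_eq_counit_add_natCast_smul [CharZero k] {q y : H} (hq : IsCocomm k H q)
    (hy : IsCocomm k H y) (hnat : ∀ l, ∃ t : ℕ, (irrIdem φ l).ofConv q = t) {r : ℕ} (hr : r ≠ 0)
    (hqy : q * y = (counit (R := k) q + r) • y) : y = 0 := by
  choose M hM using hq.exists_irrIdem_apply_mul_irrChar_eq_natCast φ hnat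
  choose Q hQ using hnat
  have counit_eq : counit (R := k) q = (∑ l, Q l * d l : ℕ) := by
    simp [hq.counit_eq_sum φ, hQ]
  have vecMul_eq : Matrix.vecMul d (Matrix.of M) = (∑ l, Q l * d l) • d := by
    funext j
    have counit_mul_eq := IsCocomm.counit_eq_sum φ
      ((cocommSubalgebra k H).mul_mem hq (isCocomm_irrChar φ j))
    rw [Bialgebra.counit_mul, counit_irrChar, counit_eq] at counit_mul_eq
    simp only [hM] at counit_mul_eq
    simp only [Matrix.vecMul, dotProduct, Matrix.of_apply, Pi.smul_apply, smul_eq_mul,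
      mul_comm (d _)]
    exact_mod_cast counit_mul_eq.symm
  have irrIdem_apply_eq_zero : (fun l => (irrIdem φ l).ofConv y) = 0 := by
    refine eq_zero_of_nsmul_eq_sum_nsmul (μ := ∑ l, Q l * d l + r) (fun l => NeZero.ne (d l))
      vecMul_eq (Nat.lt_add_of_pos_right (Nat.pos_of_ne_zero hr)) fun l => ?_
    calc (∑ l, Q l * d l + r) • (irrIdem φ l).ofConv y = (irrIdem φ l).ofConv (q * y) := by
          rw [hqy, counit_eq, map_smul, nsmul_eq_mul, smul_eq_mul, Nat.cast_add]
      _ = ∑ j, M l j • (irrIdem φ j).ofConv y := by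
          conv_lhs => rw [hy.eq_sum_irrChar φ]
          simp [Finset.mul_sum, hM, mul_comm]
  rw [hy.eq_sum_irrChar φ]
  exact Finset.sum_eq_zero fun l _ => by
    rw [congrFun irrIdem_apply_eq_zero l, Pi.zero_apply, zero_smul]

end NaturalCoefficients

section AssocCharacter

variable {k : Type} [Field k] {H : Type} [Ring H] [HopfAlgebra k H] {C : Submodule k H} {x : H}

theorem IsAssocCharacter.mem (hx : IsAssocCharacter k H x C) : x ∈ C := by
  obtain ⟨s, f, hs, -, rfl⟩ := hx
  exact C.sum_mem fun D hD => (hs D hD).2.1 (hs D hD).2.2.1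

theorem IsAssocCharacter.isCocomm (hx : IsAssocCharacter k H x C) : IsCocomm k H x := by
  obtain ⟨s, f, hs, -, rfl⟩ := hx
  exact (cocommSubalgebra k H).sum_mem fun D hD => (hs D hD).2.2.2.1

theorem IsAssocCharacter.isComatrixTrace [CharZero k] [FiniteDimensional k H] {n : ℕ}
    {d : Fin n → ℕ} [∀ l, NeZero (d l)]
    (φ : ConvDual k H ≃ₐ[k] ∀ l, Matrix (Fin (d l)) (Fin (d l)) k)
    (hx : IsAssocCharacter k H x C) (hC : IsSubcoalgebra k H C) : IsComatrixTrace k C x := by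
  obtain ⟨s, f, hs, mem_s, rfl⟩ := hx
  have isComatrixTrace_of_mem (D) (hD : D ∈ s) : IsComatrixTrace k D (f D) := by
    obtain ⟨hsimple, -, hf⟩ := hs D hD
    obtain ⟨l, rfl⟩ := hsimple.exists_eq_coeffSpan φ
    rw [hf.eq_irrChar φ]
    exact isComatrixTrace_irrChar φ l
  have le_sup : C ≤ s.sup id := fun y hy => by
    rw [eq_sum_coeff φ y]
    refine Submodule.sum_mem _ fun l _ => Submodule.sum_mem _ fun a _ =>
      Submodule.sum_mem _ fun b _ => ?_
    by_cases h : (coeffDual φ l a b).ofConv y = 0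
    · rw [h, zero_smul]
      exact Submodule.zero_mem _
    · exact Submodule.smul_mem _ _ (Finset.le_sup (f := id)
        (mem_s _ (isSimpleSubcoalgebra_coeffSpan φ l) (coeffSpan_le φ hC hy h))
        (coeff_mem_coeffSpan φ l a b))
  exact (IsComatrixTrace.sum s (W := id) isComatrixTrace_of_mem).mono le_sup

end AssocCharacter

section PrincipalEigenspace

theorem exists_forall_le_mul {ι : Type*} [Finite ι] {a b : ι → ℕ} (h : ∀ i, b i = 0 → a i = 0) :
    ∃ K, ∀ i, a i ≤ K * b i := by
  have := Fintype.ofFinite ι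
  refine ⟨∑ i, a i, fun i => ?_⟩
  obtain hb | hb := eq_or_ne (b i) 0
  · rw [h i hb, hb, mul_zero]
  · exact (Finset.single_le_sum (fun _ _ => Nat.zero_le _) (Finset.mem_univ i)).trans
      (Nat.le_mul_of_pos_right _ (Nat.pos_of_ne_zero hb))

theorem pow_mul_eq_pow_smul {k R : Type*} [CommSemiring k] [Semiring R] [Algebra k R] {x y : R}
    {c : k} (h : x * y = c • y) (j : ℕ) : x ^ j * y = c ^ j • y := by
  induction j with
  | zero => rw [pow_zero, pow_zero, one_mul, one_smul]
  | succ j ih => rw [pow_succ, mul_assoc, h, mul_smul_comm, ih, smul_smul, pow_succ']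

variable {k : Type} [Field k] {H : Type} [Ring H] [HopfAlgebra k H]

theorem IsIdempotentIntegral.isIdempotentElem {A : Subalgebra k H} {Λ : H}
    (hΛ : IsIdempotentIntegral k H A Λ) : IsIdempotentElem Λ := by
  rw [IsIdempotentElem, (hΛ.2.2 Λ hΛ.1).1, hΛ.2.1, one_smul]

variable [CharZero k] [IsAlgClosed k] [FiniteDimensional k H] [IsSemisimpleRing H]
  {A : Subalgebra k H} (hA : IsHopfSubalgebra k H A) {Λ : H} (hΛ : IsIdempotentIntegral k H A Λ)

include hA hΛ

theorem IsIdempotentIntegral.exists_apply_nsmul_sub_nsmul_eq_natCast {ι : Type*} [Finite ι]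
    {e : ι → ConvDual k H} (he : ∀ i, IsIdempotentElem (e i)) {W : Submodule k H} {p : H}
    (hp : IsComatrixTrace k W p) (hΛW : Λ ∈ W) :
    ∃ K : ℕ, ∀ i, ∃ t : ℕ, (e i).ofConv (K • p - Module.finrank k A • Λ) = t := by
  choose a ha using fun i => hΛ.exists_finrank_mul_apply_eq_natCast hA (he i)
  choose b hb using fun i => hp.exists_apply_eq_natCast (he i)
  obtain ⟨K, hK⟩ : ∃ K, ∀ i, a i ≤ K * b i := by
    refine exists_forall_le_mul fun i hi => ?_
    have apply_eq_zero : (e i).ofConv Λ = 0 :=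
      hp.apply_eq_zero (he i) (by rw [hb, hi, Nat.cast_zero]) hΛW
    have := ha i
    rw [apply_eq_zero, mul_zero] at this
    exact_mod_cast this.symm
  refine ⟨K, fun i => ⟨K * b i - a i, ?_⟩⟩
  rw [map_sub, map_nsmul, map_nsmul, nsmul_eq_mul, nsmul_eq_mul, ha, hb, Nat.cast_sub (hK i),
    Nat.cast_mul]

variable {C : Submodule k H} (hC : IsSubcoalgebra k H C) (hΛC : Λ ∈ Algebra.adjoin k (C : Set H))
  {x : H} (hx : IsAssocCharacter k H x C) {y : H} (hy : IsCocomm k H y)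
  (hxy : x * y = counit (R := k) x • y)

include hC hΛC hx hy hxy

theorem eq_zero_of_mul_eq_counit_smul (hΛy : Λ * y = 0) : y = 0 := by
  have := isSemisimpleRing_convDual (k := k) (H := H)
  obtain ⟨n, d, _, ⟨φ⟩⟩ :=
    IsSemisimpleRing.exists_algEquiv_pi_matrix_of_isAlgClosed k (ConvDual k H)
  obtain ⟨j, mem_pow⟩ := exists_mem_one_sup_pow_of_mem_adjoin hΛC
  obtain ⟨K, hK⟩ := hΛ.exists_apply_nsmul_sub_nsmul_eq_natCast hA (isIdempotentElem_irrIdem φ)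
    ((IsComatrixTrace.one.add (hx.isComatrixTrace φ hC)).pow j) mem_pow
  have pow_mul_eq : (1 + x) ^ j * y = counit (R := k) ((1 + x) ^ j) • y := by
    rw [Bialgebra.counit_pow]
    refine pow_mul_eq_pow_smul ?_ j
    rw [add_mul, one_mul, hxy, map_add, Bialgebra.counit_one, add_smul, one_smul]
  have isCocomm : IsCocomm k H (K • (1 + x) ^ j - Module.finrank k A • Λ) :=
    sub_mem (nsmul_mem (pow_mem (add_mem (one_mem (cocommSubalgebra k H)) hx.isCocomm) j) K)
      (nsmul_mem (hΛ.isCocomm hA) _)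
  refine eq_zero_of_mul_eq_counit_add_natCast_smul φ isCocomm hy hK
    (finrank_subalgebra_ne_zero A) ?_
  rw [sub_mul, smul_mul_assoc, smul_mul_assoc, hΛy, smul_zero, sub_zero, pow_mul_eq, map_sub,
    map_nsmul, map_nsmul, hΛ.2.1, nsmul_one, sub_add_cancel, smul_assoc]

theorem IsIdempotentIntegral.mul_eq_self_of_mul_eq_counit_smul (hxA : x ∈ A) : Λ * y = y := by
  refine (sub_eq_zero.1 (eq_zero_of_mul_eq_counit_smul hA hΛ hC hΛC hx (y := y - Λ * y)
    ((cocommSubalgebra k H).sub_mem hy ((cocommSubalgebra k H).mul_mem (hΛ.isCocomm hA) hy))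
    ?_ ?_)).symm
  · rw [mul_sub, hxy, ← mul_assoc, (hΛ.2.2 x hxA).1, smul_mul_assoc, smul_sub]
  · rw [mul_sub, ← mul_assoc, hΛ.isIdempotentElem.eq, sub_self]

end PrincipalEigenspace

end

end MackeyPaper

namespace MackeyPaper

noncomputable section

variable (k : Type) [Field k] [CharZero k] [IsAlgClosed k]
variable (H : Type) [Ring H] [HopfAlgebra k H]

section Statements

variable [FiniteDimensional k H] [IsSemisimpleRing H]

/-- Theorem 16: let `C` be a subcoalgebra of `H` with associated
character `d ∈ C(H^*)` and let `⟨d⟩` be the Hopf subalgebra of `H` generated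
by `C`, with idempotent integral `Λ`.  Then the principal eigenspace of the
left-multiplication operator `L_d` on `C(H^*)` (the eigenspace for the
Frobenius–Perron eigenvalue `ε(d)`) coincides with the principal eigenspace
of `L_Λ` (its Frobenius–Perron eigenvalue being `ε(Λ) = 1`), and the latter
equals `Λ·C(H^*)`. -/
theorem statement_4 (C : Submodule k H) (hC : IsSubcoalgebra k H C)
    (d : H) (hd : IsAssocCharacter k H d C)
    (A : Subalgebra k H) (hA : IsHopfSubalgebra k H A) (hCA : C ≤ A.toSubmodule)
    (hAmin : ∀ B : Subalgebra k H, IsHopfSubalgebra k H B → C ≤ B.toSubmodule → A ≤ B)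
    (Λ : H) (hΛ : IsIdempotentIntegral k H A Λ) :
    (∀ x ∈ charRing k H,
      (d * x = Coalgebra.counit (R := k) d • x ↔ Λ * x = x)) ∧
    (∀ x ∈ charRing k H,
      (Λ * x = x ↔ ∃ y ∈ charRing k H, x = Λ * y)) := by
  have hdA : d ∈ A := hCA hd.mem
  have hΛC : Λ ∈ Algebra.adjoin k (C : Set H) :=
    hAmin _ (isHopfSubalgebra_of_isSubcoalgebra (isSubcoalgebra_adjoin hC))
      Algebra.subset_adjoin hΛ.1
  refine ⟨fun x hx => ⟨fun h => ?_, fun h => ?_⟩, fun x hx => ⟨fun h => ⟨x, hx, h.symm⟩, ?_⟩⟩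
  · exact hΛ.mul_eq_self_of_mul_eq_counit_smul hA hC hΛC hd (mem_charRing_iff.1 hx) h hdA
  · rw [← h, ← mul_assoc, (hΛ.2.2 d hdA).1, smul_mul_assoc]
  · rintro ⟨y, -, rfl⟩
    rw [← mul_assoc, hΛ.isIdempotentElem.eq]

end Statements

end

end MackeyPaper
end
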